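/- arXiv:2108.05687 — 3 statements merged into one kernel-verified Lean document; each statement's English description precedes it below -/
import Mathlib

section
/- For every graph H and constants λ, β > 0 there exist γ, ε, C > 0 such that, for every sufficiently large n and every m ≥ C·n^{2−1/m₂(H)}, the conditional probability Pr[Z_H ≤ γ·n^{v(H)}·(m/n²)^{e(H)} | G_{n,m}^H is (ε,λ)-lower-regular] is at most β^m, where Z_H denotes the number of canonical copies of H in G_{n,m}^H. -/
open Finset

variable {k n : ℕ}

/-- Number of edges of `G ⊆ K_n^H` between class `i` restricted to `A` and class `j`
restricted to `B`, counted as ordered pairs `(u, v) ∈ V_i × V_j`. -/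
noncomputable def pairCountIn (G : SimpleGraph (Fin k × Fin n)) (i j : Fin k)
    (A B : Finset (Fin n)) : ℕ :=
  Nat.card {p : Fin n × Fin n // p.1 ∈ A ∧ p.2 ∈ B ∧ G.Adj (i, p.1) (j, p.2)}

/-- Number of edges of `G ⊆ K_n^H` between classes `V_i` and `V_j`. -/
noncomputable def pairCount (G : SimpleGraph (Fin k × Fin n)) (i j : Fin k) : ℕ :=
  Nat.card {p : Fin n × Fin n // G.Adj (i, p.1) (j, p.2)}

/-- The density `d(A, B)` of the bipartite graph `G(V_i, V_j)` between `A ⊆ V_i`, `B ⊆ V_j`. -/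
noncomputable def density (G : SimpleGraph (Fin k × Fin n)) (i j : Fin k)
    (A B : Finset (Fin n)) : ℝ :=
  (pairCountIn G i j A B : ℝ) / ((A.card : ℝ) * (B.card : ℝ))

/-- The pair `(V_i, V_j)` of `G` is `(ε, λ)`-lower-regular. -/
def LowerRegularPair (ε lam : ℝ) (G : SimpleGraph (Fin k × Fin n)) (i j : Fin k) : Prop :=
  ∀ A B : Finset (Fin n), ε * n ≤ (A.card : ℝ) → ε * n ≤ (B.card : ℝ) →
    lam * density G i j Finset.univ Finset.univ ≤ density G i j A B

/-- The pair `(V_i, V_j)` of `G` is `(ε, δ)`-lower-regular for a function `δ`. -/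
def FnLowerRegularPair (ε : ℝ) (δ : ℝ → ℝ) (G : SimpleGraph (Fin k × Fin n)) (i j : Fin k) :
    Prop :=
  ∀ A B : Finset (Fin n), ε * n ≤ (A.card : ℝ) → ε * n ≤ (B.card : ℝ) →
    δ (min (A.card : ℝ) (B.card : ℝ) / n) * density G i j Finset.univ Finset.univ
      < density G i j A B

/-- `G` is a subgraph of `K_n^H`: edges only between classes `V_i, V_j` with `ij ∈ E(H)`. -/
def IsSubgraphKnH (H : SimpleGraph (Fin k)) (G : SimpleGraph (Fin k × Fin n)) : Prop :=
  ∀ ⦃x y : Fin k × Fin n⦄, G.Adj x y → H.Adj x.1 y.1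

/-- `G ∈ 𝒢(H, n, m)`: a subgraph of `K_n^H` with exactly `m` edges between `V_i` and `V_j`
for each edge `ij` of `H`. -/
def MemFamily (H : SimpleGraph (Fin k)) (m : ℕ) (G : SimpleGraph (Fin k × Fin n)) : Prop :=
  IsSubgraphKnH H G ∧ ∀ i j, H.Adj i j → pairCount G i j = m

/-- `f` selects a canonical copy of `H` in `G ⊆ K_n^H` (vertex `i` goes to `V_i`). -/
def IsCanonicalCopy (H : SimpleGraph (Fin k)) (G : SimpleGraph (Fin k × Fin n))
    (f : Fin k → Fin n) : Prop :=
  ∀ ⦃i j⦄, H.Adj i j → G.Adj (i, f i) (j, f j)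

/-- The number of canonical copies of `H` in `G ⊆ K_n^H`. -/
noncomputable def copyCount (H : SimpleGraph (Fin k)) (G : SimpleGraph (Fin k × Fin n)) : ℕ :=
  Nat.card {f : Fin k → Fin n // IsCanonicalCopy H G f}

/-- `deg_H(e, G)`: the number of canonical copies of `H` in `G` containing both coordinates
of the pair `e ∈ V_a × V_b`. -/
noncomputable def degPair (H : SimpleGraph (Fin k)) (G : SimpleGraph (Fin k × Fin n))
    (a b : Fin k) (e : Fin n × Fin n) : ℕ :=
  Nat.card {f : Fin k → Fin n // IsCanonicalCopy H G f ∧ f a = e.1 ∧ f b = e.2}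

/-- The number of edges of a graph. -/
noncomputable def edgeCount (H : SimpleGraph (Fin k)) : ℕ := Nat.card H.edgeSet

/-- The 2-density `m₂(H) = max{(e(H')-1)/(v(H')-2) : H' ⊆ H, v(H') > 2}`, where a subgraph
is given by a vertex set `V'` and an edge subgraph `H'` with all edges inside `V'`. -/
noncomputable def twoDensity (H : SimpleGraph (Fin k)) : ℝ :=
  sSup {q : ℝ | ∃ (V' : Finset (Fin k)) (H' : SimpleGraph (Fin k)),
    H' ≤ H ∧ (∀ ⦃x y⦄, H'.Adj x y → x ∈ V' ∧ y ∈ V') ∧ 2 < V'.card ∧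
    q = ((edgeCount H' : ℝ) - 1) / ((V'.card : ℝ) - 2)}


namespace KLR

section container
variable {ι : Type} [DecidableEq ι]

/-- projection to the edge `j` -/
def pr (a b : ι → Fin k) (j : ι) (φ : Fin k → Fin n) : Fin n × Fin n := (φ (a j), φ (b j))

def deg (F : Finset (Fin k → Fin n)) (W : Finset (Fin k)) (φ₀ : Fin k → Fin n) : ℕ :=
  #{φ ∈ F | ∀ v ∈ W, φ v = φ₀ v}

def eW (a b : ι → Fin k) (L : Finset ι) (W : Finset (Fin k)) : ℕ := #{j ∈ L | a j ∈ W ∧ b j ∈ W}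

def Good (a b : ι → Fin k) (q : ℝ) (F : Finset (Fin k → Fin n)) (L : Finset ι) (B : ℝ) : Prop :=
  ∀ W, 1 ≤ eW a b L W → ∀ φ₀, (deg F W φ₀ : ℝ) * q ≤ B * q ^ (eW a b L W)

lemma sat_bound (F X G : Finset (Fin k → Fin n)) (W : Finset (Fin k)) (c : ℝ) (hc : 0 ≤ c)
    (hG : G ⊆ F) (h : ∀ φ ∈ G, c * deg F W φ ≤ deg X W φ) : c * #G ≤ #X := by
  classical
  let ρ : (Fin k → Fin n) → (W → Fin n) := fun φ v => φ v
  have hρ : ∀ φ ψ : Fin k → Fin n, ρ φ = ρ ψ ↔ ∀ v ∈ W, φ v = ψ v := by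
    intro φ ψ
    constructor
    · intro h v hv
      exact congrFun h ⟨v, hv⟩
    · intro h
      funext v
      exact h v v.2
  have h1 : #G = ∑ ψ ∈ G.image ρ, #{φ ∈ G | ρ φ = ψ} :=
    card_eq_sum_card_image ρ G
  have h2 : ∑ ψ ∈ G.image ρ, #{φ ∈ X | ρ φ = ψ} ≤ #X := by
    rw [← Finset.card_biUnion]
    · apply Finset.card_le_card
      intro φ hφ
      simp only [Finset.mem_biUnion, Finset.mem_filter] at hφ
      obtain ⟨_, _, h, _⟩ := hφ
      exact h
    · intro x _ y _ hxy
      rw [Function.onFun, Finset.disjoint_left]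
      intro φ h1 h2
      simp only [Finset.mem_filter] at h1 h2
      exact hxy (h1.2.symm.trans h2.2)
  rw [h1]
  push_cast
  rw [Finset.mul_sum]
  calc ∑ ψ ∈ G.image ρ, c * (#{φ ∈ G | ρ φ = ψ} : ℝ)
      ≤ ∑ ψ ∈ G.image ρ, (#{φ ∈ X | ρ φ = ψ} : ℝ) := by
        apply Finset.sum_le_sum
        intro ψ hψ
        obtain ⟨φ, hφ, rfl⟩ := Finset.mem_image.mp hψ
        refine le_trans ?_ (le_trans (h φ hφ) ?_)
        · apply mul_le_mul_of_nonneg_left _ hc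
          unfold deg
          norm_cast
          apply Finset.card_le_card
          intro χ hχ
          simp only [Finset.mem_filter] at hχ ⊢
          exact ⟨hG hχ.1, (hρ _ _).1 hχ.2⟩
        · unfold deg
          norm_cast
          apply Finset.card_le_card
          intro χ hχ
          simp only [Finset.mem_filter] at hχ ⊢
          exact ⟨hχ.1, (hρ _ _).2 hχ.2⟩
    _ ≤ #X := by exact_mod_cast h2

lemma eW_erase_le (a b : ι → Fin k) (L : Finset ι) (j : ι) (W : Finset (Fin k)) :
    eW a b (L.erase j) W ≤ eW a b L W := by
  unfold eW
  apply Finset.card_le_card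
  intro i hi
  simp only [Finset.mem_filter, Finset.mem_erase] at hi ⊢
  exact ⟨hi.1.2, hi.2⟩

lemma eW_insert (a b : ι → Fin k) (L : Finset ι) (j : ι) (hj : j ∈ L) (W : Finset (Fin k)) :
    eW a b (L.erase j) W + 1 ≤ eW a b L (W ∪ {a j, b j}) := by
  unfold eW
  have : #(insert j {i ∈ L.erase j | a i ∈ W ∧ b i ∈ W}) = #{i ∈ L.erase j | a i ∈ W ∧ b i ∈ W} + 1 := by
    apply Finset.card_insert_of_notMem
    simp
  rw [← this]
  apply Finset.card_le_card
  intro i hi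
  simp only [Finset.mem_insert, Finset.mem_filter, Finset.mem_erase, Finset.mem_union,
    Finset.mem_singleton] at hi ⊢
  rcases hi with rfl | hi
  · simp [hj]
  · exact ⟨hi.1.2, Or.inl hi.2.1, Or.inl hi.2.2⟩

lemma fiber_le (a b : ι → Fin k) (q B : ℝ) (hq : 0 < q) (F : Finset (Fin k → Fin n)) (L : Finset ι)
    (hF : Good a b q F L B) (hB : 0 < B) (hq1 : q ≤ 1) (j : ι) (hj : j ∈ L) (x : Fin n × Fin n) :
    (#{φ ∈ F | pr a b j φ = x} : ℝ) ≤ B := by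
  classical
  by_cases hne : ({φ ∈ F | pr a b j φ = x} : Finset _).Nonempty
  · obtain ⟨φ₀, h0⟩ := hne
    simp only [Finset.mem_filter] at h0
    have h1 : 1 ≤ eW a b L (∅ ∪ {a j, b j}) := le_trans (by simp) (eW_insert a b L j hj ∅)
    have h2 := hF _ h1 φ₀
    have h3 : B * q ^ eW a b L (∅ ∪ {a j, b j}) ≤ B * q := by
      apply mul_le_mul_of_nonneg_left _ hB.le
      calc q ^ eW a b L (∅ ∪ {a j, b j}) ≤ q ^ 1 := pow_le_pow_of_le_one hq.le hq1 h1
        _ = q := pow_one q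
    have h4 : (deg F (∅ ∪ {a j, b j}) φ₀ : ℝ) ≤ B := by
      by_contra hcon
      push Not at hcon
      nlinarith
    refine le_trans ?_ h4
    unfold deg
    norm_cast
    apply Finset.card_le_card
    intro φ hφ
    simp only [Finset.mem_filter] at hφ ⊢
    refine ⟨hφ.1, ?_⟩
    have := hφ.2.trans h0.2.symm
    simp only [pr, Prod.mk.injEq] at this
    intro v hv
    simp only [Finset.empty_union, Finset.mem_insert, Finset.mem_singleton] at hv
    rcases hv with rfl | rfl
    · exact this.1
    · exact this.2
  · rw [Finset.not_nonempty_iff_eq_empty] at hne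
    rw [hne]
    simpa using hB.le

lemma step (a b : ι → Fin k) (q B : ℝ) (hq : 0 < q) (hq1 : q ≤ 1) (hB : 0 < B) (hn : 0 < n)
    (F X : Finset (Fin k → Fin n)) (L : Finset ι) (j : ι) (hj : j ∈ L)
    (hF : Good a b q F L B) (S : Finset (Fin n × Fin n)) (hXF : X ⊆ F)
    (hXS : ∀ φ ∈ X, pr a b j φ ∈ S)
    (hX : Good a b q X (L.erase j) ((2 : ℝ) ^ (k + 3) * q * B))
    (hXc : (#X : ℝ) ≤ q * #F) (hS : #S * B ≤ #F / 4) :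
    ∃ D : Finset (Fin n × Fin n), D ⊆ F.image (pr a b j) ∧
      (∀ x ∈ D, x ∉ S ∧ ∃ X' ⊆ F, (∀ φ ∈ X', pr a b j φ ∈ insert x S) ∧
        Good a b q X' (L.erase j) ((2 : ℝ) ^ (k + 3) * q * B) ∧
        (#X : ℝ) + #F / (8 * (n : ℝ) ^ 2) ≤ #X') ∧ (#F : ℝ) ≤ 4 * B * #D := by
  classical
  set K : ℝ := (2 : ℝ) ^ (k + 3) with hK
  have hKpos : 0 < K := by positivity
  have hK8 : 8 ≤ K := by
    rw [hK, pow_add]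
    have : (1 : ℝ) ≤ 2 ^ k := one_le_pow₀ (by norm_num)
    nlinarith
  -- saturated elements
  let Fs : Finset (Fin k) → Finset (Fin k → Fin n) := fun W =>
    {φ ∈ F | 1 ≤ eW a b (L.erase j) W ∧
      K * q * B * q ^ (eW a b (L.erase j) W) < 2 * (deg X W φ * q)}
  have hFs : ∀ W, (#(Fs W) : ℝ) * (K / 2) ≤ #F := by
    intro W
    have h1 : (K / 2 * q) * #(Fs W) ≤ #X := by
      apply sat_bound F X (Fs W) W _ (by positivity) (Finset.filter_subset _ _)
      intro φ hφ
      simp only [Fs, Finset.mem_filter] at hφ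
      obtain ⟨hφF, hW, hlt⟩ := hφ
      have h2 := hF W (hW.trans (eW_erase_le a b L j W)) φ
      have h3 : q ^ eW a b L W ≤ q ^ (eW a b (L.erase j) W) :=
        pow_le_pow_of_le_one hq.le hq1 (eW_erase_le a b L j W)
      have h4 : (deg F W φ : ℝ) * q ≤ B * q ^ (eW a b (L.erase j) W) :=
        h2.trans (mul_le_mul_of_nonneg_left h3 hB.le)
      have h5 : K * q * (deg F W φ * q) ≤ 2 * (deg X W φ * q) := by
        refine le_trans ?_ hlt.le
        calc K * q * (deg F W φ * q) ≤ K * q * (B * q ^ (eW a b (L.erase j) W)) := by gcongr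
          _ = _ := by ring
      have : (K / 2 * q * deg F W φ) * q ≤ deg X W φ * q := by linarith
      exact le_of_mul_le_mul_right this hq
    have : (#(Fs W) * (K / 2)) * q ≤ #F * q := by linarith
    exact le_of_mul_le_mul_right this hq
  let FS : Finset (Fin k → Fin n) := {φ ∈ F | pr a b j φ ∈ S}
  have hFS : (#FS : ℝ) ≤ #F / 4 := by
    refine le_trans ?_ hS
    have : #FS = ∑ x ∈ S, #{φ ∈ FS | pr a b j φ = x} := by
      apply Finset.card_eq_sum_card_fiberwise
      intro φ hφ
      simp only [FS, Finset.coe_filter, Set.mem_ofPred_eq] at hφ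
      exact hφ.2
    rw [this]
    push_cast
    calc ∑ x ∈ S, (#{φ ∈ FS | pr a b j φ = x} : ℝ) ≤ ∑ x ∈ S, B := by
          apply Finset.sum_le_sum
          intro x _
          refine le_trans ?_ (fiber_le a b q B hq F L hF hB hq1 j hj x)
          norm_cast
          apply Finset.card_le_card
          intro φ hφ
          simp only [FS, Finset.mem_filter] at hφ ⊢
          exact ⟨hφ.1.1, hφ.2⟩
      _ = #S * B := by simp
  let Fb : Finset (Fin k → Fin n) := (Finset.univ : Finset (Finset (Fin k))).biUnion Fs
  have hFb : (#Fb : ℝ) ≤ #F / 4 := by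
    have h1 : (#Fb : ℝ) ≤ ∑ W : Finset (Fin k), (#(Fs W) : ℝ) := by
      exact_mod_cast Finset.card_biUnion_le
    have h2 : ∑ W : Finset (Fin k), (#(Fs W) : ℝ) ≤ ∑ W : Finset (Fin k), #F / (K / 2) := by
      apply Finset.sum_le_sum
      intro W _
      rw [le_div_iff₀ (by positivity)]
      exact hFs W
    refine h1.trans (h2.trans ?_)
    simp only [Finset.sum_const, nsmul_eq_mul, Finset.card_univ, Fintype.card_finset, Fintype.card_fin]
    push_cast
    rw [hK, pow_add]
    have : (0 : ℝ) < 2 ^ k := by positivity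
    field_simp
    norm_num
  let F' : Finset (Fin k → Fin n) := (F \ FS) \ Fb
  have hF' : (#F : ℝ) / 2 ≤ #F' := by
    have h1 : #(F \ FS) ≤ #Fb + #F' := by
      have := Finset.le_card_sdiff Fb (F \ FS)
      simp only [F']; omega
    have h2 : #F ≤ #FS + #(F \ FS) := by
      have := Finset.le_card_sdiff FS F
      omega
    have h3 : (#F : ℝ) ≤ #FS + (#Fb + #F') := by exact_mod_cast h2.trans (by omega)
    linarith
  let Fx : Fin n × Fin n → Finset (Fin k → Fin n) := fun x => {φ ∈ F' | pr a b j φ = x}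
  have hF'F : F' ⊆ F := (Finset.sdiff_subset).trans Finset.sdiff_subset
  have hFxB : ∀ x, (#(Fx x) : ℝ) ≤ B := by
    intro x
    refine le_trans ?_ (fiber_le a b q B hq F L hF hB hq1 j hj x)
    norm_cast
    apply Finset.card_le_card
    intro φ hφ
    simp only [Fx, Finset.mem_filter] at hφ ⊢
    exact ⟨hF'F hφ.1, hφ.2⟩
  have hFpos : (0:ℝ) ≤ #F := by positivity
  by_cases hF0 : #F = 0
  · refine ⟨∅, by simp, by simp, by simp [hF0]⟩
  have hFpos' : (0:ℝ) < #F := by exact_mod_cast Nat.pos_of_ne_zero hF0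
  have hn2 : (0 : ℝ) < (n : ℝ) ^ 2 := by positivity
  let D : Finset (Fin n × Fin n) := {x | (#F : ℝ) / (8 * (n : ℝ) ^ 2) ≤ #(Fx x)}
  refine ⟨D, ?_, ?_, ?_⟩
  · intro x hx
    simp only [D, Finset.mem_filter, Finset.mem_univ, true_and] at hx
    have h1 : (0 : ℝ) < #(Fx x) := lt_of_lt_of_le (by positivity) hx
    have h2 : 0 < #(Fx x) := by exact_mod_cast h1
    obtain ⟨φ, hφ⟩ := Finset.card_pos.1 h2
    simp only [Fx, Finset.mem_filter] at hφ
    exact Finset.mem_image.2 ⟨φ, hF'F hφ.1, hφ.2⟩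
  · intro x hx
    simp only [D, Finset.mem_filter, Finset.mem_univ, true_and] at hx
    have h1 : (0 : ℝ) < #(Fx x) := lt_of_lt_of_le (by positivity) hx
    have h2 : 0 < #(Fx x) := by exact_mod_cast h1
    have hxS : x ∉ S := by
      obtain ⟨φ, hφ⟩ := Finset.card_pos.1 h2
      simp only [Fx, F', FS, Finset.mem_filter, Finset.mem_sdiff] at hφ
      intro hxS
      apply hφ.1.1.2
      exact ⟨hφ.1.1.1, hφ.2 ▸ hxS⟩
    refine ⟨hxS, X ∪ Fx x, ?_, ?_, ?_, ?_⟩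
    · apply Finset.union_subset hXF
      exact (Finset.filter_subset _ _).trans hF'F
    · intro φ hφ
      rcases Finset.mem_union.1 hφ with h | h
      · exact Finset.mem_insert_of_mem (hXS φ h)
      · simp only [Fx, Finset.mem_filter] at h
        rw [h.2]
        exact Finset.mem_insert_self _ _
    · intro W hW φ₀
      have hdeg : deg (X ∪ Fx x) W φ₀ ≤ deg X W φ₀ + deg (Fx x) W φ₀ := by
        unfold deg
        rw [Finset.filter_union]
        exact Finset.card_union_le _ _
      have hdeg' : (deg (X ∪ Fx x) W φ₀ : ℝ) ≤ deg X W φ₀ + deg (Fx x) W φ₀ := by exact_mod_cast hdeg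
      by_cases hne : ({φ ∈ Fx x | ∀ v ∈ W, φ v = φ₀ v} : Finset _).Nonempty
      · obtain ⟨φ, hφ⟩ := hne
        simp only [Finset.mem_filter] at hφ
        obtain ⟨hφx, hφW⟩ := hφ
        have hcl : ∀ Y : Finset (Fin k → Fin n), deg Y W φ = deg Y W φ₀ := by
          intro Y
          unfold deg
          congr 1
          apply Finset.filter_congr
          intro χ _
          constructor
          · intro h v hv
            rw [h v hv, hφW v hv]
          · intro h v hv
            rw [h v hv, hφW v hv]
        have hφx' := hφx
        simp only [Fx, F', Finset.mem_filter, Finset.mem_sdiff] at hφx'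
        have hns : φ ∉ Fs W := by
          intro hc
          exact hφx'.1.2 (Finset.mem_biUnion.2 ⟨W, Finset.mem_univ _, hc⟩)
        have hns2 : 2 * (deg X W φ * q) ≤ K * q * B * q ^ (eW a b (L.erase j) W) := by
          by_contra hcon
          push Not at hcon
          apply hns
          simp only [Fs, Finset.mem_filter]
          exact ⟨hφx'.1.1.1, hW, hcon⟩
        have hle : deg (Fx x) W φ ≤ deg F (W ∪ {a j, b j}) φ := by
          unfold deg
          apply Finset.card_le_card
          intro χ hχ
          simp only [Finset.mem_filter] at hχ ⊢
          have h3 : χ ∈ F' ∧ pr a b j χ = x := by simpa [Fx] using hχ.1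
          refine ⟨hF'F h3.1, ?_⟩
          have h4 := h3.2.trans hφx'.2.symm
          simp only [pr, Prod.mk.injEq] at h4
          intro v hv
          simp only [Finset.mem_union, Finset.mem_insert, Finset.mem_singleton] at hv
          rcases hv with hv | rfl | rfl
          · exact hχ.2 v hv
          · exact h4.1
          · exact h4.2
        have hle' : (deg (Fx x) W φ : ℝ) ≤ deg F (W ∪ {a j, b j}) φ := by exact_mod_cast hle
        have h5 := hF (W ∪ {a j, b j}) (le_trans (by omega) (eW_insert a b L j hj W)) φ
        have h6 : q ^ eW a b L (W ∪ {a j, b j}) ≤ q ^ (eW a b (L.erase j) W + 1) :=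
          pow_le_pow_of_le_one hq.le hq1 (eW_insert a b L j hj W)
        have h7 : (deg (Fx x) W φ : ℝ) * q ≤ B * q ^ (eW a b (L.erase j) W + 1) :=
          (mul_le_mul_of_nonneg_right hle' hq.le).trans
            (h5.trans (mul_le_mul_of_nonneg_left h6 hB.le))
        rw [hcl] at hns2 h7
        have h8 : B * q ^ (eW a b (L.erase j) W + 1) = q * B * q ^ (eW a b (L.erase j) W) := by ring
        have h9 : 0 ≤ q * B * q ^ (eW a b (L.erase j) W) := by positivity
        have h10 : 8 * (q * B * q ^ (eW a b (L.erase j) W)) ≤ K * (q * B * q ^ (eW a b (L.erase j) W)) :=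
          mul_le_mul_of_nonneg_right hK8 h9
        have h11 := mul_le_mul_of_nonneg_right hdeg' hq.le
        have h12 : K * q * B * q ^ (eW a b (L.erase j) W) = K * (q * B * q ^ (eW a b (L.erase j) W)) := by ring
        rw [h12] at hns2 ⊢
        linarith
      · rw [Finset.not_nonempty_iff_eq_empty] at hne
        have h0 : deg (Fx x) W φ₀ = 0 := by
          unfold deg; rw [hne]; simp
        rw [h0] at hdeg'
        have := hX W hW φ₀
        refine le_trans ?_ this
        apply mul_le_mul_of_nonneg_right _ hq.le
        simpa using hdeg'
    · have hdisj : Disjoint X (Fx x) := by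
        rw [Finset.disjoint_left]
        intro φ hφ hφ'
        simp only [Fx, Finset.mem_filter] at hφ'
        exact hxS (hφ'.2 ▸ hXS φ hφ)
      rw [Finset.card_union_of_disjoint hdisj]
      push_cast
      linarith
  · have h1 : #F' = ∑ x : Fin n × Fin n, #(Fx x) := by
      apply Finset.card_eq_sum_card_fiberwise
      intro φ _
      simp
    have h2 : (#F' : ℝ) ≤ ∑ x : Fin n × Fin n, ((#F : ℝ) / (8 * (n : ℝ) ^ 2) + if x ∈ D then B else 0) := by
      rw [h1]
      push_cast
      apply Finset.sum_le_sum
      intro x _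
      split_ifs with h
      · have := hFxB x
        have : (0:ℝ) ≤ (#F : ℝ) / (8 * (n : ℝ) ^ 2) := by positivity
        linarith [hFxB x]
      · simp only [D, Finset.mem_filter, Finset.mem_univ, true_and, not_le] at h
        linarith
    rw [Finset.sum_add_distrib] at h2
    simp only [Finset.sum_const, Finset.card_univ, Fintype.card_prod, Fintype.card_fin, nsmul_eq_mul,
      Finset.sum_ite_mem, Finset.univ_inter] at h2
    have h3 : ((n * n : ℕ) : ℝ) * ((#F : ℝ) / (8 * (n : ℝ) ^ 2)) = #F / 8 := by
      push_cast
      field_simp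
    rw [h3] at h2
    nlinarith

end container
end KLR

namespace KLR
section container2
variable {ι : Type} [DecidableEq ι]

lemma good_empty (a b : ι → Fin k) (q B : ℝ) (hq : 0 < q) (hB : 0 < B) (L : Finset ι) :
    Good (n := n) a b q ∅ L B := by
  intro W _ φ₀
  simp only [deg, Finset.filter_empty, Finset.card_empty, Nat.cast_zero, zero_mul]
  positivity

lemma runL (a b : ι → Fin k) (q α : ℝ) (s : ℕ) (hn : 0 < n) (hs : (s : ℝ) = q * (n : ℝ) ^ 2)
    (hq : 0 < q) (hq1 : q ≤ 1) (hqα : q ≤ α) :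
    ∀ (r : ℕ) (L : Finset ι), #L = r → ∀ (F : Finset (Fin k → Fin n)) (B : ℝ), 0 < B →
      Good a b q F L B → 4 * α * (8 * (2 : ℝ) ^ (k + 3)) ^ r * (n : ℝ) ^ 2 * B ≤ #F →
      ∃ R : (ι → Finset (Fin n × Fin n)) → ι → Finset (Fin n × Fin n),
        ∀ E : ι → Finset (Fin n × Fin n),
          ((q / 8) ^ r * #F ≤ #{φ ∈ F | ∀ j ∈ L, pr a b j φ ∈ E j}) ∨
          ∀ S₀ : ι → Finset (Fin n × Fin n), (∀ j, S₀ j ⊆ E j ∧ #(S₀ j) ≤ s) →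
            ∃ S : ι → Finset (Fin n × Fin n), (∀ j ∉ L, S j = S₀ j) ∧
              (∀ j, S j ⊆ E j ∧ #(S j) ≤ s) ∧ (∀ i, E i ∩ R S i ⊆ S i) ∧
              ∃ j, R S j ⊆ F.image (pr a b j) ∧ α * (n : ℝ) ^ 2 ≤ #(R S j) := by
  classical
  have hα : 0 < α := hq.trans_le hqα
  have hn2 : (0 : ℝ) < (n : ℝ) ^ 2 := by positivity
  intro r
  induction r with
  | zero =>
    intro L hL F B hB hG hF
    refine ⟨fun _ _ => ∅, fun E => Or.inl ?_⟩
    rw [Finset.card_eq_zero] at hL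
    subst hL
    simp
  | succ r ih =>
    intro L hL F B hB hG hF
    obtain ⟨j, hj⟩ : L.Nonempty := by
      rw [← Finset.card_pos]; omega
    set K : ℝ := (2 : ℝ) ^ (k + 3) with hK
    have hKpos : 0 < K := by positivity
    have hK8 : 8 ≤ K := by
      rw [hK, pow_add]
      have : (1 : ℝ) ≤ 2 ^ k := one_le_pow₀ (by norm_num)
      nlinarith
    -- maximal X
    have hXex : ∀ T : Finset (Fin n × Fin n), ∃ X : Finset (Fin k → Fin n),
        (X ⊆ F ∧ (∀ φ ∈ X, pr a b j φ ∈ T) ∧ Good a b q X (L.erase j) (K * q * B)) ∧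
        ∀ X', (X' ⊆ F ∧ (∀ φ ∈ X', pr a b j φ ∈ T) ∧ Good a b q X' (L.erase j) (K * q * B)) →
          #X' ≤ #X := by
      intro T
      let 𝒳 : Finset (Finset (Fin k → Fin n)) := {X | X ⊆ F ∧ (∀ φ ∈ X, pr a b j φ ∈ T) ∧
        Good a b q X (L.erase j) (K * q * B)}
      have hne : 𝒳.Nonempty := by
        refine ⟨∅, ?_⟩
        simp only [𝒳, Finset.mem_filter, Finset.mem_univ, true_and]
        exact ⟨by simp, by simp, good_empty a b q _ hq (by positivity) _⟩
      obtain ⟨X, hX, hmax⟩ := Finset.exists_max_image 𝒳 Finset.card hne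
      refine ⟨X, ?_, ?_⟩
      · simpa [𝒳] using hX
      · intro X' hX'
        apply hmax
        simpa [𝒳] using hX'
    choose X hX hXmax using hXex
    have hFB : 4 * α * (n : ℝ) ^ 2 * B ≤ #F := by
      refine le_trans ?_ hF
      have h1 : (1 : ℝ) ≤ (8 * K) ^ (r + 1) := one_le_pow₀ (by nlinarith)
      have h2 : 0 ≤ 4 * α * (n : ℝ) ^ 2 * B := by positivity
      nlinarith [mul_le_mul_of_nonneg_right h1 h2]
    have hDex : ∀ T : Finset (Fin n × Fin n), ∃ D : Finset (Fin n × Fin n),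
        (#T ≤ s → (#(X T) : ℝ) ≤ q * #F →
        D ⊆ F.image (pr a b j) ∧
        (∀ x ∈ D, x ∉ T ∧ ∃ X' ⊆ F, (∀ φ ∈ X', pr a b j φ ∈ insert x T) ∧
          Good a b q X' (L.erase j) (K * q * B) ∧
          (#(X T) : ℝ) + #F / (8 * (n : ℝ) ^ 2) ≤ #X') ∧ (#F : ℝ) ≤ 4 * B * #D) := by
      intro T
      by_cases h : #T ≤ s ∧ (#(X T) : ℝ) ≤ q * #F
      · obtain ⟨D, hD⟩ := step a b q B hq hq1 hB hn F (X T) L j hj hG T (hX T).1 (hX T).2.1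
          (hX T).2.2 h.2 (by
            have : (#T : ℝ) ≤ s := by exact_mod_cast h.1
            have h2 : (#T : ℝ) * B ≤ (q * (n : ℝ) ^ 2) * B := by
              rw [← hs]; exact mul_le_mul_of_nonneg_right this hB.le
            have h3 : (q * (n : ℝ) ^ 2) * B ≤ α * (n : ℝ) ^ 2 * B := by gcongr
            linarith)
        exact ⟨D, fun _ _ => hD⟩
      · exact ⟨∅, fun h1 h2 => absurd ⟨h1, h2⟩ h⟩
    choose D hD using hDex
    have hLe : #(L.erase j) = r := by rw [Finset.card_erase_of_mem hj]; omega
    have hRex : ∀ T : Finset (Fin n × Fin n),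
        ∃ R : (ι → Finset (Fin n × Fin n)) → ι → Finset (Fin n × Fin n),
        (q / 8 * #F ≤ #(X T) → ∀ E : ι → Finset (Fin n × Fin n),
          ((q / 8) ^ r * #(X T) ≤ #{φ ∈ X T | ∀ j' ∈ L.erase j, pr a b j' φ ∈ E j'}) ∨
          ∀ S₀ : ι → Finset (Fin n × Fin n), (∀ j, S₀ j ⊆ E j ∧ #(S₀ j) ≤ s) →
            ∃ S : ι → Finset (Fin n × Fin n), (∀ j' ∉ L.erase j, S j' = S₀ j') ∧
              (∀ j, S j ⊆ E j ∧ #(S j) ≤ s) ∧ (∀ i, E i ∩ R S i ⊆ S i) ∧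
              ∃ j', R S j' ⊆ (X T).image (pr a b j') ∧ α * (n : ℝ) ^ 2 ≤ #(R S j')) := by
      intro T
      by_cases h : q / 8 * #F ≤ #(X T)
      · obtain ⟨R, hR⟩ := ih (L.erase j) hLe (X T) (K * q * B) (by positivity) (hX T).2.2 (by
          refine le_trans ?_ h
          have h1 := mul_le_mul_of_nonneg_left hF (show 0 ≤ q / 8 by positivity)
          refine le_trans (le_of_eq ?_) h1
          rw [pow_succ]
          ring)
        exact ⟨R, fun _ => hR⟩
      · exact ⟨fun _ _ => ∅, fun h' => absurd h' h⟩
    choose R' hR' using hRex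
    refine ⟨fun S => if q / 8 * #F ≤ #(X (S j)) then R' (S j) S
      else Function.update (fun _ => ∅) j (D (S j)), fun E => ?_⟩
    -- choose the maximal T
    let 𝒯 : Finset (Finset (Fin n × Fin n)) :=
      {T | T ⊆ E j ∧ #T ≤ s ∧ (#T : ℝ) * (#F / (8 * (n : ℝ) ^ 2)) ≤ #(X T)}
    have hne : 𝒯.Nonempty := by
      refine ⟨∅, ?_⟩
      simp [𝒯]
    obtain ⟨T, hT, hTmax⟩ := Finset.exists_max_image 𝒯 Finset.card hne
    have hT' : T ⊆ E j ∧ #T ≤ s ∧ (#T : ℝ) * (#F / (8 * (n : ℝ) ^ 2)) ≤ #(X T) := by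
      simpa [𝒯] using hT
    obtain ⟨hTE, hTs, hTX⟩ := hT'
    by_cases hbig : q / 8 * #F ≤ #(X T)
    · rcases hR' T hbig E with h | h
      · left
        calc (q / 8) ^ (r + 1) * #F = (q / 8) ^ r * (q / 8 * #F) := by ring
          _ ≤ (q / 8) ^ r * #(X T) := by gcongr
          _ ≤ _ := h
          _ ≤ _ := by
            norm_cast
            apply Finset.card_le_card
            intro φ hφ
            simp only [Finset.mem_filter, Finset.mem_erase] at hφ ⊢
            refine ⟨(hX T).1 hφ.1, fun j' hj' => ?_⟩
            by_cases hjj : j' = j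
            · subst hjj
              exact hTE ((hX T).2.1 φ hφ.1)
            · exact hφ.2 j' ⟨hjj, hj'⟩
      · right
        intro S₀ hS₀
        obtain ⟨S, hS1, hS2, hS3, j', hS4, hS5⟩ := h (Function.update S₀ j T) (by
          intro i
          by_cases hi : i = j
          · subst hi; simpa using ⟨hTE, hTs⟩
          · simpa [hi] using hS₀ i)
        have hSj : S j = T := by
          rw [hS1 j (by simp)]; simp
        refine ⟨S, ?_, hS2, ?_, ?_⟩
        · intro i hi
          have hij : i ≠ j := fun h => hi (h ▸ hj)
          rw [hS1 i (by simp [hi])]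
          simp [hij]
        · simp only [hSj, hbig, if_true]
          exact hS3
        · simp only [hSj, hbig, if_true]
          exact ⟨j', hS4.trans (Finset.image_subset_image (hX T).1), hS5⟩
    · right
      intro S₀ hS₀
      have hbig' : (#(X T) : ℝ) < q / 8 * #F := by push Not at hbig; exact hbig
      have hFnn : (0 : ℝ) ≤ #F := by positivity
      have hTlt : #T < s := by
        rcases lt_or_eq_of_le hTs with h | h
        · exact h
        · exfalso
          rw [h, hs] at hTX
          have : q * (n : ℝ) ^ 2 * (#F / (8 * (n : ℝ) ^ 2)) = q / 8 * #F := by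
            field_simp
          linarith
      have hDT := hD T hTs (by nlinarith)
      refine ⟨Function.update S₀ j T, ?_, ?_, ?_, ?_⟩
      · intro i hi
        have hij : i ≠ j := fun h => hi (h ▸ hj)
        simp [hij]
      · intro i
        by_cases hi : i = j
        · subst hi; simpa using ⟨hTE, hTs⟩
        · simpa [hi] using hS₀ i
      · intro i
        simp only [Function.update_self, hbig, if_false]
        by_cases hi : i = j
        · subst hi
          simp only [Function.update_self]
          intro x hx
          exfalso
          rw [Finset.mem_inter] at hx
          obtain ⟨hxT, X', hX'F, hX'S, hX'G, hX'c⟩ := hDT.2.1 x hx.2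
          have h1 : #X' ≤ #(X (insert x T)) := hXmax _ X' ⟨hX'F, hX'S, hX'G⟩
          have h1' : (#X' : ℝ) ≤ #(X (insert x T)) := by exact_mod_cast h1
          have h2 : insert x T ∈ 𝒯 := by
            simp only [𝒯, Finset.mem_filter, Finset.mem_univ, true_and]
            rw [Finset.card_insert_of_notMem hxT]
            refine ⟨Finset.insert_subset hx.1 hTE, hTlt, ?_⟩
            push_cast
            linarith
          have h3 := hTmax _ h2
          rw [Finset.card_insert_of_notMem hxT] at h3
          omega
        · simp [hi]
      · refine ⟨j, ?_, ?_⟩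
        · simp only [Function.update_self, hbig, if_false]
          exact hDT.1
        · simp only [Function.update_self, hbig, if_false]
          have h1 := hDT.2.2
          have h2 : 4 * B * (α * (n : ℝ) ^ 2) ≤ 4 * B * #(D T) := by linarith
          exact le_of_mul_le_mul_left h2 (by positivity)

/-- the set of copies in a container -/
def copies (a b : ι → Fin k) [Fintype ι] (c : ι → Finset (Fin n × Fin n)) : Finset (Fin k → Fin n) :=
  {φ | ∀ j, pr a b j φ ∈ c j}

lemma containers (a b : ι → Fin k) [Fintype ι] (q α ε₀ γ' : ℝ) (s : ℕ) (hn : 0 < n)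
    (hs : (s : ℝ) = q * (n : ℝ) ^ 2)
    (hq : 0 < q) (hq1 : q ≤ 1) (hqα : q ≤ α)
    (hα : 4 * α * (8 * (2 : ℝ) ^ (k + 3)) ^ (Fintype.card ι) = ε₀)
    (hgood : ∀ F, Good (n := n) a b q F Finset.univ ((n : ℝ) ^ k / (n : ℝ) ^ 2))
    (hγ : γ' < (q / 8) ^ (Fintype.card ι) * (ε₀ * (n : ℝ) ^ k)) :
    ∀ (r : ℕ) (c : ι → Finset (Fin n × Fin n)), (∑ j, (#(c j) : ℝ)) ≤ r * (α * (n : ℝ) ^ 2) →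
      ∃ cont : (Fin (r + 1) → ι → Finset (Fin n × Fin n)) → ι → Finset (Fin n × Fin n),
        ∀ E : ι → Finset (Fin n × Fin n), (#(copies a b E) : ℝ) ≤ γ' →
          ∃ 𝒮 : Fin (r + 1) → ι → Finset (Fin n × Fin n),
            (∀ t j, 𝒮 t j ⊆ E j ∧ #(𝒮 t j) ≤ s) ∧
            (∀ j x, x ∈ E j → x ∈ c j → (∃ t, x ∈ 𝒮 t j) ∨ x ∈ cont 𝒮 j) ∧
            (#(copies a b (cont 𝒮)) : ℝ) < ε₀ * (n : ℝ) ^ k := by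
  classical
  have hα' : 0 < α := hq.trans_le hqα
  have hn2 : (0 : ℝ) < (n : ℝ) ^ 2 := by positivity
  have hnk : (0 : ℝ) < (n : ℝ) ^ k := by positivity
  have hε₀ : 0 < ε₀ := by rw [← hα]; positivity
  intro r
  induction r with
  | zero =>
    intro c hc
    refine ⟨fun _ => c, fun E hE => ⟨fun _ _ => ∅, by simp, fun j x _ hx => Or.inr hx, ?_⟩⟩
    simp only [Nat.cast_zero, zero_mul] at hc
    by_contra hcon
    push Not at hcon
    have hpos : (0 : ℝ) < #(copies a b c) := lt_of_lt_of_le (by positivity) hcon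
    have h0 : ∀ j, c j = ∅ := by
      intro j
      have h1 : (#(c j) : ℝ) ≤ ∑ j, (#(c j) : ℝ) :=
        Finset.single_le_sum (f := fun j => (#(c j) : ℝ)) (fun _ _ => by positivity) (Finset.mem_univ j)
      have h2 : (#(c j) : ℝ) ≤ 0 := h1.trans hc
      rw [← Finset.card_eq_zero]
      exact_mod_cast le_antisymm h2 (by positivity)
    obtain ⟨φ, hφ⟩ := Finset.card_pos.1 (show 0 < #(copies a b c) by exact_mod_cast hpos)
    simp only [copies, Finset.mem_filter, Finset.mem_univ, true_and, h0, Finset.notMem_empty] at hφ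
    have hι : IsEmpty ι := ⟨hφ⟩
    have h3 : copies a b E = Finset.univ := by
      ext φ
      simp [copies]
    rw [h3] at hE
    simp only [Finset.card_univ, Fintype.card_pi, Fintype.card_fin, Finset.prod_const] at hE
    rw [Fintype.card_eq_zero] at hγ
    have h4 : ε₀ * (n : ℝ) ^ k ≤ (n : ℝ) ^ k := by
      refine hcon.trans ?_
      have : #(copies a b c) ≤ n ^ k := by
        refine (Finset.card_le_univ _).trans ?_
        simp
      exact_mod_cast this
    push_cast at hE
    simp only [pow_zero, one_mul] at hγ
    linarith
  | succ r ih =>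
    intro c hc
    by_cases hsp : (#(copies a b c) : ℝ) < ε₀ * (n : ℝ) ^ k
    · exact ⟨fun _ => c, fun E hE => ⟨fun _ _ => ∅, by simp, fun j x _ hx => Or.inr hx, hsp⟩⟩
    push Not at hsp
    obtain ⟨R, hR⟩ := runL a b q α s hn hs hq hq1 hqα (Fintype.card ι) Finset.univ rfl
      (copies a b c) ((n : ℝ) ^ k / (n : ℝ) ^ 2) (by positivity) (hgood _) (by
        rw [hα]
        refine le_trans (le_of_eq ?_) hsp
        field_simp)
    have hex : ∀ S : ι → Finset (Fin n × Fin n),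
        ∃ cont : (Fin (r + 1) → ι → Finset (Fin n × Fin n)) → ι → Finset (Fin n × Fin n),
        ((∃ j, R S j ⊆ (copies a b c).image (pr a b j) ∧ α * (n : ℝ) ^ 2 ≤ #(R S j)) →
        ∀ E : ι → Finset (Fin n × Fin n), (#(copies a b E) : ℝ) ≤ γ' →
          ∃ 𝒮 : Fin (r + 1) → ι → Finset (Fin n × Fin n),
            (∀ t j, 𝒮 t j ⊆ E j ∧ #(𝒮 t j) ≤ s) ∧
            (∀ j x, x ∈ E j → x ∈ c j \ R S j → (∃ t, x ∈ 𝒮 t j) ∨ x ∈ cont 𝒮 j) ∧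
            (#(copies a b (cont 𝒮)) : ℝ) < ε₀ * (n : ℝ) ^ k) := by
      intro S
      by_cases h : ∃ j, R S j ⊆ (copies a b c).image (pr a b j) ∧ α * (n : ℝ) ^ 2 ≤ #(R S j)
      · obtain ⟨cont, hcont⟩ := ih (fun j => c j \ R S j) (by
          obtain ⟨j, hj1, hj2⟩ := h
          have hsub : R S j ⊆ c j := by
            refine hj1.trans ?_
            intro x hx
            obtain ⟨φ, hφ, rfl⟩ := Finset.mem_image.1 hx
            simp only [copies, Finset.mem_filter, Finset.mem_univ, true_and] at hφ
            exact hφ j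
          have h1 : ∑ i, (#(c i \ R S i) : ℝ) + #(R S j) ≤ ∑ i, (#(c i) : ℝ) := by
            rw [← Finset.add_sum_erase _ _ (Finset.mem_univ j),
              ← Finset.add_sum_erase _ (fun i => (#(c i) : ℝ)) (Finset.mem_univ j)]
            have h2 : (#(c j \ R S j) : ℝ) + #(R S j) = #(c j) := by
              exact_mod_cast Finset.card_sdiff_add_card_eq_card hsub
            have h3 : ∑ i ∈ Finset.univ.erase j, (#(c i \ R S i) : ℝ) ≤
                ∑ i ∈ Finset.univ.erase j, (#(c i) : ℝ) := by
              apply Finset.sum_le_sum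
              intro i _
              exact_mod_cast Finset.card_le_card Finset.sdiff_subset
            linarith
          push_cast at hc
          linarith)
        exact ⟨cont, fun _ => hcont⟩
      · exact ⟨fun _ _ => ∅, fun h' => absurd h' h⟩
    choose cont hcont using hex
    refine ⟨fun 𝒮 => cont (𝒮 0) (fun t => 𝒮 t.succ), fun E hE => ?_⟩
    rcases hR E with h | h
    · exfalso
      have h2 : (q / 8) ^ (Fintype.card ι) * (ε₀ * (n : ℝ) ^ k) ≤
          (q / 8) ^ (Fintype.card ι) * #(copies a b c) := by gcongr
      refine absurd (h2.trans (h.trans (le_trans ?_ hE))) (not_le.2 hγ)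
      norm_cast
      apply Finset.card_le_card
      intro φ hφ
      simp only [Finset.mem_filter, Finset.mem_univ, true_implies] at hφ
      simpa [copies] using hφ.2
    · obtain ⟨S, -, hS2, hS3, hS4⟩ := h (fun _ => ∅) (by simp)
      obtain ⟨𝒮, h𝒮1, h𝒮2, h𝒮3⟩ := hcont S hS4 E hE
      refine ⟨Fin.cons S 𝒮, ?_, ?_, ?_⟩
      · intro t j
        refine Fin.cases ?_ ?_ t
        · simpa using hS2 j
        · intro t; simpa using h𝒮1 t j
      · intro j x hxE hxc
        by_cases hxR : x ∈ R S j
        · left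
          exact ⟨0, by simpa using hS3 j (Finset.mem_inter.2 ⟨hxE, hxR⟩)⟩
        · rcases h𝒮2 j x hxE (Finset.mem_sdiff.2 ⟨hxc, hxR⟩) with ⟨t, ht⟩ | h
          · left
            exact ⟨t.succ, by simpa using ht⟩
          · right
            simpa using h
      · simpa using h𝒮3

end container2
end KLR

namespace KLR
section dense
variable {ι : Type}

lemma bad_small (n : ℕ) (hn : 0 < n) (Av Ai : Finset (Fin n)) (P : Fin n → Fin n → Prop)
    [∀ u w, Decidable (P u w)]
    (x y θ : ℝ) (hy : 0 < y) (hyx : y ≤ x)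
    (hAi : x * n ≤ #Ai)
    (h : ∀ B : Finset (Fin n), B ⊆ Av → y * n ≤ #B → θ * (#B * #Ai) ≤ #{p ∈ B ×ˢ Ai | P p.1 p.2}) :
    (#{u ∈ Av | (#{w ∈ Ai | P u w} : ℝ) < θ * #Ai} : ℝ) ≤ y * n := by
  by_contra hcon
  push Not at hcon
  set B : Finset (Fin n) := {u ∈ Av | (#{w ∈ Ai | P u w} : ℝ) < θ * #Ai} with hB
  have h1 := h B (Finset.filter_subset _ _) hcon.le
  have h2 : #{p ∈ B ×ˢ Ai | P p.1 p.2} = ∑ u ∈ B, #{w ∈ Ai | P u w} := by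
    rw [Finset.card_filter, Finset.sum_product]
    apply Finset.sum_congr rfl
    intro u _
    rw [Finset.card_filter]
  rw [h2] at h1
  push_cast at h1
  have hBpos : B.Nonempty := by
    rw [← Finset.card_pos]
    have : (0 : ℝ) < #B := lt_of_le_of_lt (by positivity) hcon
    exact_mod_cast this
  have h3 : ∑ u ∈ B, (#{w ∈ Ai | P u w} : ℝ) < ∑ u ∈ B, θ * #Ai := by
    apply Finset.sum_lt_sum_of_nonempty hBpos
    intro u hu
    rw [hB, Finset.mem_filter] at hu
    exact hu.2
  rw [Finset.sum_const, nsmul_eq_mul] at h3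
  nlinarith

open Classical in
lemma dense_count (a b : ι → Fin k) (hab : ∀ j, a j < b j)
    (hinj : ∀ i j, a i = a j → b i = b j → i = j) (δ : ℝ → ℝ)
    (hpos : ∀ x, 0 < x → 0 < δ x) (hle : ∀ x, δ x ≤ 1)
    (hmono : ∀ x y, 0 < x → x ≤ y → δ x ≤ δ y) :
    ∀ (r : ℕ) (x : ℝ), 0 < x → ∃ ε κ : ℝ, 0 < ε ∧ 0 < κ ∧ ∀ (n : ℕ), 0 < n →
      ∀ c : ι → Finset (Fin n × Fin n),
      (∀ j, ∀ A B : Finset (Fin n), ε * n ≤ #A → ε * n ≤ #B →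
        δ (min (#A : ℝ) (#B : ℝ) / n) * (#A * #B) ≤ #(c j ∩ A ×ˢ B)) →
      ∀ V : Finset (Fin k), #V = r → ∀ A : Fin k → Finset (Fin n), (∀ i ∈ V, x * n ≤ #(A i)) →
      ∀ φ₀ : Fin k → Fin n, κ * (n : ℝ) ^ r ≤
        #{φ : Fin k → Fin n | (∀ i, i ∉ V → φ i = φ₀ i) ∧ (∀ i ∈ V, φ i ∈ A i) ∧
          ∀ j, a j ∈ V → b j ∈ V → pr a b j φ ∈ c j} := by
  intro r
  induction r with
  | zero =>
    intro x hx
    refine ⟨1, 1, one_pos, one_pos, ?_⟩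
    intro n hn c hc V hV A hA φ₀
    rw [Finset.card_eq_zero] at hV
    subst hV
    simp only [pow_zero, mul_one]
    have : 1 ≤ #{φ : Fin k → Fin n | (∀ i, i ∉ (∅ : Finset (Fin k)) → φ i = φ₀ i) ∧
        (∀ i ∈ (∅ : Finset (Fin k)), φ i ∈ A i) ∧
          ∀ j, a j ∈ (∅ : Finset (Fin k)) → b j ∈ (∅ : Finset (Fin k)) → pr a b j φ ∈ c j} := by
      rw [Nat.succ_le_iff, Finset.card_pos]
      exact ⟨φ₀, by simp⟩
    exact_mod_cast this
  | succ r ih =>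
    intro x hx
    set y : ℝ := x / (2 * (k + 1)) with hy
    have hypos : 0 < y := by positivity
    have hyx : y ≤ x := by
      rw [hy]
      apply div_le_self hx.le
      have : (0 : ℝ) ≤ k := by positivity
      linarith
    set θ := δ y with hθ
    have hθpos : 0 < θ := hpos y hypos
    have hθ1 : θ ≤ 1 := hle y
    obtain ⟨ε, κ, hε, hκ, hIH⟩ := ih (θ * x) (by positivity)
    refine ⟨min ε y, x / 2 * κ, lt_min hε hypos, by positivity, ?_⟩
    intro n hn c hc V hV A hA φ₀
    have hn' : (0 : ℝ) < n := by exact_mod_cast hn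
    obtain ⟨v, hv⟩ : V.Nonempty := by rw [← Finset.card_pos]; omega
    let P : Fin k → Fin n → Fin n → Prop := fun i u w =>
      ∀ j, (a j = v → b j = i → (u, w) ∈ c j) ∧ (a j = i → b j = v → (w, u) ∈ c j)
    let Nb : Fin k → Fin n → Finset (Fin n) := fun i u => {w ∈ A i | P i u w}
    let Bad : Fin k → Finset (Fin n) := fun i => {u ∈ A v | (#(Nb i u) : ℝ) < θ * #(A i)}
    have hBad : ∀ i ∈ V, (#(Bad i) : ℝ) ≤ y * n := by
      intro i hi
      apply bad_small n hn (A v) (A i) (P i) x y θ hypos hyx (hA i hi)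
      intro B hB hBc
      have hAi : y * n ≤ #(A i) := le_trans (by gcongr) (hA i hi)
      have hmin : θ ≤ δ (min (#B : ℝ) (#(A i) : ℝ) / n) := by
        apply hmono y _ hypos
        rw [le_div_iff₀ hn']
        exact le_min hBc hAi
      have hmin' : θ ≤ δ (min (#(A i) : ℝ) (#B : ℝ) / n) := by rwa [min_comm]
      have hεB : min ε y * n ≤ #B := le_trans (by gcongr; exact min_le_right _ _) hBc
      have hεA : min ε y * n ≤ #(A i) := le_trans (by gcongr; exact min_le_right _ _) hAi
      by_cases h1 : ∃ j, a j = v ∧ b j = i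
      · obtain ⟨j, hja, hjb⟩ := h1
        have h2 := hc j B (A i) hεB hεA
        refine le_trans (mul_le_mul_of_nonneg_right hmin (by positivity)) (h2.trans ?_)
        norm_cast
        apply Finset.card_le_card
        intro p hp
        simp only [Finset.mem_inter, Finset.mem_filter] at hp ⊢
        refine ⟨hp.2, fun j' => ⟨fun h3 h4 => ?_, fun h3 h4 => ?_⟩⟩
        · rw [hinj j' j (h3.trans hja.symm) (h4.trans hjb.symm)]
          exact hp.1
        · exfalso
          have e1 := hab j
          have e2 := hab j'
          rw [hja, hjb] at e1
          rw [h3, h4] at e2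
          exact lt_asymm e1 e2
      · by_cases h5 : ∃ j, a j = i ∧ b j = v
        · obtain ⟨j, hja, hjb⟩ := h5
          have h2 := hc j (A i) B hεA hεB
          rw [mul_comm (#B : ℝ)]
          refine le_trans (mul_le_mul_of_nonneg_right hmin' (by positivity)) (h2.trans ?_)
          norm_cast
          rw [← Finset.card_map (Equiv.prodComm (Fin n) (Fin n)).toEmbedding]
          apply Finset.card_le_card
          intro p hp
          simp only [Finset.mem_map, Finset.mem_inter, Finset.mem_filter, Finset.mem_product] at hp ⊢
          obtain ⟨p', hp', rfl⟩ := hp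
          simp only [Equiv.coe_toEmbedding, Equiv.prodComm_apply, Prod.fst_swap, Prod.snd_swap]
          refine ⟨⟨hp'.2.2, hp'.2.1⟩, fun j' => ⟨fun h3 h4 => ?_, fun h3 h4 => ?_⟩⟩
          · exact absurd ⟨j', h3, h4⟩ h1
          · rw [hinj j' j (h3.trans hja.symm) (h4.trans hjb.symm)]
            exact hp'.1
        · have : #{p ∈ B ×ˢ A i | P i p.1 p.2} = #B * #(A i) := by
            rw [Finset.filter_true_of_mem, Finset.card_product]
            intro p _ j
            exact ⟨fun h3 h4 => absurd ⟨j, h3, h4⟩ h1, fun h3 h4 => absurd ⟨j, h3, h4⟩ h5⟩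
          rw [this]
          push_cast
          have : (0 : ℝ) ≤ (#B : ℝ) * #(A i) := by positivity
          nlinarith
    let Gd : Finset (Fin n) := A v \ (V.biUnion Bad)
    have hGd : x / 2 * n ≤ #Gd := by
      have h1 : #(A v) ≤ #(V.biUnion Bad) + #Gd := by
        have := Finset.le_card_sdiff (V.biUnion Bad) (A v)
        simp only [Gd]; omega
      have h2 : (#(V.biUnion Bad) : ℝ) ≤ ∑ i ∈ V, (#(Bad i) : ℝ) := by
        exact_mod_cast Finset.card_biUnion_le
      have h3 : ∑ i ∈ V, (#(Bad i) : ℝ) ≤ ∑ i ∈ V, y * n := Finset.sum_le_sum hBad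
      rw [Finset.sum_const, nsmul_eq_mul] at h3
      have h4 : (#V : ℝ) ≤ k + 1 := by
        have : #V ≤ k := by simpa using Finset.card_le_univ V
        have : (#V : ℝ) ≤ k := by exact_mod_cast this
        linarith
      have h5 : (#V : ℝ) * (y * n) ≤ (k + 1) * (y * n) := by gcongr
      have h6 : ((k : ℝ) + 1) * (y * n) = x / 2 * n := by
        rw [hy]; field_simp
      have h7 : (#(A v) : ℝ) ≤ #(V.biUnion Bad) + #Gd := by exact_mod_cast h1
      have h8 := hA v hv
      linarith
    let Z : Fin n → Finset (Fin k → Fin n) := fun u =>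
      {φ : Fin k → Fin n | (∀ i, i ∉ V.erase v → φ i = Function.update φ₀ v u i) ∧
          (∀ i ∈ V.erase v, φ i ∈ Nb i u) ∧
          ∀ j, a j ∈ V.erase v → b j ∈ V.erase v → pr a b j φ ∈ c j}
    have hZ : ∀ u ∈ Gd, κ * (n : ℝ) ^ r ≤ #(Z u) := by
      intro u hu
      apply hIH n hn c _ (V.erase v) (by rw [Finset.card_erase_of_mem hv]; omega)
      · intro i hi
        simp only [Gd, Finset.mem_sdiff, Finset.mem_biUnion, not_exists, not_and] at hu
        have h1 := hu.2 i (Finset.mem_of_mem_erase hi)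
        have h2 : θ * #(A i) ≤ #(Nb i u) := by
          by_contra hcon
          push Not at hcon
          exact h1 (Finset.mem_filter.2 ⟨hu.1, hcon⟩)
        refine le_trans ?_ h2
        rw [mul_assoc]
        exact mul_le_mul_of_nonneg_left (hA i (Finset.mem_of_mem_erase hi)) hθpos.le
      · intro j A B hA hB
        exact hc j A B (le_trans (by gcongr; exact min_le_left _ _) hA)
          (le_trans (by gcongr; exact min_le_left _ _) hB)
    have hZv : ∀ u, ∀ φ ∈ Z u, φ v = u := by
      intro u φ hφ
      simp only [Z, Finset.mem_filter, Finset.mem_univ, true_and] at hφ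
      rw [hφ.1 v (by simp)]
      simp
    have hU : #(Gd.biUnion Z) = ∑ u ∈ Gd, #(Z u) := by
      apply Finset.card_biUnion
      intro u _ u' _ huu
      rw [Function.onFun, Finset.disjoint_left]
      intro φ h1 h2
      exact huu ((hZv u φ h1).symm.trans (hZv u' φ h2))
    have hfin : x / 2 * κ * (n : ℝ) ^ (r + 1) ≤ #(Gd.biUnion Z) := by
      rw [hU]
      push_cast
      calc x / 2 * κ * (n : ℝ) ^ (r + 1) = (x / 2 * n) * (κ * (n : ℝ) ^ r) := by ring
        _ ≤ #Gd * (κ * (n : ℝ) ^ r) := by gcongr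
        _ = ∑ u ∈ Gd, κ * (n : ℝ) ^ r := by simp
        _ ≤ _ := Finset.sum_le_sum hZ
    refine hfin.trans ?_
    norm_cast
    apply Finset.card_le_card
    intro φ hφ
    obtain ⟨u, hu, hφ⟩ := Finset.mem_biUnion.1 hφ
    have hφv := hZv u φ hφ
    simp only [Z, Finset.mem_filter, Finset.mem_univ, true_and, Nb] at hφ ⊢
    obtain ⟨h1, h2, h3⟩ := hφ
    have huA : u ∈ A v := (Finset.mem_sdiff.1 hu).1
    refine ⟨?_, ?_, ?_⟩
    · intro i hi
      have hiv : i ≠ v := fun h => hi (h ▸ hv)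
      rw [h1 i (by simp [hi])]
      simp [hiv]
    · intro i hi
      by_cases hiv : i = v
      · subst hiv; rw [hφv]; exact huA
      · exact (h2 i (Finset.mem_erase.2 ⟨hiv, hi⟩)).1
    · intro j hja hjb
      have hne := (hab j).ne
      by_cases h4 : a j = v
      · have h5 : b j ≠ v := fun h => hne (h4.trans h.symm)
        have := ((h2 (b j) (Finset.mem_erase.2 ⟨h5, hjb⟩)).2 j).1 h4 rfl
        simp only [pr]
        rw [h4, hφv]
        exact this
      · by_cases h5 : b j = v
        · have := ((h2 (a j) (Finset.mem_erase.2 ⟨h4, hja⟩)).2 j).2 rfl h5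
          simp only [pr]
          rw [h5, hφv]
          exact this
        · exact h3 j (Finset.mem_erase.2 ⟨h4, hja⟩) (Finset.mem_erase.2 ⟨h5, hjb⟩)

end dense
end KLR

namespace KLR
section cnt
variable {α : Type} [Fintype α] [DecidableEq α]

/-- sets of size m containing T -/
def sup (m : ℕ) (T : Finset α) : Finset (Finset α) := {E ∈ powersetCard m univ | T ⊆ E}

lemma mem_sup {m : ℕ} {T E : Finset α} : E ∈ sup m T ↔ #E = m ∧ T ⊆ E := by
  simp [sup, mem_powersetCard]

lemma card_sup {m : ℕ} {T : Finset α} (h : #T ≤ m) :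
    #(sup m T) = (Fintype.card α - #T).choose (m - #T) := by
  have : sup m T = (powersetCard (m - #T) Tᶜ).image (fun X => T ∪ X) := by
    ext E
    simp only [mem_sup, mem_image, mem_powersetCard]
    constructor
    · rintro ⟨h1, h2⟩
      refine ⟨E \ T, ⟨fun x hx => ?_, ?_⟩, by simp [h2]⟩
      · simp at hx ⊢; exact hx.2
      · rw [card_sdiff_of_subset h2, h1]
    · rintro ⟨X, ⟨h1, h2⟩, rfl⟩
      refine ⟨?_, subset_union_left⟩
      rw [card_union_of_disjoint, h2]
      · omega
      · rw [Finset.disjoint_left]; intro x hx hx'; have := h1 hx'; simp at this; exact this hx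
  rw [this, card_image_of_injOn, card_powersetCard, card_compl]
  intro X hX Y hY hXY
  simp only [Finset.mem_coe, mem_powersetCard] at hX hY
  have hd : ∀ Z : Finset α, Z ⊆ Tᶜ → (T ∪ Z) \ T = Z := by
    intro Z hZ
    ext x
    have := @hZ x
    simp at this ⊢
    tauto
  rw [← hd X hX.1, ← hd Y hY.1]
  simp only at hXY
  rw [hXY]

lemma sup_empty {m : ℕ} {T : Finset α} (h : m < #T) : sup m T = ∅ := by
  ext E; simp only [mem_sup, notMem_empty, iff_false]
  rintro ⟨h1, h2⟩
  have := card_le_card h2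
  omega

lemma sup_insert {m : ℕ} (hm : m ≤ Fintype.card α) {T : Finset α} {y : α} (hy : y ∉ T) :
    #(sup m (insert y T)) * Fintype.card α ≤ m * #(sup m T) := by
  have hc : #(insert y T) = #T + 1 := card_insert_of_notMem hy
  by_cases h : m < #T + 1
  · rw [sup_empty (by omega)]; simp
  · push Not at h
    rw [card_sup (by omega), card_sup (by omega), hc]
    set N := Fintype.card α
    set t := #T
    obtain ⟨M, rfl⟩ := Nat.exists_eq_add_of_le h
    obtain ⟨D, hD⟩ := Nat.exists_eq_add_of_le hm
    have e1 : N - (t+1) = M + D := by omega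
    have e2 : N - t = M + D + 1 := by omega
    have e3 : t + 1 + M - (t+1) = M := by omega
    have e4 : t + 1 + M - t = M + 1 := by omega
    rw [e1, e2, e3, e4, hD]
    have key := Nat.add_one_mul_choose_eq (M+D) M
    have hge : (M+D).choose M ≤ (M+D+1).choose (M+1) := by
      rw [Nat.choose_succ_succ]; omega
    nlinarith [Nat.mul_le_mul_left t hge]

lemma sup_union {m : ℕ} (hm : m ≤ Fintype.card α) (T Y : Finset α) (hd : Disjoint T Y) :
    #(sup m (T ∪ Y)) * Fintype.card α ^ #Y ≤ m ^ #Y * #(sup m T) := by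
  induction Y using Finset.induction_on with
  | empty => simp
  | insert y Y hy ih =>
    have hd2 := hd
    rw [disjoint_insert_right] at hd
    have ih := ih hd.2
    rw [union_insert, card_insert_of_notMem hy]
    have h1 := sup_insert hm (T := T ∪ Y) (y := y) (by simp [hd.1, hy])
    calc _ = #(sup m (insert y (T ∪ Y))) * Fintype.card α * Fintype.card α ^ #Y := by ring
      _ ≤ m * #(sup m (T ∪ Y)) * Fintype.card α ^ #Y := Nat.mul_le_mul_right _ h1
      _ = m * (#(sup m (T ∪ Y)) * Fintype.card α ^ #Y) := by ring
      _ ≤ m * (m ^ #Y * #(sup m T)) := Nat.mul_le_mul_left _ ih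
      _ = _ := by ring

lemma cnt_hit {m : ℕ} (hm : m ≤ Fintype.card α) (T Q : Finset α) (hd : Disjoint T Q) (l : ℕ) :
    #{E ∈ sup m T | l ≤ #(E ∩ Q)} * Fintype.card α ^ l ≤ (#Q).choose l * (m ^ l * #(sup m T)) := by
  have hsub : ({E ∈ sup m T | l ≤ #(E ∩ Q)} : Finset (Finset α)) ⊆
      (powersetCard l Q).biUnion (fun Y => sup m (T ∪ Y)) := by
    intro E hE
    simp only [mem_filter, mem_sup] at hE
    obtain ⟨Y, hY, hYc⟩ := exists_subset_card_eq hE.2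
    simp only [mem_biUnion, mem_powersetCard, mem_sup]
    exact ⟨Y, ⟨hY.trans inter_subset_right, hYc⟩, hE.1.1,
      union_subset hE.1.2 (hY.trans inter_subset_left)⟩
  calc _ ≤ (∑ Y ∈ powersetCard l Q, #(sup m (T ∪ Y))) * Fintype.card α ^ l :=
        Nat.mul_le_mul_right _ ((card_le_card hsub).trans card_biUnion_le)
    _ = ∑ Y ∈ powersetCard l Q, #(sup m (T ∪ Y)) * Fintype.card α ^ l := sum_mul _ _ _
    _ ≤ ∑ Y ∈ powersetCard l Q, m ^ l * #(sup m T) := by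
        apply sum_le_sum
        intro Y hY
        rw [mem_powersetCard] at hY
        rw [← hY.2]
        exact sup_union hm T Y (disjoint_of_subset_right hY.1 hd)
    _ = _ := by simp

lemma cnt_hit_real {m : ℕ} (hm : m ≤ Fintype.card α) (T Q : Finset α) (hd : Disjoint T Q) (l : ℕ)
    (hl : 0 < l) (hN : 0 < Fintype.card α) (ρ : ℝ)
    (hρ : Real.exp 1 * #Q * m ≤ ρ * (l * Fintype.card α)) :
    (#{E ∈ sup m T | l ≤ #(E ∩ Q)} : ℝ) ≤ ρ ^ l * #(sup m T) := by
  have h := cnt_hit hm T Q hd l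
  have h1 : ((#{E ∈ sup m T | l ≤ #(E ∩ Q)} : ℕ) : ℝ) * (Fintype.card α : ℝ) ^ l
      ≤ ((#Q).choose l : ℝ) * ((m:ℝ) ^ l * #(sup m T)) := by exact_mod_cast h
  have hl' : (0:ℝ) < l := by exact_mod_cast hl
  have hN' : (0:ℝ) < Fintype.card α := by exact_mod_cast hN
  have h2 : ((#Q).choose l : ℝ) ≤ (#Q : ℝ)^l / l.factorial := Nat.choose_le_pow_div l (#Q)
  have h3 : (l:ℝ)^l / l.factorial ≤ Real.exp l := Real.pow_div_factorial_le_exp (l:ℝ) hl'.le l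
  have h4 : Real.exp l = Real.exp 1 ^ l := by rw [← Real.exp_nat_mul]; simp
  have hf : (0:ℝ) < l.factorial := by exact_mod_cast l.factorial_pos
  have h5 : ((#Q).choose l : ℝ) * (l:ℝ)^l ≤ (Real.exp 1 * #Q)^l := by
    calc _ ≤ (#Q : ℝ)^l / l.factorial * (l:ℝ)^l := by gcongr
      _ = (#Q:ℝ)^l * ((l:ℝ)^l / l.factorial) := by ring
      _ ≤ (#Q:ℝ)^l * Real.exp 1 ^ l := by rw [← h4]; gcongr
      _ = _ := by rw [mul_pow]; ring
  have hpos : (0:ℝ) < (l * Fintype.card α : ℝ)^l := by positivity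
  refine le_of_mul_le_mul_right ?_ hpos
  calc _ = (#{E ∈ sup m T | l ≤ #(E ∩ Q)} : ℝ) * (Fintype.card α : ℝ)^l * (l:ℝ)^l := by
        rw [mul_pow]; ring
    _ ≤ ((#Q).choose l : ℝ) * ((m:ℝ) ^ l * #(sup m T)) * (l:ℝ)^l := by gcongr
    _ = (((#Q).choose l : ℝ) * (l:ℝ)^l) * (m:ℝ)^l * #(sup m T) := by ring
    _ ≤ (Real.exp 1 * #Q)^l * (m:ℝ)^l * #(sup m T) := by gcongr
    _ = (Real.exp 1 * #Q * m)^l * #(sup m T) := by rw [mul_pow _ (m:ℝ)]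
    _ ≤ (ρ * (l * Fintype.card α))^l * #(sup m T) := by gcongr
    _ = _ := by rw [mul_pow]; ring

/-- sum over small subsets -/
lemma small_sum (m s : ℕ) (y : ℝ) (hy : 0 < y) (hy1 : y ≤ 1) (E : Finset α) (hE : #E = m) :
    (#{S ∈ E.powerset | #S ≤ s} : ℝ) * y ^ s ≤ (1 + y) ^ m := by
  have h := Finset.sum_pow_mul_eq_add_pow y (1:ℝ) E
  calc (#{S ∈ E.powerset | #S ≤ s} : ℝ) * y ^ s = ∑ S ∈ E.powerset with #S ≤ s, y^s := by simp
    _ ≤ ∑ S ∈ E.powerset with #S ≤ s, y^(#S) := by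
        apply sum_le_sum; intro S hS
        exact pow_le_pow_of_le_one hy.le hy1 (mem_filter.1 hS).2
    _ ≤ ∑ S ∈ E.powerset, y^(#S) :=
        sum_le_sum_of_subset_of_nonneg (filter_subset _ _) (fun _ _ _ => by positivity)
    _ = (y+1)^m := by rw [← hE, ← h]; simp
    _ = _ := by ring
end cnt
end KLR

namespace KLR
section cnt2
variable {α : Type} [Fintype α] [DecidableEq α] {ι : Type} [Fintype ι] [DecidableEq ι]

lemma pi_hit (X : ι → Finset (Finset α)) (j₀ : ι) (p : Finset α → Prop) [DecidablePred p] (ρ : ℝ)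
    (h : (#{E ∈ X j₀ | p E} : ℝ) ≤ ρ * #(X j₀)) :
    (#{E ∈ Fintype.piFinset X | p (E j₀)} : ℝ) ≤ ρ * #(Fintype.piFinset X) := by
  have : ({E ∈ Fintype.piFinset X | p (E j₀)} : Finset (ι → Finset α)) =
      Fintype.piFinset (Function.update X j₀ {E ∈ X j₀ | p E}) := by
    ext E
    simp only [mem_filter, Fintype.mem_piFinset]
    constructor
    · rintro ⟨h1, h2⟩ j
      by_cases hj : j = j₀
      · subst hj; simp [h1, h2]
      · simp [hj, h1]
    · intro h
      have h0 := h j₀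
      simp only [Function.update_self, mem_filter] at h0
      refine ⟨fun j => ?_, h0.2⟩
      by_cases hj : j = j₀
      · subst hj; exact h0.1
      · have := h j; simpa [hj] using this
  rw [this, Fintype.card_piFinset, Fintype.card_piFinset]
  push_cast
  rw [← Finset.mul_prod_erase univ _ (mem_univ j₀), ← Finset.mul_prod_erase univ (fun j => (#(X j):ℝ)) (mem_univ j₀)]
  simp only [Function.update_self]
  have e : ∏ x ∈ univ.erase j₀, (#(Function.update X j₀ {E ∈ X j₀ | p E} x) : ℝ) =
      ∏ x ∈ univ.erase j₀, (#(X x):ℝ) := by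
    apply prod_congr rfl
    intro x hx
    rw [Function.update_of_ne (ne_of_mem_erase hx)]
  rw [e, ← mul_assoc]
  gcongr

lemma union_count (m s R : ℕ) (y K ρ : ℝ) (hy : 0 < y) (hy1 : y ≤ 1)
    (hK : (1+y)^m ≤ K * y^s) (hρ : 0 ≤ ρ)
    (P : (Fin R → ι → Finset α) → (ι → Finset α) → Prop) [∀ S, DecidablePred (P S)]
    (hP : ∀ S, (#{E ∈ Fintype.piFinset (fun j => sup m (univ.biUnion fun t => S t j)) | P S E} : ℝ)
      ≤ ρ * #(Fintype.piFinset (fun j => sup m (univ.biUnion fun t => S t j))))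
    (Bad : Finset (ι → Finset α))
    (hB : ∀ E ∈ Bad, (∀ j, #(E j) = m) ∧ ∃ S : Fin R → ι → Finset α,
      (∀ t j, S t j ⊆ E j ∧ #(S t j) ≤ s) ∧ P S E) :
    (#Bad : ℝ) ≤ ρ * (((Fintype.card α).choose m : ℝ) ^ Fintype.card ι * (K ^ Fintype.card ι) ^ R) := by
  classical
  set Sm : Finset (Fin R → ι → Finset α) := {S | ∀ t j, #(S t j) ≤ s} with hSm
  set X : (Fin R → ι → Finset α) → Finset (ι → Finset α) := fun S =>
    Fintype.piFinset (fun j => sup m (univ.biUnion fun t => S t j)) with hX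
  have hmem : ∀ S E, E ∈ X S ↔ (∀ j, #(E j) = m) ∧ ∀ t j, S t j ⊆ E j := by
    intro S E
    simp only [hX, Fintype.mem_piFinset, mem_sup, biUnion_subset, mem_univ, true_imp_iff]
    constructor
    · intro h; exact ⟨fun j => (h j).1, fun t j => (h j).2 t⟩
    · rintro ⟨h1, h2⟩ j; exact ⟨h1 j, fun t => h2 t j⟩
  have h1 : Bad ⊆ Sm.biUnion (fun S => {E ∈ X S | P S E}) := by
    intro E hE
    obtain ⟨hc, S, hS, hPS⟩ := hB E hE
    simp only [mem_biUnion, mem_filter]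
    exact ⟨S, by simp [hSm, fun t j => (hS t j).2], (hmem _ _).2 ⟨hc, fun t j => (hS t j).1⟩, hPS⟩
  have h2 : (#Bad : ℝ) ≤ ∑ S ∈ Sm, (#{E ∈ X S | P S E} : ℝ) := by
    exact_mod_cast (card_le_card h1).trans card_biUnion_le
  have h3 : (#Bad : ℝ) ≤ ρ * ∑ S ∈ Sm, (#(X S) : ℝ) := by
    rw [mul_sum]
    exact h2.trans (sum_le_sum fun S _ => hP S)
  refine h3.trans (mul_le_mul_of_nonneg_left ?_ hρ)
  set All : Finset (ι → Finset α) := Fintype.piFinset (fun _ => powersetCard m univ) with hAll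
  have hsw : ∑ S ∈ Sm, (#(X S) : ℝ) = ∑ E ∈ All, (#{S ∈ Sm | E ∈ X S} : ℝ) := by
    have := Finset.sum_card_bipartiteAbove_eq_sum_card_bipartiteBelow
      (s := Sm) (t := All) (fun S E => E ∈ X S)
    simp only [Finset.bipartiteAbove, Finset.bipartiteBelow] at this
    rw [← Nat.cast_sum, ← Nat.cast_sum, ← this]
    congr 1
    apply sum_congr rfl
    intro S _
    congr 1
    ext E
    simp only [mem_filter, hAll, Fintype.mem_piFinset, mem_powersetCard, subset_univ, true_and]
    rw [hmem]; tauto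
  rw [hsw]
  have hcard : (#All : ℝ) = ((Fintype.card α).choose m : ℝ) ^ Fintype.card ι := by
    simp [hAll, Fintype.card_piFinset]
  rw [← hcard, ← nsmul_eq_mul]
  apply sum_le_card_nsmul
  intro E hE
  have hEc : ∀ j, #(E j) = m := by
    intro j
    simp only [hAll, Fintype.mem_piFinset, mem_powersetCard] at hE
    exact (hE j).2
  have hset : ({S ∈ Sm | E ∈ X S} : Finset _) =
      Fintype.piFinset (fun _ : Fin R => Fintype.piFinset (fun j => {S ∈ (E j).powerset | #S ≤ s})) := by
    ext S
    simp only [mem_filter, hmem, hSm, Fintype.mem_piFinset, mem_powerset, mem_univ, true_and]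
    constructor
    · rintro ⟨h1, _, h2⟩ t j; exact ⟨h2 t j, h1 t j⟩
    · intro h; exact ⟨fun t j => (h t j).2, hEc, fun t j => (h t j).1⟩
  rw [hset]
  simp only [Fintype.card_piFinset, prod_const, card_univ, Fintype.card_fin]
  push_cast
  have hb : ∏ j : ι, (#{S ∈ (E j).powerset | #S ≤ s} : ℝ) ≤ K ^ Fintype.card ι := by
    calc _ ≤ ∏ j : ι, K := by
          apply prod_le_prod
          · intros; positivity
          · intro j _
            have := small_sum m s y hy hy1 (E j) (hEc j)
            exact le_of_mul_le_mul_right (this.trans hK) (by positivity)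
      _ = _ := by simp
  exact pow_le_pow_left₀ (prod_nonneg fun _ _ => by positivity) hb R
end cnt2
end KLR

namespace KLR
section lr
variable {α : Type} [Fintype α] [DecidableEq α]

lemma fg_bound (N m q l j : ℕ) (lam θ : ℝ) (hlam : 0 < lam) (hlam1 : lam < 1) (hθ : 0 ≤ θ) (hθ1 : θ ≤ 1)
    (hm : m ≤ N) (hq : (q:ℝ) = (1-θ)*N) (hl : (1-lam*θ)*m ≤ (l:ℝ)) (hjl : j ≤ l) (hjm : j ≤ m)
    (hj : ∀ i, i < j → (i:ℝ) ≤ (1-lam)/2*m) :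
    ∀ i, i ≤ j → ((q.choose i : ℝ) * (N-i).choose (m-i)) ≤
      (1-(1-lam)/2*θ)^i * ((l.choose i : ℝ) * N.choose m) := by
  intro i
  induction i with
  | zero => intro _; simp
  | succ i ih =>
    intro hi
    have ih := ih (by omega)
    set ρ := (1-(1-lam)/2*θ) with hρ
    have hρ0 : 0 ≤ ρ := by rw [hρ]; nlinarith
    have hij := hj i (by omega)
    have e1 : ((q.choose (i+1) : ℝ)) * (i+1) ≤ q.choose i * max 0 ((q:ℝ)-i) := by
      have := Nat.choose_succ_right_eq q i
      have h2 : ((q.choose (i+1) : ℝ)) * (i+1) = q.choose i * ((q-i : ℕ):ℝ) := by exact_mod_cast this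
      rw [h2]
      gcongr
      by_cases h : i ≤ q
      · rw [Nat.cast_sub h]; exact le_max_right _ _
      · rw [Nat.sub_eq_zero_of_le (by omega)]; simp
    have e2 : ((l.choose (i+1) : ℝ)) * (i+1) = l.choose i * ((l:ℝ)-i) := by
      have := Nat.choose_succ_right_eq l i
      rw [← Nat.cast_sub (by omega)]
      exact_mod_cast this
    have e3 : ((N-(i+1)).choose (m-(i+1)) : ℝ) * ((N:ℝ)-i) = (N-i).choose (m-i) * ((m:ℝ)-i) := by
      have := Nat.add_one_mul_choose_eq (N-(i+1)) (m-(i+1))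
      rw [show N - (i+1) + 1 = N - i by omega, show m-(i+1)+1 = m - i by omega] at this
      rw [← Nat.cast_sub (by omega), ← Nat.cast_sub (by omega)]
      rw [mul_comm]
      exact_mod_cast this
    have hNi : (0:ℝ) < (N:ℝ) - i := by
      have : (i:ℝ) < N := by exact_mod_cast (by omega : i < N)
      linarith
    have hmi : (0:ℝ) ≤ (m:ℝ) - i := by
      have : (i:ℝ) ≤ m := by exact_mod_cast (by omega : i ≤ m)
      linarith
    have hli : (0:ℝ) ≤ (l:ℝ) - i := by
      have : (i:ℝ) ≤ l := by exact_mod_cast (by omega : i ≤ l)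
      linarith
    have hA : max 0 ((q:ℝ)-i) ≤ (1-θ)*((N:ℝ)-i) := by
      apply max_le
      · exact mul_nonneg (by linarith) hNi.le
      · rw [hq]; nlinarith [mul_nonneg hθ (Nat.cast_nonneg (α := ℝ) i)]
    have hBm : (1-θ)*((m:ℝ)-i) ≤ ρ*((l:ℝ)-i) := by
      have h1 : ρ*((1-lam*θ)*m - i) ≤ ρ*((l:ℝ)-i) := by gcongr
      refine le_trans ?_ h1
      have h2 : ρ*((1-lam*θ)*m - i) - (1-θ)*((m:ℝ)-i) = θ*((1-lam)/2*m - i + (1-lam)/2*(lam*θ)*m+(1-lam)/2*i) := by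
        rw [hρ]; ring
      have h3 : 0 ≤ θ*((1-lam)/2*m - i + (1-lam)/2*(lam*θ)*m+(1-lam)/2*i) := by
        apply mul_nonneg hθ
        have : 0 ≤ (1-lam)/2*(lam*θ)*m := by
          have : 0 ≤ (1-lam)/2 := by linarith
          positivity
        have : 0 ≤ (1-lam)/2*i := mul_nonneg (by linarith) (Nat.cast_nonneg i)
        linarith
      linarith
    have hpos : (0:ℝ) < (i+1)*((N:ℝ)-i) := by positivity
    refine le_of_mul_le_mul_right ?_ hpos
    calc _ = ((q.choose (i+1) : ℝ) * (i+1)) * (((N-(i+1)).choose (m-(i+1)) : ℝ) * ((N:ℝ)-i)) := by ring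
      _ = ((q.choose (i+1) : ℝ) * (i+1)) * ((N-i).choose (m-i) * ((m:ℝ)-i)) := by rw [e3]
      _ ≤ (q.choose i * max 0 ((q:ℝ)-i)) * ((N-i).choose (m-i) * ((m:ℝ)-i)) := by gcongr
      _ = ((q.choose i : ℝ) * (N-i).choose (m-i)) * (max 0 ((q:ℝ)-i) * ((m:ℝ)-i)) := by ring
      _ ≤ (ρ^i * ((l.choose i : ℝ) * N.choose m)) * (((1-θ)*((N:ℝ)-i)) * ((m:ℝ)-i)) := by gcongr
      _ = (ρ^i * ((l.choose i : ℝ) * N.choose m)) * (((N:ℝ)-i) * ((1-θ) * ((m:ℝ)-i))) := by ring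
      _ ≤ (ρ^i * ((l.choose i : ℝ) * N.choose m)) * (((N:ℝ)-i) * (ρ*((l:ℝ)-i))) := by gcongr
      _ = ρ^(i+1) * ((l.choose i * ((l:ℝ)-i)) * N.choose m) * ((N:ℝ)-i) := by ring
      _ = _ := by rw [← e2]; ring

lemma low_tail (m : ℕ) (lam θ : ℝ) (hlam : 0 < lam) (hlam1 : lam < 1) (hm : m ≤ Fintype.card α)
    (D : Finset α) (hθ : (#D:ℝ) = θ * Fintype.card α) (hN : 0 < Fintype.card α) :
    (#{E ∈ powersetCard m univ | (#(E ∩ D):ℝ) < lam * θ * m} : ℝ) ≤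
      Real.exp (-((1-lam)/2)^2 * θ * m) * (Fintype.card α).choose m := by
  classical
  set N := Fintype.card α with hNdef
  have hN' : (0:ℝ) < N := by exact_mod_cast hN
  have hθ0 : 0 ≤ θ := by
    by_contra h; push Not at h
    have : (0:ℝ) ≤ #D := by positivity
    nlinarith
  have hθ1 : θ ≤ 1 := by
    have : (#D:ℝ) ≤ N := by exact_mod_cast card_le_univ D
    by_contra h; push Not at h
    nlinarith
  set κ := (1-lam)/2 with hκ
  have hκ0 : 0 < κ := by rw [hκ]; linarith
  have hlt : lam * θ ≤ lam := by nlinarith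
  set l := ⌈(1-lam*θ)*(m:ℝ)⌉₊ with hl
  set j := ⌈κ*(m:ℝ)⌉₊ with hj
  have hm0 : (0:ℝ) ≤ m := by positivity
  have hjl : j ≤ l := by
    apply Nat.ceil_le_ceil
    apply mul_le_mul_of_nonneg_right _ hm0
    rw [hκ]; linarith
  have hjm : j ≤ m := by
    apply Nat.ceil_le.2
    have : κ ≤ 1 := by rw [hκ]; linarith
    nlinarith
  have hfg := fg_bound N m (#Dᶜ) l j lam θ hlam hlam1 hθ0 hθ1 hm (by
      rw [card_compl, Nat.cast_sub (card_le_univ D), hθ]; ring) (Nat.le_ceil _) hjl hjm (by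
      intro i hi; exact (Nat.lt_ceil.1 hi).le) j le_rfl
  -- double count
  have hcnt : #{E ∈ powersetCard m (univ : Finset α) | (#(E ∩ D):ℝ) < lam * θ * m} * l.choose j ≤
      (#Dᶜ).choose j * (N-j).choose (m-j) := by
    set Bd := ({E ∈ powersetCard m (univ : Finset α) | (#(E ∩ D):ℝ) < lam * θ * m} : Finset (Finset α)) with hBd
    have hE : ∀ E ∈ Bd, l.choose j ≤ #{Y ∈ powersetCard j Dᶜ | Y ⊆ E} := by
      intro E hE
      simp only [hBd, mem_filter, mem_powersetCard] at hE
      have h1 : ({Y ∈ powersetCard j Dᶜ | Y ⊆ E} : Finset (Finset α)) = powersetCard j (E ∩ Dᶜ) := by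
        ext Y; simp only [mem_filter, mem_powersetCard, subset_inter_iff]; tauto
      rw [h1, card_powersetCard]
      apply Nat.choose_le_choose
      apply Nat.ceil_le.2
      have h2 : #(E ∩ D) + #(E ∩ Dᶜ) = m := by
        rw [← hE.1.2, ← sdiff_eq_inter_compl, card_inter_add_card_sdiff]
      have h3 : (#(E ∩ D):ℝ) + #(E ∩ Dᶜ) = m := by exact_mod_cast h2
      have := hE.2
      linarith
    calc _ = ∑ E ∈ Bd, l.choose j := by simp
      _ ≤ ∑ E ∈ Bd, #{Y ∈ powersetCard j Dᶜ | Y ⊆ E} := sum_le_sum hE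
      _ = ∑ Y ∈ powersetCard j Dᶜ, #{E ∈ Bd | Y ⊆ E} := by
          have := Finset.sum_card_bipartiteAbove_eq_sum_card_bipartiteBelow
            (s := Bd) (t := powersetCard j Dᶜ) (fun E Y => Y ⊆ E)
          exact this
      _ ≤ ∑ Y ∈ powersetCard j Dᶜ, (N-j).choose (m-j) := by
          apply sum_le_sum
          intro Y hY
          rw [mem_powersetCard] at hY
          have := card_sup (α := α) (m := m) (T := Y) (by omega)
          rw [hY.2] at this
          rw [← this]
          apply card_le_card
          intro E hE
          simp only [hBd, mem_filter, mem_powersetCard] at hE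
          exact mem_sup.2 ⟨hE.1.1.2, hE.2⟩
      _ = _ := by simp
  have hcp : (0:ℝ) < l.choose j := by exact_mod_cast Nat.choose_pos hjl
  refine le_of_mul_le_mul_right ?_ hcp
  have hcnt' : (#{E ∈ powersetCard m (univ : Finset α) | (#(E ∩ D):ℝ) < lam * θ * m} : ℝ) * l.choose j ≤
      ((#Dᶜ).choose j : ℝ) * (N-j).choose (m-j) := by exact_mod_cast hcnt
  refine hcnt'.trans (hfg.trans ?_)
  have hexp : (1-κ*θ)^j ≤ Real.exp (-κ^2*θ*m) := by
    have h1 : 1-κ*θ ≤ Real.exp (-(κ*θ)) := by have := Real.add_one_le_exp (-(κ*θ)); linarith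
    calc (1-κ*θ)^j ≤ (Real.exp (-(κ*θ)))^j := by
          apply pow_le_pow_left₀ _ h1
          have : κ ≤ 1 := by rw [hκ]; linarith
          nlinarith
      _ = Real.exp (j * (-(κ*θ))) := by rw [← Real.exp_nat_mul]
      _ ≤ _ := by
          apply Real.exp_le_exp.2
          have : κ*m ≤ j := Nat.le_ceil _
          have : 0 ≤ κ*θ := by positivity
          nlinarith
  calc _ ≤ Real.exp (-κ^2*θ*m) * ((l.choose j : ℝ) * N.choose m) := by gcongr
    _ = _ := by ring

/-- scaled lower-regularity of a bipartite graph given by its edge set -/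
def LR (ε lam : ℝ) (m : ℕ) (E : Finset (Fin n × Fin n)) : Prop :=
  ∀ A B : Finset (Fin n), ε * n ≤ (#A : ℝ) → ε * n ≤ (#B : ℝ) →
    lam * m * ((#A:ℝ) * #B) ≤ #(E ∩ A ×ˢ B) * (n:ℝ)^2

open Classical in
lemma lr_count (ε lam : ℝ) (hε : 0 < ε) (hlam : 0 < lam) (hlam1 : lam < 1) (m : ℕ) (hn : 0 < n)
    (hm : m ≤ n^2) (hC : 4 * (n:ℝ) ≤ ((1-lam)/2)^2*ε^2*m) :
    ((n^2).choose m : ℝ) ≤ 2 * #{E ∈ powersetCard m (univ : Finset (Fin n × Fin n)) | LR ε lam m E} := by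
  set κ := (1-lam)/2 with hκ
  have hcard : Fintype.card (Fin n × Fin n) = n^2 := by simp [sq]
  have hn' : (0:ℝ) < n := by exact_mod_cast hn
  set All := powersetCard m (univ : Finset (Fin n × Fin n)) with hAll
  have hAc : #All = (n^2).choose m := by rw [hAll, card_powersetCard, card_univ, hcard]
  set c := Real.exp (-κ^2*ε^2*m) with hc
  have hbad : (#{E ∈ All | ¬ LR ε lam m E} : ℝ) ≤ 4^n * (c * (n^2).choose m) := by
    set Prs : Finset (Finset (Fin n) × Finset (Fin n)) := {p | ε * n ≤ (#p.1 : ℝ) ∧ ε * n ≤ (#p.2 : ℝ)} with hPrs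
    have hsub : ({E ∈ All | ¬ LR ε lam m E} : Finset _) ⊆ Prs.biUnion (fun p =>
        {E ∈ All | (#(E ∩ p.1 ×ˢ p.2):ℝ) < lam * (#p.1 * #p.2 / n^2) * m}) := by
      intro E hE
      rw [mem_filter] at hE
      obtain ⟨h1, h2⟩ := hE
      unfold LR at h2
      push Not at h2
      obtain ⟨A, B, hA, hB, h⟩ := h2
      simp only [mem_biUnion, mem_filter]
      refine ⟨(A,B), by simp [hPrs, hA, hB], h1, ?_⟩
      simp only
      rw [show lam * ((#A:ℝ) * #B / n^2) * m = lam * m * (#A * #B) / n^2 by ring, lt_div_iff₀ (by positivity)]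
      exact h
    have h1 : (#{E ∈ All | ¬ LR ε lam m E} : ℝ) ≤ ∑ p ∈ Prs, (#{E ∈ All | (#(E ∩ p.1 ×ˢ p.2):ℝ) < lam * (#p.1 * #p.2 / n^2) * m} : ℝ) := by
      exact_mod_cast (card_le_card hsub).trans card_biUnion_le
    have h2 : ∀ p ∈ Prs, (#{E ∈ All | (#(E ∩ p.1 ×ˢ p.2):ℝ) < lam * (#p.1 * #p.2 / n^2) * m} : ℝ) ≤ c * (n^2).choose m := by
      intro p hp
      simp only [hPrs, mem_filter, mem_univ, true_and] at hp
      have := low_tail (α := Fin n × Fin n) m lam (#p.1 * #p.2 / n^2) hlam hlam1 (by rw [hcard]; exact hm)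
        (p.1 ×ˢ p.2) (by rw [hcard, card_product]; push_cast; field_simp) (by rw [hcard]; positivity)
      rw [hcard] at this
      refine this.trans ?_
      refine mul_le_mul_of_nonneg_right ?_ (by positivity)
      apply Real.exp_le_exp.2
      have hθ : ε^2 ≤ (#p.1:ℝ) * #p.2 / n^2 := by
        rw [le_div_iff₀ (by positivity)]
        calc ε^2 * n^2 = (ε*n)*(ε*n) := by ring
          _ ≤ _ := mul_le_mul hp.1 hp.2 (by positivity) (by positivity)
      have h8 : 0 ≤ κ^2 * m := by positivity
      have h9 := mul_le_mul_of_nonneg_left hθ h8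
      rw [← hκ]
      linarith
    have h3 : (#Prs : ℝ) ≤ 4^n := by
      have : #Prs ≤ Fintype.card (Finset (Fin n) × Finset (Fin n)) := card_le_univ _
      have h4 : Fintype.card (Finset (Fin n) × Finset (Fin n)) = 4^n := by
        simp [← mul_pow]
      rw [h4] at this
      exact_mod_cast this
    calc _ ≤ _ := h1
      _ ≤ ∑ p ∈ Prs, c * ((n^2).choose m : ℝ) := sum_le_sum h2
      _ = #Prs * (c * (n^2).choose m) := by simp
      _ ≤ _ := by gcongr
  have hc4 : 4^n * c ≤ 1/2 := by
    have h1 : c ≤ Real.exp (-(4*n)) := by apply Real.exp_le_exp.2; linarith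
    have h2 : Real.exp (-(4*(n:ℝ))) = (Real.exp (-4))^n := by rw [← Real.exp_nat_mul]; congr 1; ring
    have h3 : Real.exp (-4) ≤ 1/16 := by
      have : Real.exp 4 = Real.exp 1 ^ 4 := by rw [← Real.exp_nat_mul]; norm_num
      have h5 : (2:ℝ) ≤ Real.exp 1 := by have := Real.add_one_le_exp (1:ℝ); linarith
      rw [Real.exp_neg, this, one_div]
      apply inv_anti₀ (by norm_num)
      calc (16:ℝ) = 2^4 := by norm_num
        _ ≤ _ := by gcongr
    calc 4^n * c ≤ 4^n * (1/16)^n := by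
          rw [h2] at h1
          have : (Real.exp (-4))^n ≤ (1/16)^n := by gcongr
          gcongr; exact h1.trans this
      _ = (1/4:ℝ)^n := by rw [← mul_pow]; norm_num
      _ ≤ (1/4:ℝ)^1 := pow_le_pow_of_le_one (by norm_num) (by norm_num) hn
      _ ≤ 1/2 := by norm_num
  have htot : (#{E ∈ All | LR ε lam m E} : ℝ) + #{E ∈ All | ¬ LR ε lam m E} = (n^2).choose m := by
    rw [← hAc]; exact_mod_cast card_filter_add_card_filter_not _
  have hch : (0:ℝ) ≤ (n^2).choose m := by positivity
  nlinarith
end lr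
end KLR

namespace KLR
/-- oriented edges of H -/
def Ed (H : SimpleGraph (Fin k)) : Type := {p : Fin k × Fin k // p.1 < p.2 ∧ H.Adj p.1 p.2}
noncomputable instance (H : SimpleGraph (Fin k)) : Fintype (Ed H) := by
  classical
  unfold Ed; infer_instance
noncomputable instance (H : SimpleGraph (Fin k)) : DecidableEq (Ed H) := Classical.decEq _

def aE (H : SimpleGraph (Fin k)) (j : Ed H) : Fin k := j.1.1
def bE (H : SimpleGraph (Fin k)) (j : Ed H) : Fin k := j.1.2
lemma abE_lt (H : SimpleGraph (Fin k)) (j : Ed H) : aE H j < bE H j := j.2.1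
lemma abE_adj (H : SimpleGraph (Fin k)) (j : Ed H) : H.Adj (aE H j) (bE H j) := j.2.2
lemma abE_inj (H : SimpleGraph (Fin k)) (i j : Ed H) (h1 : aE H i = aE H j) (h2 : bE H i = bE H j) :
    i = j := Subtype.ext (Prod.ext h1 h2)

lemma exE {H : SimpleGraph (Fin k)} {x y : Fin k} (h : H.Adj x y) (hl : x < y) :
    ∃ j : Ed H, aE H j = x ∧ bE H j = y := ⟨⟨(x,y), hl, h⟩, rfl, rfl⟩

lemma card_Ed (H : SimpleGraph (Fin k)) : Fintype.card (Ed H) = edgeCount H := by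
  unfold edgeCount
  rw [← Nat.card_eq_fintype_card]
  refine Nat.card_congr (Equiv.ofBijective
    (fun j : Ed H => (⟨s(aE H j, bE H j), abE_adj H j⟩ : H.edgeSet)) ⟨?_, ?_⟩)
  · intro i j h
    have h := Sym2.eq_iff.1 (congrArg Subtype.val h)
    rcases h with h | h
    · exact abE_inj H i j h.1 h.2
    · have := abE_lt H i; have h2 := abE_lt H j
      rw [h.1, h.2] at this
      exact absurd this (not_lt.2 h2.le)
  · rintro ⟨e, he⟩
    induction e using Sym2.ind with
    | _ x y =>
      rw [SimpleGraph.mem_edgeSet] at he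
      rcases lt_trichotomy x y with h | h | h
      · exact ⟨⟨(x,y), h, he⟩, rfl⟩
      · exact absurd h he.ne
      · exact ⟨⟨(y,x), h, he.symm⟩, Subtype.ext Sym2.eq_swap⟩

/-- the tuple of bipartite graphs of G -/
noncomputable def tup (H : SimpleGraph (Fin k)) (G : SimpleGraph (Fin k × Fin n)) (j : Ed H) :
    Finset (Fin n × Fin n) := by
  classical
  exact {p | G.Adj (aE H j, p.1) (bE H j, p.2)}

lemma mem_tup {H : SimpleGraph (Fin k)} {G : SimpleGraph (Fin k × Fin n)} {j : Ed H} {p} :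
    p ∈ tup H G j ↔ G.Adj (aE H j, p.1) (bE H j, p.2) := by simp [tup]

lemma pairCountIn_eq {H : SimpleGraph (Fin k)} (G : SimpleGraph (Fin k × Fin n)) (j : Ed H) (A B : Finset (Fin n)) :
    pairCountIn G (aE H j) (bE H j) A B = #(tup H G j ∩ A ×ˢ B) := by
  classical
  unfold pairCountIn
  rw [Nat.card_eq_fintype_card, Fintype.card_subtype]
  congr 1
  ext p
  simp only [mem_filter, mem_univ, true_and, mem_inter, mem_tup, mem_product]
  tauto

lemma pairCount_eq {H : SimpleGraph (Fin k)} (G : SimpleGraph (Fin k × Fin n)) (j : Ed H) :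
    pairCount G (aE H j) (bE H j) = #(tup H G j) := by
  classical
  unfold pairCount
  rw [Nat.card_eq_fintype_card, Fintype.card_subtype]
  congr 1

lemma pairCountIn_swap (G : SimpleGraph (Fin k × Fin n)) (i j : Fin k) (A B : Finset (Fin n)) :
    pairCountIn G i j A B = pairCountIn G j i B A := by
  unfold pairCountIn
  refine Nat.card_congr ((Equiv.prodComm _ _).subtypeEquiv ?_)
  intro p
  simp only [Equiv.prodComm_apply, Prod.fst_swap, Prod.snd_swap, G.adj_comm (j, _)]
  tauto

lemma pairCount_swap (G : SimpleGraph (Fin k × Fin n)) (i j : Fin k) :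
    pairCount G i j = pairCount G j i := by
  unfold pairCount
  refine Nat.card_congr ((Equiv.prodComm _ _).subtypeEquiv ?_)
  intro p
  simp only [Equiv.prodComm_apply, Prod.fst_swap, Prod.snd_swap, G.adj_comm (j, _)]

lemma lrp_swap {ε lam : ℝ} {G : SimpleGraph (Fin k × Fin n)} {i j : Fin k}
    (h : LowerRegularPair ε lam G i j) : LowerRegularPair ε lam G j i := by
  intro A B hA hB
  have := h B A hB hA
  unfold density at *
  rw [pairCountIn_swap G j i A B, pairCountIn_swap G j i univ univ, mul_comm (#A:ℝ)]
  exact this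

lemma lrp_iff {H : SimpleGraph (Fin k)} {ε lam : ℝ} (hε : 0 < ε) (hn : 0 < n) {G : SimpleGraph (Fin k × Fin n)} (j : Ed H)
    {m : ℕ} (hm : #(tup H G j) = m) :
    LowerRegularPair ε lam G (aE H j) (bE H j) ↔ LR ε lam m (tup H G j) := by
  unfold LowerRegularPair LR density
  simp only [pairCountIn_eq, univ_product_univ, inter_univ, hm, card_univ, Fintype.card_fin]
  have hn' : (0:ℝ) < n := by exact_mod_cast hn
  refine forall_congr' fun A => forall_congr' fun B => forall_congr' fun hA => forall_congr' fun hB => ?_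
  have hA' : (0:ℝ) < #A := lt_of_lt_of_le (by positivity) hA
  have hB' : (0:ℝ) < #B := lt_of_lt_of_le (by positivity) hB
  rw [← mul_div_assoc, div_le_div_iff₀ (by positivity) (by positivity), sq]

lemma canon_iff {H : SimpleGraph (Fin k)} {G : SimpleGraph (Fin k × Fin n)} {φ : Fin k → Fin n} :
    IsCanonicalCopy H G φ ↔ ∀ j : Ed H, G.Adj (aE H j, φ (aE H j)) (bE H j, φ (bE H j)) := by
  constructor
  · intro h j; exact h (abE_adj H j)
  · intro h x y hxy
    rcases lt_trichotomy x y with h' | h' | h'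
    · exact h ⟨(x,y), h', hxy⟩
    · exact absurd h' hxy.ne
    · exact (h ⟨(y,x), h', hxy.symm⟩).symm

lemma copyCount_eq (H : SimpleGraph (Fin k)) (G : SimpleGraph (Fin k × Fin n)) :
    copyCount H G = #(copies (aE H) (bE H) (tup H G)) := by
  classical
  unfold copyCount
  rw [Nat.card_eq_fintype_card, Fintype.card_subtype]
  congr 1
  ext φ
  simp only [mem_filter, mem_univ, true_and, copies, mem_tup, pr, canon_iff]

lemma tup_inj {H : SimpleGraph (Fin k)} {G G' : SimpleGraph (Fin k × Fin n)} (h : IsSubgraphKnH H G)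
    (h' : IsSubgraphKnH H G') (ht : tup H G = tup H G') : G = G' := by
  have key : ∀ x y, H.Adj x.1 y.1 → (G.Adj x y ↔ G'.Adj x y) := by
    intro x y hxy
    rcases lt_trichotomy x.1 y.1 with hl | hl | hl
    · obtain ⟨j, h1, h2⟩ := exE hxy hl
      have := congrArg (fun F => (x.2, y.2) ∈ F) (congrFun ht j)
      simp only [mem_tup, h1, h2, eq_iff_iff] at this
      exact this
    · exact absurd hl hxy.ne
    · obtain ⟨j, h1, h2⟩ := exE hxy.symm hl
      have := congrArg (fun F => (y.2, x.2) ∈ F) (congrFun ht j)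
      simp only [mem_tup, h1, h2, eq_iff_iff] at this
      rw [G.adj_comm, G'.adj_comm]
      exact this
  ext x y
  constructor
  · intro hh; exact (key x y (h hh)).1 hh
  · intro hh; exact (key x y (h' hh)).2 hh

/-- graph from a tuple -/
def gr (H : SimpleGraph (Fin k)) (E : Ed H → Finset (Fin n × Fin n)) : SimpleGraph (Fin k × Fin n) where
  Adj x y := (∃ j : Ed H, x.1 = aE H j ∧ y.1 = bE H j ∧ (x.2,y.2) ∈ E j) ∨
    (∃ j : Ed H, y.1 = aE H j ∧ x.1 = bE H j ∧ (y.2,x.2) ∈ E j)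
  symm := ⟨fun _ _ h => h.symm⟩
  loopless := ⟨by
    rintro x (⟨j, h1, h2, _⟩ | ⟨j, h1, h2, _⟩) <;>
    exact absurd (h1.symm.trans h2) (abE_lt H j).ne⟩

lemma gr_sub (H : SimpleGraph (Fin k)) (E : Ed H → Finset (Fin n × Fin n)) : IsSubgraphKnH H (gr H E) := by
  rintro x y (⟨j, h1, h2, _⟩ | ⟨j, h1, h2, _⟩)
  · rw [h1, h2]; exact abE_adj H j
  · rw [h1, h2]; exact (abE_adj H j).symm

lemma tup_gr (H : SimpleGraph (Fin k)) (E : Ed H → Finset (Fin n × Fin n)) : tup H (gr H E) = E := by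
  funext j
  ext p
  rw [mem_tup]
  constructor
  · rintro (⟨i, h1, h2, h3⟩ | ⟨i, h1, h2, h3⟩)
    · rw [abE_inj H j i h1 h2]; exact h3
    · have := abE_lt H i; have h4 := abE_lt H j
      simp only at h1 h2
      rw [← h1, ← h2] at this
      exact absurd this (not_lt.2 h4.le)
  · intro h; exact Or.inl ⟨j, rfl, rfl, h⟩

lemma memFamily_iff {H : SimpleGraph (Fin k)} {m : ℕ} {G : SimpleGraph (Fin k × Fin n)} :
    MemFamily H m G ↔ IsSubgraphKnH H G ∧ ∀ j, #(tup H G j) = m := by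
  unfold MemFamily
  refine and_congr_right fun _ => ?_
  constructor
  · intro h j; rw [← pairCount_eq]; exact h _ _ (abE_adj H j)
  · intro h x y hxy
    rcases lt_trichotomy x y with h' | h' | h'
    · obtain ⟨j, rfl, rfl⟩ := exE hxy h'
      rw [pairCount_eq, h]
    · exact absurd h' hxy.ne
    · obtain ⟨j, rfl, rfl⟩ := exE hxy.symm h'
      rw [pairCount_swap, pairCount_eq, h]

lemma lrAll_iff {H : SimpleGraph (Fin k)} {m : ℕ} {G : SimpleGraph (Fin k × Fin n)} {ε lam : ℝ} (hε : 0 < ε) (hn : 0 < n)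
    (hm : ∀ j, #(tup H G j) = m) :
    (∀ i j, H.Adj i j → LowerRegularPair ε lam G i j) ↔ ∀ j, LR ε lam m (tup H G j) := by
  constructor
  · intro h j; rw [← lrp_iff hε hn j (hm j)]; exact h _ _ (abE_adj H j)
  · intro h x y hxy
    rcases lt_trichotomy x y with h' | h' | h'
    · obtain ⟨j, rfl, rfl⟩ := exE hxy h'
      exact (lrp_iff hε hn j (hm _)).2 (h _)
    · exact absurd h' hxy.ne
    · obtain ⟨j, rfl, rfl⟩ := exE hxy.symm h'
      exact lrp_swap ((lrp_iff hε hn j (hm _)).2 (h _))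

open Classical in
/-- reduction to tuples -/
lemma transfer (H : SimpleGraph (Fin k)) (m : ℕ) (ε lam x t : ℝ) (hε : 0 < ε) (hn : 0 < n) (ht : 0 ≤ t)
    (Bad : Finset (Ed H → Finset (Fin n × Fin n)))
    (hBad : ∀ E, (∀ j, #(E j) = m) → (∀ j, LR ε lam m (E j)) →
      (#(copies (aE H) (bE H) E) : ℝ) ≤ x → E ∈ Bad)
    (hle : (#Bad : ℝ) ≤ t * (#{E ∈ powersetCard m (univ : Finset (Fin n × Fin n)) | LR ε lam m E} : ℝ) ^ edgeCount H) :
    (Nat.card {G : SimpleGraph (Fin k × Fin n) //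
            MemFamily H m G ∧ (∀ i j, H.Adj i j → LowerRegularPair ε lam G i j) ∧
            (copyCount H G : ℝ) ≤ x} : ℝ) ≤ t * (Nat.card {G : SimpleGraph (Fin k × Fin n) //
              MemFamily H m G ∧ ∀ i j, H.Adj i j → LowerRegularPair ε lam G i j} : ℝ) := by
  have h1 : Nat.card {G : SimpleGraph (Fin k × Fin n) //
            MemFamily H m G ∧ (∀ i j, H.Adj i j → LowerRegularPair ε lam G i j) ∧
            (copyCount H G : ℝ) ≤ x} ≤ #Bad := by
    rw [← Fintype.card_coe, ← Nat.card_eq_fintype_card]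
    refine Nat.card_le_card_of_injective (fun G => (⟨tup H G.1, ?_⟩ : Bad)) ?_
    · obtain ⟨G, h1, h2, h3⟩ := G
      rw [memFamily_iff] at h1
      rw [lrAll_iff hε hn h1.2] at h2
      rw [copyCount_eq] at h3
      exact hBad _ h1.2 h2 h3
    · intro G G' h
      simp only [Subtype.mk.injEq] at h
      exact Subtype.ext (tup_inj G.2.1.1 G'.2.1.1 h)
  have h2 : #{E ∈ powersetCard m (univ : Finset (Fin n × Fin n)) | LR ε lam m E} ^ edgeCount H ≤
      Nat.card {G : SimpleGraph (Fin k × Fin n) //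
              MemFamily H m G ∧ ∀ i j, H.Adj i j → LowerRegularPair ε lam G i j} := by
    have e1 : #{E ∈ powersetCard m (univ : Finset (Fin n × Fin n)) | LR ε lam m E} ^ edgeCount H =
      #(Fintype.piFinset (fun _ : Ed H => {E ∈ powersetCard m (univ : Finset (Fin n × Fin n)) | LR ε lam m E})) := by
      rw [Fintype.card_piFinset, prod_const, card_univ, card_Ed]
    rw [e1, ← Fintype.card_coe, ← Nat.card_eq_fintype_card]
    refine Nat.card_le_card_of_injective (fun E => (⟨gr H E.1, ?_⟩ : {G : SimpleGraph (Fin k × Fin n) //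
              MemFamily H m G ∧ ∀ i j, H.Adj i j → LowerRegularPair ε lam G i j})) ?_
    · obtain ⟨E, hE⟩ := E
      simp only [Fintype.mem_piFinset, mem_filter, mem_powersetCard] at hE
      have hc : ∀ j, #(tup H (gr H E) j) = m := by intro j; rw [tup_gr]; exact (hE j).1.2
      refine ⟨memFamily_iff.2 ⟨gr_sub H E, hc⟩, (lrAll_iff hε hn hc).2 ?_⟩
      intro j; rw [tup_gr]; exact (hE j).2
    · intro E E' h
      simp only [Subtype.mk.injEq] at h
      apply Subtype.ext
      rw [← tup_gr H E.1, ← tup_gr H E'.1, h]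
  calc _ ≤ (#Bad : ℝ) := by exact_mod_cast h1
    _ ≤ _ := hle
    _ ≤ _ := by
      apply mul_le_mul_of_nonneg_left _ ht
      exact_mod_cast h2
end KLR

namespace KLR
section matching
variable {ι : Type} [DecidableEq ι]

lemma fiber_move (X : Finset (Fin k → Fin n)) (a b : Fin k) (hab : a ≠ b)
    (hX : ∀ φ ∈ X, ∀ u v, Function.update (Function.update φ a u) b v ∈ X) (p p' : Fin n × Fin n) :
    #{φ ∈ X | (φ a, φ b) = p} ≤ #{φ ∈ X | (φ a, φ b) = p'} := by
  apply card_le_card_of_injOn (fun φ => Function.update (Function.update φ a p'.1) b p'.2)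
  · intro φ hφ
    simp only [coe_filter, Set.mem_ofPred_eq] at hφ ⊢
    refine ⟨hX φ hφ.1 _ _, ?_⟩
    simp [Function.update_of_ne hab]
  · intro φ hφ ψ hψ h
    simp only [coe_filter, Set.mem_ofPred_eq] at hφ hψ
    have e := hφ.2.trans hψ.2.symm
    simp only [Prod.mk.injEq] at e
    funext v
    by_cases h1 : v = b
    · subst h1; exact e.2
    by_cases h2 : v = a
    · subst h2; exact e.1
    have := congrFun h v
    simpa [h1, h2] using this

lemma fiber_count (X : Finset (Fin k → Fin n)) (a b : Fin k) (hab : a ≠ b)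
    (hX : ∀ φ ∈ X, ∀ u v, Function.update (Function.update φ a u) b v ∈ X) (E : Finset (Fin n × Fin n)) :
    #{φ ∈ X | (φ a, φ b) ∈ E} * n^2 = #X * #E := by
  by_cases hU : Nonempty (Fin n × Fin n)
  · obtain ⟨p₀⟩ := hU
    set f := #{φ ∈ X | (φ a, φ b) = p₀} with hf
    have hfib : ∀ p, #{φ ∈ X | (φ a, φ b) = p} = f := fun p =>
      le_antisymm (fiber_move X a b hab hX _ _) (fiber_move X a b hab hX _ _)
    have h1 : #X = n^2 * f := by
      rw [card_eq_sum_card_fiberwise (f := fun φ => (φ a, φ b)) (t := (univ : Finset (Fin n × Fin n))) (fun _ _ => by simp)]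
      simp [hfib, sq]
    have h2 : #{φ ∈ X | (φ a, φ b) ∈ E} = #E * f := by
      rw [card_eq_sum_card_fiberwise (f := fun φ => (φ a, φ b)) (t := E) (fun φ h => by
        simp only [coe_filter, Set.mem_ofPred_eq] at h; exact h.2)]
      have : ∀ p ∈ E, #{φ ∈ {φ ∈ X | (φ a, φ b) ∈ E} | (φ a, φ b) = p} = f := by
        intro p hp
        rw [← hfib p]
        congr 1
        ext φ
        simp only [mem_filter]
        constructor
        · rintro ⟨⟨h1, _⟩, h2⟩; exact ⟨h1, h2⟩
        · rintro ⟨h1, h2⟩; exact ⟨⟨h1, h2 ▸ hp⟩, h2⟩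
      rw [sum_congr rfl this]; simp
    rw [h1, h2]; ring
  · have : E = ∅ := by
      rw [eq_empty_iff_forall_notMem]; intro p; exact absurd ⟨p⟩ hU
    subst this; simp

lemma matching_count [Fintype ι] (a b : ι → Fin k) (hab : ∀ j, a j ≠ b j)
    (hd : ∀ i j, i ≠ j → a i ≠ a j ∧ a i ≠ b j ∧ b i ≠ a j ∧ b i ≠ b j)
    (E : ι → Finset (Fin n × Fin n)) (m : ℕ) (hE : ∀ j, #(E j) = m) (L : Finset ι) :
    #{φ : Fin k → Fin n | ∀ j ∈ L, pr a b j φ ∈ E j} * (n^2)^#L = n^k * m^#L := by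
  induction L using Finset.induction_on with
  | empty => simp
  | insert j L hj ih =>
    rw [card_insert_of_notMem hj]
    set X : Finset (Fin k → Fin n) := {φ | ∀ j ∈ L, pr a b j φ ∈ E j} with hXd
    have h1 : ({φ : Fin k → Fin n | ∀ i ∈ insert j L, pr a b i φ ∈ E i} : Finset _) =
        {φ ∈ X | (φ (a j), φ (b j)) ∈ E j} := by
      ext φ
      have hx : φ ∈ X ↔ ∀ j ∈ L, pr a b j φ ∈ E j := by simp [hXd]
      rw [mem_filter, mem_filter, hx, forall_mem_insert]
      simp only [mem_univ, true_and]
      exact and_comm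
    rw [h1]
    have h2 := fiber_count X (a j) (b j) (hab j) (by
      intro φ hφ u v
      simp only [hXd, mem_filter, mem_univ, true_and] at hφ ⊢
      intro i hi
      have hij : i ≠ j := by rintro rfl; exact hj hi
      obtain ⟨d1, d2, d3, d4⟩ := hd i j hij
      have := hφ i hi
      simpa [pr, d1, d2, d3, d4] using this) (E j)
    rw [hE j] at h2
    calc _ = #{φ ∈ X | (φ (a j), φ (b j)) ∈ E j} * n^2 * (n^2)^#L := by ring
      _ = #X * m * (n^2)^#L := by rw [h2]
      _ = (#X * (n^2)^#L) * m := by ring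
      _ = _ := by rw [ih]; ring
end matching

lemma matching_copies (H : SimpleGraph (Fin k)) (hH : ∀ x y z, H.Adj x y → H.Adj x z → y = z)
    (hn : 0 < n) (E : Ed H → Finset (Fin n × Fin n)) (m : ℕ) (hm : 0 < m) (hE : ∀ j, #(E j) = m) :
    1/2 * (n:ℝ)^k * ((m:ℝ)/(n:ℝ)^2)^edgeCount H < #(copies (aE H) (bE H) E) := by
  have h := matching_count (aE H) (bE H) (fun j => (abE_lt H j).ne) (by
    intro i j hij
    have h1 := abE_adj H i
    have h2 := abE_adj H j
    have h3 := abE_lt H i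
    have h4 := abE_lt H j
    refine ⟨fun h => hij ?_, fun h => ?_, fun h => ?_, fun h => hij ?_⟩
    · exact abE_inj H i j h (hH _ _ _ (h ▸ h1) h2)
    · have := hH _ _ _ h1 (h ▸ h2.symm)
      rw [h, this] at h3
      exact absurd h3 (not_lt.2 h4.le)
    · have := hH _ _ _ h1.symm (h ▸ h2)
      rw [h, this] at h3
      exact absurd h3 (not_lt.2 h4.le)
    · exact abE_inj H i j (hH _ _ _ h1.symm (h ▸ h2.symm)) h) E m hE univ
  rw [card_univ, card_Ed] at h
  have hc : #{φ : Fin k → Fin n | ∀ j ∈ univ, pr (aE H) (bE H) j φ ∈ E j} = #(copies (aE H) (bE H) E) := by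
    unfold copies; simp
  rw [hc] at h
  have h' : (#(copies (aE H) (bE H) E) : ℝ) * ((n:ℝ)^2)^edgeCount H = (n:ℝ)^k * (m:ℝ)^edgeCount H := by
    exact_mod_cast h
  have hn' : (0:ℝ) < n := by exact_mod_cast hn
  have hm' : (0:ℝ) < m := by exact_mod_cast hm
  have h2 : (#(copies (aE H) (bE H) E) : ℝ) = (n:ℝ)^k * ((m:ℝ)/(n:ℝ)^2)^edgeCount H := by
    rw [div_pow, ← mul_div_assoc, eq_div_iff (by positivity)]; exact h'
  rw [h2]
  have : 0 < (n:ℝ)^k * ((m:ℝ)/(n:ℝ)^2)^edgeCount H := by positivity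
  linarith

section full
/-- discrepancy -/
noncomputable def fd (E : Finset (Fin n × Fin n)) (m : ℕ) (A B : Finset (Fin n)) : ℝ :=
  #(E ∩ A ×ˢ B) * (n:ℝ)^2 - m * (#A * #B)

lemma fd_left (E : Finset (Fin n × Fin n)) (m : ℕ) (A A' B : Finset (Fin n)) (h : Disjoint A A') :
    fd E m (A ∪ A') B = fd E m A B + fd E m A' B := by
  unfold fd
  rw [union_product, inter_union_distrib_left, card_union_of_disjoint, card_union_of_disjoint h]
  · push_cast; ring
  · apply disjoint_of_subset_left inter_subset_right
    apply disjoint_of_subset_right inter_subset_right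
    exact disjoint_product.2 (Or.inl h)

lemma fd_right (E : Finset (Fin n × Fin n)) (m : ℕ) (A B B' : Finset (Fin n)) (h : Disjoint B B') :
    fd E m A (B ∪ B') = fd E m A B + fd E m A B' := by
  unfold fd
  rw [product_union, inter_union_distrib_left, card_union_of_disjoint, card_union_of_disjoint h]
  · push_cast; ring
  · apply disjoint_of_subset_left inter_subset_right
    apply disjoint_of_subset_right inter_subset_right
    exact disjoint_product.2 (Or.inr h)

lemma exists_bal (hn : 4 ≤ n) (u : Fin n) : ∃ A : Finset (Fin n), u ∉ A ∧
    (1/4*(n:ℝ) ≤ #A ∧ 1/4*(n:ℝ) ≤ #Aᶜ) ∧ (1/4*(n:ℝ) ≤ #(A ∪ {u}) ∧ 1/4*(n:ℝ) ≤ #(A ∪ {u})ᶜ) := by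
  have h0 : n/2 ≤ #((univ : Finset (Fin n)).erase u) := by
    rw [card_erase_of_mem (mem_univ u), card_univ, Fintype.card_fin]; omega
  obtain ⟨A, hA, hc⟩ := exists_subset_card_eq h0
  have hu : u ∉ A := fun h => by have := hA h; simp at this
  have hc2 : #(A ∪ {u}) = n/2+1 := by
    rw [card_union_of_disjoint (by simpa using hu), hc]; simp
  have key : ∀ t : ℕ, n ≤ 4*t → 1/4*(n:ℝ) ≤ t := by
    intro t ht
    have : (n:ℝ) ≤ 4*t := by exact_mod_cast ht
    linarith
  refine ⟨A, hu, ⟨key _ ?_, key _ ?_⟩, key _ ?_, key _ ?_⟩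
  · omega
  · rw [card_compl, Fintype.card_fin]; omega
  · omega
  · rw [card_compl, Fintype.card_fin]; omega

lemma full_of_lr (lam : ℝ) (hlam : 1 ≤ lam) (hn : 4 ≤ n) (E : Finset (Fin n × Fin n)) (m : ℕ) (hm : 0 < m)
    (hE : #E = m) (h : LR (1/4) lam m E) : E = univ := by
  have hn' : (0:ℝ) < n := by exact_mod_cast (by omega : 0 < n)
  have hm' : (0:ℝ) < m := by exact_mod_cast hm
  have hnn : ∀ A B : Finset (Fin n), 1/4*(n:ℝ) ≤ #A → 1/4*(n:ℝ) ≤ #B → 0 ≤ fd E m A B := by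
    intro A B hA hB
    have := h A B hA hB
    unfold fd
    have h2 : (m:ℝ) * (#A * #B) ≤ lam * m * (#A * #B) := by
      have : 0 ≤ (m:ℝ) * (#A * #B) := by positivity
      nlinarith
    linarith
  have huniv : 1/4*(n:ℝ) ≤ #(univ : Finset (Fin n)) := by simp; linarith
  have h00 : fd E m univ univ = 0 := by
    unfold fd
    rw [univ_product_univ, inter_univ, hE, card_univ, Fintype.card_fin]; ring
  have h1 : ∀ A : Finset (Fin n), 1/4*(n:ℝ) ≤ #A → 1/4*(n:ℝ) ≤ #Aᶜ → fd E m A univ = 0 := by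
    intro A hA hA'
    have := fd_left E m A Aᶜ univ disjoint_compl_right
    rw [union_compl, h00] at this
    have := hnn A univ hA huniv
    have := hnn Aᶜ univ hA' huniv
    linarith
  have h2 : ∀ A B : Finset (Fin n), 1/4*(n:ℝ) ≤ #A → 1/4*(n:ℝ) ≤ #Aᶜ →
      1/4*(n:ℝ) ≤ #B → 1/4*(n:ℝ) ≤ #Bᶜ → fd E m A B = 0 := by
    intro A B hA hA' hB hB'
    have := fd_right E m A B Bᶜ disjoint_compl_right
    rw [union_compl, h1 A hA hA'] at this
    have := hnn A B hA hB
    have := hnn A Bᶜ hA hB'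
    linarith
  rw [eq_univ_iff_forall]
  rintro ⟨u, v⟩
  obtain ⟨A, hu, ⟨a1, a2⟩, a3, a4⟩ := exists_bal hn u
  obtain ⟨B, hv, ⟨b1, b2⟩, b3, b4⟩ := exists_bal hn v
  have hdu : Disjoint A {u} := by simpa using hu
  have hdv : Disjoint B {v} := by simpa using hv
  have e1 := fd_left E m A {u} B hdu
  rw [h2 _ _ a3 a4 b1 b2, h2 _ _ a1 a2 b1 b2] at e1
  have e2 := fd_left E m A {u} (B ∪ {v}) hdu
  rw [h2 _ _ a3 a4 b3 b4, h2 _ _ a1 a2 b3 b4] at e2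
  have e3 := fd_right E m {u} B {v} hdv
  have e4 : fd E m {u} {v} = 0 := by linarith
  by_contra hne
  unfold fd at e4
  have : E ∩ ({u} : Finset (Fin n)) ×ˢ {v} = ∅ := by
    rw [singleton_product_singleton]
    rw [← disjoint_iff_inter_eq_empty]
    simpa using hne
  rw [this] at e4
  simp at e4
  linarith

lemma full_copies (H : SimpleGraph (Fin k)) (lam : ℝ) (hlam : 1 ≤ lam)
    (hn : 4 ≤ n) (E : Ed H → Finset (Fin n × Fin n)) (m : ℕ) (hm : 0 < m) (hE : ∀ j, #(E j) = m)
    (h : ∀ j, LR (1/4) lam m (E j)) :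
    1/2 * (n:ℝ)^k * ((m:ℝ)/(n:ℝ)^2)^edgeCount H < #(copies (aE H) (bE H) E) := by
  have hn' : (0:ℝ) < n := by exact_mod_cast (by omega : 0 < n)
  have hc : copies (aE H) (bE H) E = univ := by
    rw [eq_univ_iff_forall]
    intro φ
    simp only [copies, mem_filter, mem_univ, true_and]
    intro j
    rw [full_of_lr lam hlam hn (E j) m hm (hE j) (h j)]
    exact mem_univ _
  have hp : ((m:ℝ)/(n:ℝ)^2)^edgeCount H ≤ 1 := by
    rw [← card_Ed]
    by_cases hne : Nonempty (Ed H)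
    · obtain ⟨j⟩ := hne
      apply pow_le_one₀ (by positivity)
      rw [div_le_one (by positivity)]
      have : #(E j) ≤ n^2 := by
        have := card_le_univ (E j); simpa [sq] using this
      rw [hE] at this
      exact_mod_cast this
    · rw [not_nonempty_iff] at hne
      simp
  rw [hc, card_univ]
  simp only [Fintype.card_fun, Fintype.card_fin]
  push_cast
  have : 0 < (n:ℝ)^k := by positivity
  nlinarith
end full
end KLR

namespace KLR
lemma deg_le (F : Finset (Fin k → Fin n)) (W : Finset (Fin k)) (φ₀ : Fin k → Fin n) :
    deg F W φ₀ * n ^ #W ≤ n ^ k := by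
  classical
  have h1 : deg F W φ₀ ≤ n ^ #Wᶜ := by
    unfold deg
    have : ({φ ∈ F | ∀ v ∈ W, φ v = φ₀ v} : Finset _) ⊆
        Fintype.piFinset (fun v => if v ∈ W then {φ₀ v} else univ) := by
      intro φ hφ
      rw [mem_filter] at hφ
      rw [Fintype.mem_piFinset]
      intro v
      by_cases hv : v ∈ W
      · simp [hv, hφ.2 v hv]
      · simp [hv]
    refine (card_le_card this).trans ?_
    rw [Fintype.card_piFinset]
    have e : ∀ v, #(if v ∈ W then ({φ₀ v} : Finset (Fin n)) else univ) = if v ∈ W then 1 else n := by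
      intro v; split_ifs <;> simp
    simp only [e]
    rw [prod_ite]
    simp only [prod_const, one_pow, one_mul]
    apply le_of_eq
    congr 2
    ext v; simp
  calc _ ≤ n ^ #Wᶜ * n ^ #W := Nat.mul_le_mul_right _ h1
    _ = n ^ k := by rw [← pow_add, add_comm, card_add_card_compl, Fintype.card_fin]

lemma eW_le_edge (H : SimpleGraph (Fin k)) (W : Finset (Fin k)) :
    ∃ H' : SimpleGraph (Fin k), H' ≤ H ∧ (∀ ⦃x y⦄, H'.Adj x y → x ∈ W ∧ y ∈ W) ∧
      eW (aE H) (bE H) univ W ≤ edgeCount H' := by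
  let H' : SimpleGraph (Fin k) :=
    { Adj := fun x y => H.Adj x y ∧ x ∈ W ∧ y ∈ W
      symm := ⟨fun _ _ h => ⟨h.1.symm, h.2.2, h.2.1⟩⟩
      loopless := ⟨fun _ h => H.irrefl h.1⟩ }
  refine ⟨H', fun x y h => h.1, fun x y h => h.2, ?_⟩
  rw [← card_Ed, eW, ← Fintype.card_coe, ← Nat.card_eq_fintype_card, ← Nat.card_eq_fintype_card]
  refine Nat.card_le_card_of_injective (fun j => (⟨(aE H j.1, bE H j.1), abE_lt H j.1, abE_adj H j.1, ?_⟩ : Ed H')) ?_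
  · have := j.2
    rw [mem_filter] at this
    exact this.2
  · intro i j h
    have := congrArg Subtype.val h
    simp only [Prod.mk.injEq] at this
    exact Subtype.ext (abE_inj H _ _ this.1 this.2)

lemma td_le (H : SimpleGraph (Fin k)) (W : Finset (Fin k)) (hW : 2 < #W) :
    ((eW (aE H) (bE H) univ W : ℝ) - 1) / ((#W:ℝ) - 2) ≤ twoDensity H := by
  obtain ⟨H', h1, h2, h3⟩ := eW_le_edge H W
  have hW' : (2:ℝ) < #W := by exact_mod_cast hW
  have h3' : (eW (aE H) (bE H) univ W : ℝ) ≤ edgeCount H' := by exact_mod_cast h3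
  have hle : ((edgeCount H' : ℝ) - 1) / ((#W:ℝ) - 2) ≤ twoDensity H := by
    apply le_csSup
    · refine ⟨(Nat.card (Sym2 (Fin k)) : ℝ), ?_⟩
      rintro q ⟨V', H'', _, _, hV, rfl⟩
      have hV' : (3:ℝ) ≤ #V' := by exact_mod_cast hV
      rw [div_le_iff₀ (by linarith)]
      have : edgeCount H'' ≤ Nat.card (Sym2 (Fin k)) :=
        Nat.card_le_card_of_injective _ Subtype.val_injective
      have h4 : (edgeCount H'' : ℝ) ≤ Nat.card (Sym2 (Fin k)) := by exact_mod_cast this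
      have h5 : (0:ℝ) ≤ Nat.card (Sym2 (Fin k)) := by positivity
      nlinarith
    · exact ⟨W, H', h1, h2, hW, rfl⟩
  refine le_trans ?_ hle
  apply div_le_div_of_nonneg_right _ (by linarith)
  linarith

lemma exE' {H : SimpleGraph (Fin k)} {x y : Fin k} (h : H.Adj x y) :
    ∃ j : Ed H, (aE H j = x ∧ bE H j = y) ∨ (aE H j = y ∧ bE H j = x) := by
  rcases lt_trichotomy x y with h' | h' | h'
  · obtain ⟨j, hj⟩ := exE h h'; exact ⟨j, Or.inl hj⟩
  · exact absurd h' h.ne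
  · obtain ⟨j, hj⟩ := exE h.symm h'; exact ⟨j, Or.inr hj⟩

lemma td_ge_one (H : SimpleGraph (Fin k)) (x y z : Fin k) (hxy : H.Adj x y) (hxz : H.Adj x z) (hyz : y ≠ z) :
    1 ≤ twoDensity H := by
  have hc : #({x,y,z} : Finset (Fin k)) = 3 := card_eq_three.2 ⟨x,y,z,hxy.ne,hxz.ne,hyz,rfl⟩
  have h := td_le H {x,y,z} (by omega)
  rw [hc] at h
  obtain ⟨i, hi⟩ := exE' hxy
  obtain ⟨j, hj⟩ := exE' hxz
  have hij : i ≠ j := by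
    rintro rfl
    have := hxy.ne; have := hxz.ne
    grind
  have h2 : 2 ≤ eW (aE H) (bE H) univ ({x,y,z} : Finset (Fin k)) := by
    rw [← card_pair hij]
    apply card_le_card
    intro l hl
    simp only [mem_insert, mem_singleton] at hl
    simp only [mem_filter, mem_univ, true_and, mem_insert, mem_singleton]
    grind
  have h2' : (2:ℝ) ≤ eW (aE H) (bE H) univ ({x,y,z} : Finset (Fin k)) := by exact_mod_cast h2
  refine le_trans ?_ h
  rw [le_div_iff₀ (by norm_num)]
  push_cast
  linarith

lemma eW_two (H : SimpleGraph (Fin k)) (W : Finset (Fin k)) (hW : #W ≤ 2) :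
    eW (aE H) (bE H) univ W ≤ 1 := by
  unfold eW
  rw [card_le_one]
  intro i hi j hj
  simp only [mem_filter, mem_univ, true_and] at hi hj
  have hl := abE_lt H i
  have hl' := abE_lt H j
  have hs : ({aE H i, bE H i} : Finset (Fin k)) = W := by
    apply eq_of_subset_of_card_le
    · intro v; simp only [mem_insert, mem_singleton]; rintro (rfl | rfl); exacts [hi.1, hi.2]
    · rw [card_pair hl.ne]; exact hW
  rw [← hs] at hj
  simp only [mem_insert, mem_singleton] at hj
  apply abE_inj
  · grind
  · grind

lemma two_le_W (H : SimpleGraph (Fin k)) (W : Finset (Fin k)) (h : 1 ≤ eW (aE H) (bE H) univ W) : 2 ≤ #W := by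
  obtain ⟨j, hj⟩ := card_pos.1 (lt_of_lt_of_le Nat.zero_lt_one h)
  simp only [mem_filter, mem_univ, true_and] at hj
  rw [← card_pair (abE_lt H j).ne]
  apply card_le_card
  intro v; simp only [mem_insert, mem_singleton]; rintro (rfl | rfl); exacts [hj.1, hj.2]

lemma hgood (H : SimpleGraph (Fin k)) (hH : 1 ≤ twoDensity H) (hn : 0 < n) (q : ℝ)
    (hq : (n:ℝ) ^ (-(1/twoDensity H)) ≤ q) (hq1 : q ≤ 1) (F : Finset (Fin k → Fin n)) :
    Good (aE H) (bE H) q F univ ((n:ℝ)^k/(n:ℝ)^2) := by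
  intro W hW φ₀
  have hn' : (0:ℝ) < n := by exact_mod_cast hn
  have hn1 : (1:ℝ) ≤ n := by exact_mod_cast hn
  have hq0 : 0 < q := lt_of_lt_of_le (Real.rpow_pos_of_pos hn' _) hq
  have hm0 : 0 < twoDensity H := by linarith
  have h2 := two_le_W H W hW
  have htd := td_le H W
  have h22 := eW_two H W
  set e := eW (aE H) (bE H) univ W with he
  obtain ⟨w, hw⟩ := Nat.exists_eq_add_of_le h2
  obtain ⟨e', he'⟩ := Nat.exists_eq_add_of_le hW
  have key : 1 ≤ (n:ℝ)^w * q^e' := by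
    by_cases hw0 : w = 0
    · have : e' = 0 := by have := h22 (by omega); omega
      simp [hw0, this]
    · have ht := htd (by omega)
      have hwpos : (0:ℝ) < w := by exact_mod_cast Nat.pos_of_ne_zero hw0
      have e1 : ((e:ℝ) - 1) / ((#W:ℝ) - 2) = e'/w := by
        rw [he', hw]; push_cast; congr 1 <;> ring
      rw [e1, div_le_iff₀ hwpos] at ht
      have h5 : (n:ℝ)^(-(w:ℝ)) ≤ q^e' := by
        calc (n:ℝ)^(-(w:ℝ)) ≤ (n:ℝ)^(-(1/twoDensity H) * e') := by
              apply Real.rpow_le_rpow_of_exponent_le hn1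
              have : (e':ℝ)/twoDensity H ≤ w := by rw [div_le_iff₀ hm0]; linarith
              have h6 : -(1/twoDensity H) * e' = -((e':ℝ)/twoDensity H) := by ring
              rw [h6]; linarith
          _ = ((n:ℝ)^(-(1/twoDensity H)))^e' := by
              rw [Real.rpow_mul hn'.le, Real.rpow_natCast]
          _ ≤ q^e' := by gcongr
      rw [Real.rpow_neg hn'.le, Real.rpow_natCast] at h5
      calc (1:ℝ) = (n:ℝ)^w * ((n:ℝ)^w)⁻¹ := by field_simp
        _ ≤ _ := by gcongr
  have hd := deg_le F W φ₀
  have hd' : (deg F W φ₀ : ℝ) * (n:ℝ)^#W ≤ (n:ℝ)^k := by exact_mod_cast hd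
  rw [div_mul_eq_mul_div, le_div_iff₀ (by positivity)]
  rw [hw] at hd'
  rw [he']
  calc (deg F W φ₀ : ℝ) * q * (n:ℝ)^2 ≤ (deg F W φ₀ : ℝ) * q * (n:ℝ)^2 * ((n:ℝ)^w * q^e') := by
        apply le_mul_of_one_le_right (by positivity) key
    _ = ((deg F W φ₀ : ℝ) * (n:ℝ)^(2+w)) * q^(1+e') := by ring
    _ ≤ _ := by gcongr
end KLR

namespace KLR
lemma exists_b (M : ℕ) : ∃ y τ₀ : ℝ, 0 < y ∧ y ≤ 1 ∧ 0 < τ₀ ∧ ∀ τ, 0 < τ → τ ≤ τ₀ →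
    ((1+y)*y^(-(2*τ)))^M ≤ 2 := by
  have hM : (0:ℝ) ≤ M := by positivity
  set y : ℝ := 1/(4*(M+1)) with hy
  have hy0 : 0 < y := by positivity
  have hy1 : y ≤ 1 := by rw [hy, div_le_one (by positivity)]; linarith
  have hyM : M * y ≤ 1/4 := by
    rw [hy, mul_one_div, div_le_iff₀ (by positivity)]; linarith
  set Lg : ℝ := -Real.log y with hL
  have hL0 : 0 ≤ Lg := by have := Real.log_nonpos hy0.le hy1; linarith
  refine ⟨y, 1/(8*(M+1)*(Lg+1)), hy0, hy1, by positivity, ?_⟩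
  intro τ hτ hτ0
  have h1 : 1+y ≤ Real.exp y := by have := Real.add_one_le_exp y; linarith
  have h2 : y^(-(2*τ)) = Real.exp (2*τ*Lg) := by
    rw [Real.rpow_def_of_pos hy0]; congr 1; rw [hL]; ring
  have h3 : (M:ℝ)*(2*τ*Lg) ≤ 1/4 := by
    rw [le_div_iff₀ (by positivity)] at hτ0
    have : (M:ℝ)*τ*Lg ≤ (M+1)*τ*(Lg+1) := by gcongr <;> linarith
    linarith
  calc ((1+y)*y^(-(2*τ)))^M ≤ (Real.exp y * Real.exp (2*τ*Lg))^M := by rw [h2]; gcongr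
    _ = Real.exp (M*(y+2*τ*Lg)) := by rw [← Real.exp_add, ← Real.exp_nat_mul]
    _ ≤ Real.exp (1/2) := by apply Real.exp_le_exp.2; linarith
    _ ≤ 2 := by
      have h5 : Real.exp (1/2) * Real.exp (1/2) = Real.exp 1 := by rw [← Real.exp_add]; norm_num
      have h6 := Real.exp_one_lt_d9
      nlinarith [Real.exp_pos (1/2)]

/-- the density function -/
noncomputable def dl (lam β : ℝ) (x : ℝ) : ℝ := lam/(2*Real.exp 1) * β^(2/(lam*x^2))

lemma dl_pos {lam β : ℝ} (hl : 0 < lam) (hβ : 0 < β) (x : ℝ) : 0 < dl lam β x := by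
  unfold dl
  have := Real.rpow_pos_of_pos hβ (2/(lam*x^2))
  have := Real.exp_pos 1
  positivity

lemma dl_le {lam β : ℝ} (hl : 0 < lam) (hl1 : lam ≤ 1) (hβ : 0 < β) (hβ1 : β ≤ 1) (x : ℝ) : dl lam β x ≤ 1 := by
  unfold dl
  have h1 : β^(2/(lam*x^2)) ≤ 1 := Real.rpow_le_one hβ.le hβ1 (by positivity)
  have h2 : lam/(2*Real.exp 1) ≤ 1 := by
    have := Real.add_one_le_exp (1:ℝ)
    rw [div_le_one (by positivity)]; linarith
  have h3 := Real.rpow_pos_of_pos hβ (2/(lam*x^2))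
  exact mul_le_one₀ h2 h3.le h1

lemma dl_mono {lam β : ℝ} (hl : 0 < lam) (hβ : 0 < β) (hβ1 : β ≤ 1) (x y : ℝ) (hx : 0 < x) (hxy : x ≤ y) :
    dl lam β x ≤ dl lam β y := by
  unfold dl
  apply mul_le_mul_of_nonneg_left
  · apply Real.rpow_le_rpow_of_exponent_ge hβ hβ1
    gcongr
  · positivity

lemma hit_fixed (lam β : ℝ) (hl : 0 < lam) (hβ : 0 < β) (hβ1 : β ≤ 1) (m : ℕ) (hm0 : 0 < m)
    (hm : m ≤ n^2) (hn : 0 < n) (A B : Finset (Fin n)) (hA : 0 < #A) (hB : 0 < #B)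
    (c T : Finset (Fin n × Fin n))
    (hc : (#(c ∩ A ×ˢ B) : ℝ) ≤ dl lam β (min (#A:ℝ) (#B:ℝ)/n) * (#A * #B)) :
    (#{E ∈ sup m T | ⌈lam/2*m*((#A:ℝ)*#B)/(n:ℝ)^2⌉₊ ≤ #(E ∩ ((c ∩ A ×ˢ B) \ T))} : ℝ) ≤ β^m * #(sup m T) := by
  have hcard : Fintype.card (Fin n × Fin n) = n^2 := by simp [sq]
  have hn' : (0:ℝ) < n := by exact_mod_cast hn
  have hm' : (0:ℝ) < m := by exact_mod_cast hm0
  have hA' : (0:ℝ) < #A := by exact_mod_cast hA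
  have hB' : (0:ℝ) < #B := by exact_mod_cast hB
  set x := min (#A:ℝ) (#B:ℝ)/n with hx
  have hx0 : 0 < x := div_pos (lt_min hA' hB') hn'
  set l := ⌈lam/2*m*((#A:ℝ)*#B)/(n:ℝ)^2⌉₊ with hld
  have hl0 : 0 < l := Nat.ceil_pos.2 (by positivity)
  have hlge : lam/2*m*((#A:ℝ)*#B)/(n:ℝ)^2 ≤ l := Nat.le_ceil _
  have hlge' : lam/2*m*((#A:ℝ)*#B) ≤ l * (n:ℝ)^2 := by rwa [div_le_iff₀ (by positivity)] at hlge
  set ρ := β^(2/(lam*x^2)) with hρ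
  have hρ0 : 0 < ρ := Real.rpow_pos_of_pos hβ _
  set Q := (c ∩ A ×ˢ B) \ T with hQ
  have hQc : (#Q:ℝ) ≤ lam/(2*Real.exp 1)*ρ*(#A*#B) := by
    refine le_trans ?_ hc
    exact_mod_cast card_le_card sdiff_subset
  have he := Real.exp_pos 1
  have h := cnt_hit_real (α := Fin n × Fin n) (m := m) (by rw [hcard]; exact hm) T Q disjoint_sdiff l hl0
    (by rw [hcard]; positivity) ρ (by
      rw [hcard]; push_cast
      calc Real.exp 1 * #Q * m ≤ Real.exp 1 * (lam/(2*Real.exp 1)*ρ*(#A*#B)) * m := by gcongr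
        _ = ρ * (lam/2*m*((#A:ℝ)*#B)) := by field_simp
        _ ≤ _ := by gcongr)
  refine h.trans ?_
  gcongr
  have hx2 : x^2 * (n:ℝ)^2 ≤ #A * #B := by
    have : x * n = min (#A:ℝ) (#B:ℝ) := by rw [hx]; field_simp
    calc x^2*(n:ℝ)^2 = (x*n)*(x*n) := by ring
      _ ≤ _ := by
        rw [this]
        exact mul_le_mul (min_le_left _ _) (min_le_right _ _) (by positivity) (by positivity)
  calc ρ^l = β^(2/(lam*x^2)*l) := by rw [Real.rpow_mul hβ.le, Real.rpow_natCast]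
    _ ≤ β^(m:ℝ) := by
      apply Real.rpow_le_rpow_of_exponent_ge hβ hβ1
      rw [div_mul_eq_mul_div, le_div_iff₀ (by positivity)]
      have h7 : lam/2*m*(x^2) ≤ l := by
        have : lam/2*m*(x^2*(n:ℝ)^2) ≤ l*(n:ℝ)^2 := le_trans (by gcongr) hlge'
        have hp : (0:ℝ) < (n:ℝ)^2 := by positivity
        refine le_of_mul_le_mul_right ?_ hp
        linarith
      linarith
    _ = β^m := Real.rpow_natCast _ _

lemma hit_of_lr (lam ε : ℝ) (hl : 0 < lam) (hε : 0 < ε) (m : ℕ) (hn : 0 < n) (A B : Finset (Fin n))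
    (hA : ε*n ≤ #A) (hB : ε*n ≤ #B) (c T E : Finset (Fin n × Fin n)) (hT : (#T:ℝ) ≤ lam/2*ε^2*m)
    (hcov : ∀ x ∈ E, x ∈ T ∨ x ∈ c) (hLR : LR ε lam m E) :
    ⌈lam/2*m*((#A:ℝ)*#B)/(n:ℝ)^2⌉₊ ≤ #(E ∩ ((c ∩ A ×ˢ B) \ T)) := by
  have hn' : (0:ℝ) < n := by exact_mod_cast hn
  apply Nat.ceil_le.2
  have h1 := hLR A B hA hB
  have hsub : E ∩ A ×ˢ B ⊆ (E ∩ ((c ∩ A ×ˢ B) \ T)) ∪ T := by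
    intro x hx
    rw [mem_inter] at hx
    rw [mem_union, mem_inter, mem_sdiff, mem_inter]
    have := hcov x hx.1
    tauto
  have h2 : (#(E ∩ A ×ˢ B):ℝ) ≤ #(E ∩ ((c ∩ A ×ˢ B) \ T)) + #T := by
    exact_mod_cast (card_le_card hsub).trans (card_union_le _ _)
  have h3 : ε^2*(n:ℝ)^2 ≤ #A * #B := by
    calc ε^2*(n:ℝ)^2 = (ε*n)*(ε*n) := by ring
      _ ≤ _ := mul_le_mul hA hB (by positivity) (by positivity)
  rw [div_le_iff₀ (by positivity)]
  have h4 : (#T:ℝ)*(n:ℝ)^2 ≤ lam/2*m*(#A*#B) := by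
    calc _ ≤ lam/2*ε^2*m*(n:ℝ)^2 := by gcongr
      _ = lam/2*m*(ε^2*(n:ℝ)^2) := by ring
      _ ≤ _ := by gcongr
  have h5 : (#(E ∩ A ×ˢ B):ℝ)*(n:ℝ)^2 ≤ (#(E ∩ ((c ∩ A ×ˢ B) \ T)) + #T)*(n:ℝ)^2 := by gcongr
  linarith
end KLR

namespace KLR
open Classical in
lemma core (H : SimpleGraph (Fin k)) (hH : 1 ≤ twoDensity H) (hne : Nonempty (Ed H)) (lam β : ℝ)
    (hl : 0 < lam) (hl1 : lam < 1) (hβ : 0 < β) :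
    ∃ γ ε C : ℝ, 0 < γ ∧ 0 < ε ∧ 0 < C ∧ ∀ n : ℕ, 0 < n → ∀ m : ℕ,
      C * (n : ℝ) ^ (2 - 1 / twoDensity H) ≤ (m : ℝ) →
      ∃ Bad : Finset (Ed H → Finset (Fin n × Fin n)),
        (∀ E, (∀ j, #(E j) = m) → (∀ j, LR ε lam m (E j)) →
          (#(copies (aE H) (bE H) E) : ℝ) ≤ γ * (n : ℝ) ^ k * ((m : ℝ) / (n : ℝ) ^ 2) ^ edgeCount H → E ∈ Bad) ∧
        (#Bad : ℝ) ≤ β^m *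
          (#{E ∈ powersetCard m (univ : Finset (Fin n × Fin n)) | LR ε lam m E} : ℝ) ^ edgeCount H := by
  set e := edgeCount H with he
  have hcE : Fintype.card (Ed H) = e := card_Ed H
  set β' : ℝ := min β 1 / 2^(e+1) with hβ'
  have hmin0 : 0 < min β 1 := lt_min hβ one_pos
  have hβ'0 : 0 < β' := by positivity
  have hβ'1 : β' ≤ 1 := by
    rw [hβ', div_le_one (by positivity)]
    exact (min_le_right _ _).trans (one_le_pow₀ (by norm_num))
  obtain ⟨ε, ε₀, hε, hε₀, hdense⟩ := dense_count (aE H) (bE H) (abE_lt H) (abE_inj H) (dl lam β')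
    (fun x _ => dl_pos hl hβ'0 x) (dl_le hl hl1.le hβ'0 hβ'1) (dl_mono hl hβ'0 hβ'1) k 1 one_pos
  set α : ℝ := ε₀/(4*(8*(2:ℝ)^(k+3))^e) with hα
  have hα0 : 0 < α := by positivity
  set r := ⌈(e:ℝ)/α⌉₊ with hr
  have hrα : (e:ℝ) ≤ r*α := by
    have : (e:ℝ)/α ≤ r := Nat.le_ceil _
    rwa [div_le_iff₀ hα0] at this
  obtain ⟨y, τ₀, hy0, hy1, hτ₀, hb⟩ := exists_b (e*(r+1))
  set τ : ℝ := min τ₀ (min (lam*ε^2/(4*(r+1))) (min (α/2) (1/2))) with hτ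
  have hτ0 : 0 < τ := lt_min hτ₀ (lt_min (by positivity) (lt_min (by positivity) (by norm_num)))
  have hτa : τ ≤ τ₀ := min_le_left _ _
  have hτb : τ ≤ lam*ε^2/(4*(r+1)) := (min_le_right _ _).trans (min_le_left _ _)
  have hτc : τ ≤ α/2 := (min_le_right _ _).trans ((min_le_right _ _).trans (min_le_left _ _))
  have hτd : τ ≤ 1/2 := (min_le_right _ _).trans ((min_le_right _ _).trans (min_le_right _ _))
  have hκ0 : 0 < ((1-lam)/2)^2*ε^2 := by
    have : 0 < (1-lam)/2 := by linarith
    positivity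
  refine ⟨ε₀*(τ/8)^e/2, ε, 1/τ + 4/(((1-lam)/2)^2*ε^2), by positivity, hε, by positivity, ?_⟩
  intro n hn m hm
  by_cases hmN : m ≤ n^2
  swap
  · refine ⟨∅, ?_, ?_⟩
    · intro E hE
      obtain ⟨j⟩ := hne
      have := card_le_univ (E j)
      rw [hE j] at this
      simp only [Fintype.card_prod, Fintype.card_fin] at this
      exact absurd (by rw [sq]; exact this) hmN
    · rw [card_empty]; push_cast; positivity
  have hn' : (0:ℝ) < n := by exact_mod_cast hn
  have hn1 : (1:ℝ) ≤ n := by exact_mod_cast hn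
  set X : ℝ := (n : ℝ) ^ (2 - 1 / twoDensity H) with hX
  have hXn : (n:ℝ) ≤ X := by
    calc (n:ℝ) = (n:ℝ)^(1:ℝ) := (Real.rpow_one _).symm
      _ ≤ _ := by
        apply Real.rpow_le_rpow_of_exponent_le hn1
        have : 1/twoDensity H ≤ 1 := by rw [div_le_one (by linarith)]; exact hH
        linarith
  have hX0 : 0 < X := by linarith
  have hmX : X ≤ τ*m := by
    have h1 : 1/τ*X ≤ m := by
      refine le_trans ?_ hm
      apply mul_le_mul_of_nonneg_right _ hX0.le
      have : 0 < 4/(((1-lam)/2)^2*ε^2) := by positivity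
      linarith
    rw [one_div_mul_eq_div, div_le_iff₀ hτ0] at h1
    linarith
  have hm4 : 4*(n:ℝ) ≤ ((1-lam)/2)^2*ε^2*m := by
    have h1 : 4/(((1-lam)/2)^2*ε^2)*X ≤ m := by
      refine le_trans ?_ hm
      apply mul_le_mul_of_nonneg_right _ hX0.le
      have : 0 < 1/τ := by positivity
      linarith
    rw [div_mul_eq_mul_div, div_le_iff₀ hκ0] at h1
    linarith
  have hτm1 : 1 ≤ τ*m := by linarith
  have hm0 : 0 < m := by
    rcases Nat.eq_zero_or_pos m with h | h
    · rw [h] at hτm1; simp at hτm1; linarith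
    · exact h
  have hm' : (0:ℝ) < m := by exact_mod_cast hm0
  have hmN' : (m:ℝ) ≤ (n:ℝ)^2 := by exact_mod_cast hmN
  set s := ⌈τ*(m:ℝ)⌉₊ with hs
  have hs1 : τ*m ≤ s := Nat.le_ceil _
  have hs2 : (s:ℝ) ≤ 2*τ*m := by
    have := (Nat.ceil_lt_add_one (by positivity : 0 ≤ τ*(m:ℝ))).le
    linarith
  set q : ℝ := s/(n:ℝ)^2 with hq
  have hN0 : (0:ℝ) < (n:ℝ)^2 := by positivity
  have hsq : (s:ℝ) = q*(n:ℝ)^2 := by rw [hq]; field_simp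
  have hs0 : (0:ℝ) < s := by linarith
  have hq0 : 0 < q := by positivity
  have hqα : q ≤ α := by
    rw [hq, div_le_iff₀ hN0]
    calc (s:ℝ) ≤ 2*τ*m := hs2
      _ ≤ α*m := by apply mul_le_mul_of_nonneg_right _ hm'.le; linarith
      _ ≤ _ := by gcongr
  have hq1 : q ≤ 1 := by
    rw [hq, div_le_iff₀ hN0]
    calc (s:ℝ) ≤ 2*τ*m := hs2
      _ ≤ 1*m := by apply mul_le_mul_of_nonneg_right _ hm'.le; linarith
      _ ≤ _ := by gcongr
  have hqn : (n:ℝ) ^ (-(1/twoDensity H)) ≤ q := by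
    rw [hq, le_div_iff₀ hN0]
    have : (n:ℝ) ^ (-(1/twoDensity H)) * (n:ℝ)^2 = X := by
      rw [hX, ← Real.rpow_natCast, ← Real.rpow_add hn']; congr 1; push_cast; ring
    rw [this]; linarith
  have hqτ : τ*(m/(n:ℝ)^2) ≤ q := by
    rw [hq, ← mul_div_assoc]; gcongr
  have hgood' : ∀ F, Good (n := n) (aE H) (bE H) q F univ ((n:ℝ)^k/(n:ℝ)^2) :=
    fun F => hgood H hH hn q hqn hq1 F
  have hnk : (0:ℝ) < (n:ℝ)^k := by positivity
  obtain ⟨cont, hcont⟩ := containers (aE H) (bE H) q α ε₀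
    (ε₀*(τ/8)^e/2 * (n : ℝ) ^ k * ((m : ℝ) / (n : ℝ) ^ 2) ^ e) s hn hsq hq0 hq1 hqα
    (by rw [hcE, hα]; field_simp) hgood' (by
      rw [hcE]
      have h1 : (τ/8)^e * ((m : ℝ) / (n : ℝ) ^ 2) ^ e ≤ (q/8)^e := by
        rw [← mul_pow]
        apply pow_le_pow_left₀ (by positivity)
        linarith
      have h2 : 0 < (τ/8)^e * ((m : ℝ) / (n : ℝ) ^ 2) ^ e := by positivity
      have h3 : 0 < ε₀ * (n:ℝ)^k := by positivity
      calc _ = ((τ/8)^e * ((m : ℝ) / (n : ℝ) ^ 2) ^ e)*(ε₀ * (n:ℝ)^k)/2 := by ring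
        _ < ((τ/8)^e * ((m : ℝ) / (n : ℝ) ^ 2) ^ e)*(ε₀ * (n:ℝ)^k) := half_lt_self (by positivity)
        _ ≤ _ := by gcongr) r (fun _ => univ) (by
      simp only [card_univ, Fintype.card_prod, Fintype.card_fin, sum_const, hcE, nsmul_eq_mul]
      push_cast
      calc (e:ℝ)*((n:ℝ)*n) = e*(n:ℝ)^2 := by ring
        _ ≤ (r*α)*(n:ℝ)^2 := by gcongr
        _ = _ := by ring)
  -- events
  have hev : ∀ S : Fin (r+1) → Ed H → Finset (Fin n × Fin n), ∃ p : (Ed H → Finset (Fin n × Fin n)) → Prop,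
      (#{E ∈ Fintype.piFinset (fun j => sup m (univ.biUnion fun t => S t j)) | p E} : ℝ)
        ≤ β'^m * #(Fintype.piFinset (fun j => sup m (univ.biUnion fun t => S t j))) ∧
      ∀ E, (∀ j, LR ε lam m (E j)) → (∀ t j, S t j ⊆ E j ∧ #(S t j) ≤ s) →
        (∀ j x, x ∈ E j → (∃ t, x ∈ S t j) ∨ x ∈ cont S j) →
        (#(copies (aE H) (bE H) (cont S)):ℝ) < ε₀*(n:ℝ)^k → p E := by
    intro S
    by_cases hsp : (#(copies (aE H) (bE H) (cont S)):ℝ) < ε₀*(n:ℝ)^k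
    swap
    · refine ⟨fun _ => False, ?_, fun E _ _ _ h => hsp h⟩
      simp only [filter_false, card_empty]
      rw [Nat.cast_zero]
      exact mul_nonneg (pow_nonneg hβ'0.le m) (Nat.cast_nonneg _)
    have hviol : ∃ j A B, ε*n ≤ (#A:ℝ) ∧ ε*n ≤ (#B:ℝ) ∧
        (#(cont S j ∩ A ×ˢ B):ℝ) < dl lam β' (min (#A:ℝ) (#B:ℝ)/n)*(#A*#B) := by
      by_contra hcon
      push Not at hcon
      have := hdense n hn (cont S) (fun j A B hA hB => hcon j A B hA hB) univ (by simp)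
        (fun _ => univ) (by simp) (fun _ => ⟨0, hn⟩)
      refine absurd hsp (not_lt.2 (this.trans ?_))
      apply Nat.cast_le.2
      apply card_le_card
      intro φ hφ
      simp only [mem_filter, mem_univ, true_and, copies, true_imp_iff] at hφ ⊢
      exact hφ.2.2
    obtain ⟨j, A, B, hA, hB, hv⟩ := hviol
    have hA0 : 0 < #A := by
      have : (0:ℝ) < #A := lt_of_lt_of_le (by positivity) hA
      exact_mod_cast this
    have hB0 : 0 < #B := by
      have : (0:ℝ) < #B := lt_of_lt_of_le (by positivity) hB
      exact_mod_cast this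
    set T := (univ : Finset (Fin (r+1))).biUnion (fun t => S t j) with hT
    refine ⟨fun E => ⌈lam/2*m*((#A:ℝ)*#B)/(n:ℝ)^2⌉₊ ≤ #(E j ∩ ((cont S j ∩ A ×ˢ B) \ T)), ?_, ?_⟩
    · have h1 := hit_fixed lam β' hl hβ'0 hβ'1 m hm0 hmN hn A B hA0 hB0 (cont S j) T hv.le
      have h2 := pi_hit (fun j => sup m (univ.biUnion fun t => S t j)) j
        (fun E => ⌈lam/2*m*((#A:ℝ)*#B)/(n:ℝ)^2⌉₊ ≤ #(E ∩ ((cont S j ∩ A ×ˢ B) \ T))) (β'^m) (by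
          convert h1)
      convert h2
    · intro E hLR hS hcov _
      apply hit_of_lr lam ε hl hε m hn A B hA hB (cont S j) T (E j) _ _ (hLR j)
      · have h1 : #T ≤ (r+1)*s := by
          refine card_biUnion_le.trans ?_
          refine (sum_le_sum (fun t _ => (hS t j).2)).trans ?_
          simp
        have h1' : (#T:ℝ) ≤ (r+1)*s := by exact_mod_cast h1
        rw [le_div_iff₀ (by positivity)] at hτb
        calc (#T:ℝ) ≤ (r+1)*(2*τ*m) := h1'.trans (by gcongr)
          _ = (τ*(4*(r+1)))*m/2 := by ring
          _ ≤ (lam*ε^2)*m/2 := by gcongr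
          _ = _ := by ring
      · intro x hx
        rcases hcov j x hx with ⟨t, ht⟩ | h
        · left; rw [hT, mem_biUnion]; exact ⟨t, mem_univ t, ht⟩
        · right; exact h
  choose P hP1 hP2 using hev
  set Bad : Finset (Ed H → Finset (Fin n × Fin n)) := {E | (∀ j, #(E j) = m) ∧ (∀ j, LR ε lam m (E j)) ∧
      (#(copies (aE H) (bE H) E) : ℝ) ≤ ε₀*(τ/8)^e/2 * (n : ℝ) ^ k * ((m : ℝ) / (n : ℝ) ^ 2) ^ e} with hBad
  refine ⟨Bad, fun E h1 h2 h3 => by rw [hBad, mem_filter]; exact ⟨mem_univ _, h1, h2, h3⟩, ?_⟩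
  have hcard : Fintype.card (Fin n × Fin n) = n^2 := by simp [sq]
  set bb : ℝ := (1+y)*y^(-(2*τ)) with hbb
  have hcount := union_count (α := Fin n × Fin n) (ι := Ed H) m s (r+1) y (bb^m) (β'^m) hy0 hy1 (by
    rw [hbb, mul_pow, mul_assoc]
    apply le_mul_of_one_le_right (by positivity)
    rw [← Real.rpow_natCast, ← Real.rpow_natCast, ← Real.rpow_mul hy0.le, ← Real.rpow_add hy0]
    apply Real.one_le_rpow_of_pos_of_le_one_of_nonpos hy0 hy1
    linarith) (by positivity) P hP1 Bad (by
    intro E hE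
    rw [hBad, mem_filter] at hE
    obtain ⟨_, h1, h2, h3⟩ := hE
    obtain ⟨S, hS1, hS2, hS3⟩ := hcont E h3
    exact ⟨h1, S, hS1, hP2 S E h2 hS1 (fun j x hx => hS2 j x hx (mem_univ _)) hS3⟩)
  rw [hcE, hcard] at hcount
  have hlr := lr_count ε lam hε hl hl1 m hn hmN hm4
  set LRs : ℝ := (#{E ∈ powersetCard m (univ : Finset (Fin n × Fin n)) | LR ε lam m E} : ℝ) with hLRs
  have hK : ((bb^m)^e)^(r+1) ≤ 2^m := by
    have h1 := hb τ hτ0 hτa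
    have h2 : ((bb^m)^e)^(r+1) = (bb^(e*(r+1)))^m := by rw [← pow_mul, ← pow_mul, ← pow_mul]; ring_nf
    rw [h2]
    exact pow_le_pow_left₀ (by positivity) h1 m
  have hch : (((n^2).choose m : ℕ):ℝ)^e ≤ 2^e * LRs^e := by
    rw [← mul_pow]; exact pow_le_pow_left₀ (by positivity) hlr e
  have hfin : β'^m * 2^m * 2^e ≤ β^m := by
    have h1 : β'*2 = min β 1 / 2^e := by rw [hβ', pow_succ]; field_simp
    rw [← mul_pow, h1, div_pow]
    have h2 : (2:ℝ)^e ≤ (2^e)^m := by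
      apply le_self_pow₀ (one_le_pow₀ (by norm_num)) hm0.ne'
    have h3 : (min β 1)^m ≤ β^m := pow_le_pow_left₀ hmin0.le (min_le_left _ _) m
    rw [div_mul_eq_mul_div, div_le_iff₀ (by positivity)]
    exact mul_le_mul h3 h2 (by positivity) (by positivity)
  have hLR0 : 0 ≤ LRs := Nat.cast_nonneg _
  have hbm0 : 0 ≤ β'^m := pow_nonneg hβ'0.le m
  have hbb0 : 0 ≤ bb := mul_nonneg (by linarith) (Real.rpow_nonneg hy0.le _)
  have hA1 : (((n^2).choose m : ℕ):ℝ)^e * ((bb^m)^e)^(r+1) ≤ (2^e * LRs^e) * 2^m :=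
    mul_le_mul hch hK (pow_nonneg (pow_nonneg (pow_nonneg hbb0 m) e) (r+1))
      (mul_nonneg (pow_nonneg zero_le_two e) (pow_nonneg hLR0 e))
  calc (#Bad:ℝ) ≤ _ := hcount
    _ ≤ β'^m * ((2^e * LRs^e) * 2^m) := mul_le_mul_of_nonneg_left hA1 hbm0
    _ = (β'^m * 2^m * 2^e) * LRs^e := by ring
    _ ≤ _ := mul_le_mul_of_nonneg_right hfin (pow_nonneg hLR0 e)
end KLR
/-- **K£R conjecture, weak counting version.** For every `H` and `λ, β > 0` there exist
`γ, ε, C > 0` such that for sufficiently large `n` and `m ≥ C n^(2 - 1/m₂(H))`, the conditional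
probability that `G_{n,m}^H` has at most `γ n^(v(H)) (m/n²)^(e(H))` canonical copies of `H`,
given that it is `(ε, λ)`-lower-regular, is at most `β^m` (stated in counting form). -/
theorem klr_weak_counting (k : ℕ) (H : SimpleGraph (Fin k)) (lam β : ℝ)
    (hlam : 0 < lam) (hβ : 0 < β) :
    ∃ γ ε C : ℝ, 0 < γ ∧ 0 < ε ∧ 0 < C ∧
      ∃ n₀ : ℕ, ∀ n : ℕ, n₀ ≤ n → ∀ m : ℕ,
        C * (n : ℝ) ^ (2 - 1 / twoDensity H) ≤ (m : ℝ) →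
        (Nat.card {G : SimpleGraph (Fin k × Fin n) //
            MemFamily H m G ∧ (∀ i j, H.Adj i j → LowerRegularPair ε lam G i j) ∧
            (copyCount H G : ℝ) ≤ γ * (n : ℝ) ^ k * ((m : ℝ) / (n : ℝ) ^ 2) ^ edgeCount H} : ℝ)
          ≤ β ^ m *
            (Nat.card {G : SimpleGraph (Fin k × Fin n) //
              MemFamily H m G ∧ ∀ i j, H.Adj i j → LowerRegularPair ε lam G i j} : ℝ) := by
  classical
  by_cases hmat : ∀ x y z, H.Adj x y → H.Adj x z → y = z
  · refine ⟨1/2, 1/4, 1, by norm_num, by norm_num, by norm_num, 1, ?_⟩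
    intro n hn m hm
    have hn0 : 0 < n := hn
    have hn' : (0:ℝ) < n := by exact_mod_cast hn0
    have hm0 : 0 < m := by
      have : (0:ℝ) < m := lt_of_lt_of_le (mul_pos one_pos (Real.rpow_pos_of_pos hn' _)) hm
      exact_mod_cast this
    apply KLR.transfer H m (1/4) lam _ (β^m) (by norm_num) hn0 (by positivity) ∅
    · intro E hE _ hle
      exact absurd hle (not_le.2 (KLR.matching_copies H hmat hn0 E m hm0 hE))
    · rw [card_empty, Nat.cast_zero]
      exact mul_nonneg (pow_nonneg hβ.le m) (pow_nonneg (Nat.cast_nonneg _) _)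
  · push Not at hmat
    obtain ⟨x, y, z, hxy, hxz, hyz⟩ := hmat
    have htd := KLR.td_ge_one H x y z hxy hxz hyz
    by_cases hl1 : lam < 1
    · have hne : Nonempty (KLR.Ed H) := by
        obtain ⟨j, _⟩ := KLR.exE' hxy
        exact ⟨j⟩
      obtain ⟨γ, ε, C, hγ, hε, hC, h⟩ := KLR.core H htd hne lam β hlam hl1 hβ
      refine ⟨γ, ε, C, hγ, hε, hC, 1, ?_⟩
      intro n hn m hm
      obtain ⟨Bad, hB1, hB2⟩ := h n hn m hm
      apply KLR.transfer H m ε lam _ (β^m) hε hn (pow_nonneg hβ.le m) Bad hB1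
      convert hB2
    · push Not at hl1
      refine ⟨1/2, 1/4, 1, by norm_num, by norm_num, by norm_num, 4, ?_⟩
      intro n hn m hm
      have hn0 : 0 < n := by omega
      have hn' : (0:ℝ) < n := by exact_mod_cast hn0
      have hm0 : 0 < m := by
        have : (0:ℝ) < m := lt_of_lt_of_le (mul_pos one_pos (Real.rpow_pos_of_pos hn' _)) hm
        exact_mod_cast this
      apply KLR.transfer H m (1/4) lam _ (β^m) (by norm_num) hn0 (by positivity) ∅
      · intro E hE hLR hle
        exact absurd hle (not_le.2 (KLR.full_copies H lam hl1 hn E m hm0 hE hLR))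
      · rw [card_empty, Nat.cast_zero]
        exact mul_nonneg (pow_nonneg hβ.le m) (pow_nonneg (Nat.cast_nonneg _) _)
end

section
/- For every ε with 0 < ε < 1/6 and every λ ∈ (0,1], there exists a constant C such that the following holds: let H be a graph, let G ∈ G(H, n, m, ε, λ), and let G' ⊆ G be the random subgraph formed by taking, for each edge ij of H, a uniformly random set of m' > Cn edges from G(V_i,V_j). Then, with probability tending to 1 as n → ∞, G' ∈ G(H, n, m', ε, λ/2). -/
open Finset

variable {k n : ℕ}

open Classical in
theorem aux_desc (q m : ℕ) (h : q ≤ m) (t : ℕ) :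
    q.descFactorial t * m ^ t ≤ m.descFactorial t * q ^ t := by
  induction t with
  | zero => simp
  | succ t ih =>
    rw [Nat.descFactorial_succ, Nat.descFactorial_succ, pow_succ, pow_succ]
    have h1 : (q - t) * m ≤ (m - t) * q := by
      rw [Nat.sub_mul, Nat.sub_mul, Nat.mul_comm m q]
      exact Nat.sub_le_sub_left (Nat.mul_le_mul_left t h) _
    calc (q - t) * q.descFactorial t * (m ^ t * m)
        = (q.descFactorial t * m ^ t) * ((q - t) * m) := by ring
      _ ≤ (m.descFactorial t * q ^ t) * ((m - t) * q) := Nat.mul_le_mul ih h1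
      _ = _ := by ring

theorem aux_choose (q m : ℕ) (h : q ≤ m) (t : ℕ) :
    q.choose t * m ^ t ≤ m.choose t * q ^ t := by
  have := aux_desc q m h t
  rw [Nat.descFactorial_eq_factorial_mul_choose, Nat.descFactorial_eq_factorial_mul_choose,
    mul_assoc, mul_assoc] at this
  exact Nat.le_of_mul_le_mul_left this (Nat.factorial_pos t)

open Classical in
theorem aux_super {α : Type*} (E T : Finset α) (hT : T ⊆ E) (s : ℕ) :
    ((E.powersetCard s).filter (fun S => T ⊆ S)).card ≤ (E.card - T.card).choose (s - T.card) := by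
  rw [← Finset.card_sdiff_of_subset hT, ← Finset.card_powersetCard]
  apply Finset.card_le_card_of_injOn (fun S => S \ T)
  · intro S hS
    simp only [Finset.coe_filter, Finset.mem_powersetCard, Set.mem_ofPred_eq] at hS
    obtain ⟨⟨h1, h2⟩, h3⟩ := hS
    simp only [Finset.mem_coe, Finset.mem_powersetCard]
    exact ⟨Finset.sdiff_subset_sdiff h1 le_rfl, by rw [Finset.card_sdiff_of_subset h3, h2]⟩
  · intro S hS S' hS' h
    simp only [Finset.coe_filter, Finset.mem_powersetCard, Set.mem_ofPred_eq] at hS hS'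
    simp only at h
    rw [← Finset.sdiff_union_of_subset hS.2, h, Finset.sdiff_union_of_subset hS'.2]

open Classical in
theorem aux_sum {α : Type*} (E Q : Finset α) (hQ : Q ⊆ E) (s : ℕ) (hs : s ≤ E.card)
    (hE : 0 < E.card) :
    ∑ S ∈ E.powersetCard s, (2 : ℝ) ^ (S ∩ Q).card ≤
      (E.card.choose s : ℝ) * (1 + (Q.card : ℝ) / E.card) ^ s := by
  have h1 : ∑ S ∈ E.powersetCard s, 2 ^ (S ∩ Q).card
      = ∑ T ∈ Q.powerset, ((E.powersetCard s).filter (fun S => T ⊆ S)).card := by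
    refine Eq.trans ?_ (Finset.sum_card_bipartiteAbove_eq_sum_card_bipartiteBelow
      (fun S T : Finset α => T ⊆ S))
    apply Finset.sum_congr rfl
    intro S _
    rw [← Finset.card_powerset]
    congr 1
    ext T
    simp only [Finset.bipartiteAbove, Finset.mem_powerset, Finset.mem_filter,
      Finset.subset_inter_iff, and_comm]
  have h2 : ∑ T ∈ Q.powerset, ((E.powersetCard s).filter (fun S => T ⊆ S)).card
      ≤ ∑ T ∈ Q.powerset, (if T.card ≤ s then (E.card - T.card).choose (s - T.card) else 0) := by
    apply Finset.sum_le_sum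
    intro T hT
    split_ifs with h
    · exact aux_super E T ((Finset.mem_powerset.1 hT).trans hQ) s
    · rw [Nat.le_zero, Finset.card_eq_zero, Finset.filter_eq_empty_iff]
      intro S hS hTS
      rw [Finset.mem_powersetCard] at hS
      exact h (hS.2 ▸ Finset.card_le_card hTS)
  have h3 : ∑ T ∈ Q.powerset, (if T.card ≤ s then (E.card - T.card).choose (s - T.card) else 0)
      = ∑ t ∈ Finset.range (Q.card + 1),
        Q.card.choose t * (if t ≤ s then (E.card - t).choose (s - t) else 0) := by
    rw [Finset.sum_powerset_apply_card
      (fun t => if t ≤ s then (E.card - t).choose (s - t) else 0)]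
    simp
  have h4 : ∀ t ∈ Finset.range (Q.card + 1),
      ((Q.card.choose t * (if t ≤ s then (E.card - t).choose (s - t) else 0) : ℕ) : ℝ)
      ≤ (E.card.choose s : ℝ) * (((Q.card : ℝ) / E.card) ^ t * (s.choose t : ℝ)) := by
    intro t _
    split_ifs with h
    · have e1 := Nat.choose_mul (n := E.card) h
      have e2 := aux_choose Q.card E.card (Finset.card_le_card hQ) t
      have hE' : (0 : ℝ) < (E.card : ℝ) ^ t := by positivity
      have e1' : (E.card.choose s : ℝ) * s.choose t
        = E.card.choose t * (E.card - t).choose (s - t) := by exact_mod_cast e1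
      have e2' : (Q.card.choose t : ℝ) * E.card ^ t ≤ E.card.choose t * Q.card ^ t := by
        exact_mod_cast e2
      rw [div_pow, mul_left_comm, e1', div_mul_eq_mul_div, le_div_iff₀ hE']
      push_cast
      calc _ = ((Q.card.choose t : ℝ) * E.card ^ t) * ((E.card - t).choose (s - t) : ℕ) := by ring
        _ ≤ (E.card.choose t * Q.card ^ t) * ((E.card - t).choose (s - t) : ℕ) := by gcongr
        _ = _ := by ring
    · simp only [mul_zero, Nat.cast_zero]; positivity
  have h5 : (∑ S ∈ E.powersetCard s, (2 : ℝ) ^ (S ∩ Q).card)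
      = ((∑ S ∈ E.powersetCard s, 2 ^ (S ∩ Q).card : ℕ) : ℝ) := by push_cast; rfl
  rw [h5, h1]
  refine (Nat.cast_le.2 h2).trans ?_
  rw [h3, Nat.cast_sum]
  refine (Finset.sum_le_sum h4).trans ?_
  rw [← Finset.mul_sum]
  gcongr
  rw [add_comm (1 : ℝ), add_pow]
  simp only [one_pow, mul_one]
  have hz : ∀ N, ∑ t ∈ Finset.range N, ((Q.card : ℝ) / E.card) ^ t * (s.choose t : ℝ)
      ≤ ∑ t ∈ Finset.range (N + (s + 1)), ((Q.card : ℝ) / E.card) ^ t * (s.choose t : ℝ) := by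
    intro N
    apply Finset.sum_le_sum_of_subset_of_nonneg
    · intro a ha; simp at *; omega
    · intros; positivity
  refine (hz _).trans (le_of_eq ?_)
  symm
  apply Finset.sum_subset
  · intro a ha; simp at *; omega
  · intro a _ ha
    rw [Nat.choose_eq_zero_of_lt (by simpa using ha)]; simp

open Classical in
theorem aux_tail {α : Type*} (E F : Finset α) (hF : F ⊆ E) (s : ℕ) (p : ℝ) (hp0 : 0 ≤ p)
    (hp1 : p ≤ 1) (hp : p * E.card ≤ F.card) :
    (((E.powersetCard s).filter (fun S => ((S ∩ F).card : ℝ) < p / 2 * s)).card : ℝ)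
      ≤ Real.exp (-(0.15 * p * s)) * E.card.choose s := by
  by_cases hs : s ≤ E.card
  swap
  · rw [Finset.powersetCard_eq_empty.2 (by omega)]
    simp; positivity
  rcases Nat.eq_zero_or_pos s with rfl | hs0
  · rw [Finset.filter_false_of_mem]
    · simp
    · intro S _
      simp
  have hE : 0 < E.card := by omega
  have hE' : (0 : ℝ) < E.card := by exact_mod_cast hE
  have hsum := aux_sum E (E \ F) Finset.sdiff_subset s hs hE
  have hq : (((E \ F).card : ℝ)) / E.card ≤ 1 - p := by
    rw [div_le_iff₀ hE', Finset.card_sdiff_of_subset hF, Nat.cast_sub (Finset.card_le_card hF)]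
    linarith
  set X := (E.powersetCard s).filter (fun S => ((S ∩ F).card : ℝ) < p / 2 * s) with hX
  have hlow : (X.card : ℝ) * Real.exp (Real.log 2 * ((1 - p / 2) * s))
      ≤ ∑ S ∈ E.powersetCard s, (2 : ℝ) ^ (S ∩ (E \ F)).card := by
    calc (X.card : ℝ) * Real.exp (Real.log 2 * ((1 - p / 2) * s))
        = ∑ S ∈ X, Real.exp (Real.log 2 * ((1 - p / 2) * s)) := by simp
      _ ≤ ∑ S ∈ X, (2 : ℝ) ^ (S ∩ (E \ F)).card := by
        apply Finset.sum_le_sum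
        intro S hS
        rw [hX, Finset.mem_filter, Finset.mem_powersetCard] at hS
        obtain ⟨⟨h1, h2⟩, h3⟩ := hS
        have e : (2 : ℝ) ^ (S ∩ (E \ F)).card
            = Real.exp (Real.log 2 * ((S ∩ (E \ F)).card : ℝ)) := by
          rw [mul_comm, Real.exp_nat_mul, Real.exp_log (by norm_num)]
        rw [e]
        have hc : S ∩ (E \ F) = S \ F := by
          ext x; simp only [Finset.mem_inter, Finset.mem_sdiff]
          exact ⟨fun h => ⟨h.1, h.2.2⟩, fun h => ⟨h.1, h1 h.1, h.2⟩⟩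
        have hc2 : ((S \ F).card : ℝ) + (S ∩ F).card = s := by
          rw [← h2]; exact_mod_cast Finset.card_sdiff_add_card_inter S F
        rw [hc]
        have := Real.log_pos (show (1 : ℝ) < 2 by norm_num)
        gcongr
        linarith
      _ ≤ _ := by
        apply Finset.sum_le_sum_of_subset_of_nonneg (Finset.filter_subset _ _)
        intros; positivity
  have hup : (1 + ((E \ F).card : ℝ) / E.card) ^ s ≤ Real.exp (Real.log 2 * s - p / 2 * s) := by
    have : 1 + ((E \ F).card : ℝ) / E.card ≤ Real.exp (Real.log 2 - p / 2) := by
      rw [sub_eq_add_neg, Real.exp_add, Real.exp_log (by norm_num)]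
      have := Real.add_one_le_exp (-(p / 2))
      linarith
    calc _ ≤ (Real.exp (Real.log 2 - p / 2)) ^ s := by gcongr
      _ = _ := by rw [← Real.exp_nat_mul]; ring_nf
  have hfin : (X.card : ℝ) * Real.exp (Real.log 2 * ((1 - p / 2) * s))
      ≤ E.card.choose s * Real.exp (Real.log 2 * s - p / 2 * s) :=
    hlow.trans (hsum.trans (by gcongr))
  rw [← le_div_iff₀ (Real.exp_pos _), mul_div_assoc, ← Real.exp_sub] at hfin
  refine hfin.trans ?_
  rw [mul_comm]
  gcongr
  have hl : Real.log 2 < 0.7 := by have := Real.log_two_lt_d9; linarith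
  have hps : 0 ≤ p * s := by positivity
  nlinarith

open Classical in
noncomputable def eset (G : SimpleGraph (Fin k × Fin n)) (i j : Fin k) :
    Finset (Fin n × Fin n) :=
  Finset.univ.filter (fun p => G.Adj (i, p.1) (j, p.2))

theorem mem_eset (G : SimpleGraph (Fin k × Fin n)) (i j : Fin k) (p : Fin n × Fin n) :
    p ∈ eset G i j ↔ G.Adj (i, p.1) (j, p.2) := by simp [eset]

theorem pairCount_eq (G : SimpleGraph (Fin k × Fin n)) (i j : Fin k) :
    pairCount G i j = (eset G i j).card := by
  classical
  rw [pairCount, Nat.card_eq_fintype_card, Fintype.card_subtype, eset]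

theorem pairCountIn_eq (G : SimpleGraph (Fin k × Fin n)) (i j : Fin k) (A B : Finset (Fin n)) :
    pairCountIn G i j A B = (eset G i j ∩ A ×ˢ B).card := by
  classical
  rw [pairCountIn, Nat.card_eq_fintype_card, Fintype.card_subtype]
  congr 1
  ext p
  simp only [Finset.mem_filter, Finset.mem_univ, true_and, Finset.mem_inter, mem_eset,
    Finset.mem_product]
  tauto

/-- Replace the edges between two classes. -/
def repl (G : SimpleGraph (Fin k × Fin n)) (i j : Fin k) (hij : i ≠ j)
    (T : Finset (Fin n × Fin n)) : SimpleGraph (Fin k × Fin n) where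
  Adj x y := (x.1 = i ∧ y.1 = j ∧ (x.2, y.2) ∈ T) ∨ (x.1 = j ∧ y.1 = i ∧ (y.2, x.2) ∈ T) ∨
    (¬ (x.1 = i ∧ y.1 = j) ∧ ¬ (x.1 = j ∧ y.1 = i) ∧ G.Adj x y)
  symm := ⟨by
    intro x y h
    have := G.adj_comm x y
    tauto⟩
  loopless := ⟨by
    intro x h
    rcases h with ⟨h1, h2, _⟩ | ⟨h1, h2, _⟩ | ⟨_, _, h⟩
    · exact hij (h1.symm.trans h2)
    · exact hij (h2.symm.trans h1)
    · exact G.loopless.irrefl _ h⟩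

theorem eset_repl (G : SimpleGraph (Fin k × Fin n)) (i j : Fin k) (hij : i ≠ j)
    (T : Finset (Fin n × Fin n)) : eset (repl G i j hij T) i j = T := by
  ext p
  simp [mem_eset, repl, hij]

theorem repl_repl (G : SimpleGraph (Fin k × Fin n)) (i j : Fin k) (hij : i ≠ j)
    (T : Finset (Fin n × Fin n)) :
    repl (repl G i j hij T) i j hij (eset G i j) = G := by
  ext ⟨a, u⟩ ⟨b, v⟩
  simp only [repl, mem_eset]
  by_cases h1 : a = i ∧ b = j
  · obtain ⟨rfl, rfl⟩ := h1
    simp [hij]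
  · by_cases h2 : a = j ∧ b = i
    · obtain ⟨rfl, rfl⟩ := h2
      simp [hij, G.adj_comm]
    · have h1' : ∀ P, ¬ (a = i ∧ b = j ∧ P) := fun P h => h1 ⟨h.1, h.2.1⟩
      have h2' : ∀ P, ¬ (a = j ∧ b = i ∧ P) := fun P h => h2 ⟨h.1, h.2.1⟩
      tauto

theorem repl_le (G G' : SimpleGraph (Fin k × Fin n)) (i j : Fin k) (hij : i ≠ j)
    (T : Finset (Fin n × Fin n)) (hT : T ⊆ eset G i j) (h : G' ≤ G) : repl G' i j hij T ≤ G := by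
  rintro ⟨a, u⟩ ⟨b, v⟩ hh
  simp only [repl] at hh
  rcases hh with ⟨rfl, rfl, h1⟩ | ⟨rfl, rfl, h1⟩ | ⟨_, _, h1⟩
  · exact (mem_eset _ _ _ _).1 (hT h1)
  · exact ((mem_eset _ _ _ _).1 (hT h1)).symm
  · exact h h1

theorem pairCount_comm (G : SimpleGraph (Fin k × Fin n)) (i j : Fin k) :
    pairCount G i j = pairCount G j i := by
  rw [pairCount, pairCount]
  apply Nat.card_congr
  refine (Equiv.prodComm _ _).subtypeEquiv ?_
  intro p
  simp [G.adj_comm]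

theorem pairCount_repl (G : SimpleGraph (Fin k × Fin n)) (i j : Fin k) (hij : i ≠ j)
    (T : Finset (Fin n × Fin n)) (a b : Fin k) (hT : T.card = pairCount G a b) 
    (hT' : T.card = pairCount G i j) : 
    pairCount (repl G i j hij T) a b = pairCount G a b := by
  by_cases h1 : a = i ∧ b = j
  · obtain ⟨rfl, rfl⟩ := h1
    rw [pairCount_eq, eset_repl, hT]
  · by_cases h2 : a = j ∧ b = i
    · obtain ⟨rfl, rfl⟩ := h2
      rw [pairCount_comm, pairCount_eq, eset_repl, hT]
    · rw [pairCount_eq, pairCount_eq]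
      congr 1
      ext p
      have h1' : ∀ P, ¬ (a = i ∧ b = j ∧ P) := fun P h => h1 ⟨h.1, h.2.1⟩
      have h2' : ∀ P, ¬ (a = j ∧ b = i ∧ P) := fun P h => h2 ⟨h.1, h.2.1⟩
      simp only [mem_eset, repl]
      tauto

open Classical in
noncomputable def fam (H : SimpleGraph (Fin k)) (G : SimpleGraph (Fin k × Fin n)) (s : ℕ) :
    Finset (SimpleGraph (Fin k × Fin n)) :=
  Finset.univ.filter (fun G' => G' ≤ G ∧ ∀ i j, H.Adj i j → pairCount G' i j = s)

theorem mem_fam (H : SimpleGraph (Fin k)) (G G' : SimpleGraph (Fin k × Fin n)) (s : ℕ) :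
    G' ∈ fam H G s ↔ G' ≤ G ∧ ∀ i j, H.Adj i j → pairCount G' i j = s := by simp [fam]

open Classical in
theorem fam_bad (H : SimpleGraph (Fin k)) (G : SimpleGraph (Fin k × Fin n)) (s : ℕ)
    (i j : Fin k) (hij : H.Adj i j) (P : Finset (Fin n × Fin n) → Prop) :
    ((fam H G s).filter (fun G' => P (eset G' i j))).card * (eset G i j).card.choose s
      ≤ (((eset G i j).powersetCard s).filter P).card * (fam H G s).card := by
  rw [← Finset.card_powersetCard, ← Finset.card_product, ← Finset.card_product]
  apply Finset.card_le_card_of_injOn (fun x => (eset x.1 i j, repl x.1 i j hij.ne x.2))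
  · rintro ⟨G', T⟩ h
    simp only [Finset.coe_product, Set.mem_prod, Finset.mem_coe, Finset.mem_filter, mem_fam,
      Finset.mem_powersetCard] at h ⊢
    obtain ⟨⟨⟨h1, h2⟩, h3⟩, h4, h5⟩ := h
    refine ⟨⟨⟨?_, ?_⟩, h3⟩, repl_le _ _ _ _ _ _ h4 h1, ?_⟩
    · intro p hp
      rw [mem_eset] at *
      exact h1 hp
    · rw [← pairCount_eq, h2 _ _ hij]
    · intro a b hab
      rw [pairCount_repl, h2 _ _ hab]
      · rw [h2 _ _ hab, h5]
      · rw [h2 _ _ hij, h5]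
  · rintro ⟨G', T⟩ _ ⟨G'', T'⟩ _ h
    simp only [Prod.mk.injEq] at h
    obtain ⟨h1, h2⟩ := h
    have e1 : T = T' := by
      rw [← eset_repl G' i j hij.ne T, h2, eset_repl]
    have e2 : G' = G'' := by
      rw [← repl_repl G' i j hij.ne T, h1, h2, repl_repl]
    rw [e1, e2]

open Classical in
theorem fam_pair (ε lam : ℝ) (hε : 0 < ε) (hlam : 0 < lam) (hlam' : lam ≤ 1)
    (H : SimpleGraph (Fin k)) (G : SimpleGraph (Fin k × Fin n)) (hn : 0 < n) (s : ℕ)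
    {i j : Fin k} (hs : s ≤ (eset G i j).card)
    (hij : H.Adj i j) (hreg : LowerRegularPair ε lam G i j) (A B : Finset (Fin n))
    (hA : ε * n ≤ A.card) (hB : ε * n ≤ B.card) :
    (((fam H G s).filter (fun G' => density G' i j A B <
        lam / 2 * density G' i j Finset.univ Finset.univ)).card : ℝ)
      ≤ Real.exp (-(0.15 * (lam * ε ^ 2) * s)) * (fam H G s).card := by
  have hn' : (0 : ℝ) < n := by exact_mod_cast hn
  have hA0 : (0 : ℝ) < A.card := lt_of_lt_of_le (by positivity) hA
  have hB0 : (0 : ℝ) < B.card := lt_of_lt_of_le (by positivity) hB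
  have hAn : (A.card : ℝ) ≤ n := by exact_mod_cast (Finset.card_le_univ A).trans (by simp)
  have hBn : (B.card : ℝ) ≤ n := by exact_mod_cast (Finset.card_le_univ B).trans (by simp)
  set E := eset G i j with hE
  set p : ℝ := lam * (A.card * B.card) / (n * n) with hpdef
  have hp0 : 0 ≤ p := by positivity
  have hp1 : p ≤ 1 := by
    rw [hpdef, div_le_one (by positivity)]
    calc lam * (A.card * B.card) ≤ 1 * (n * n) := by gcongr
      _ = _ := one_mul _
  have hpl : lam * ε ^ 2 ≤ p := by
    rw [hpdef, le_div_iff₀ (by positivity)]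
    calc lam * ε ^ 2 * (n * n) = lam * ((ε * n) * (ε * n)) := by ring
      _ ≤ _ := by gcongr
  have hdU : ∀ G' : SimpleGraph (Fin k × Fin n), density G' i j Finset.univ Finset.univ
      = (eset G' i j).card / (n * n) := by
    intro G'
    rw [density, pairCountIn_eq]
    simp
  have hpF : p * E.card ≤ (E ∩ A ×ˢ B).card := by
    have := hreg A B hA hB
    rw [hdU, density, pairCountIn_eq, le_div_iff₀ (by positivity)] at this
    refine le_trans (le_of_eq ?_) this
    rw [hpdef]; ring
  have htail := aux_tail E (E ∩ A ×ˢ B) Finset.inter_subset_left s p hp0 hp1 hpF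
  have hb := fam_bad H G s i j hij (fun S => ((S ∩ (E ∩ A ×ˢ B)).card : ℝ) < p / 2 * s)
  have hsub : (fam H G s).filter (fun G' => density G' i j A B <
        lam / 2 * density G' i j Finset.univ Finset.univ) ⊆
      (fam H G s).filter (fun G' => ((eset G' i j ∩ (E ∩ A ×ˢ B)).card : ℝ) < p / 2 * s) := by
    intro G' h
    rw [Finset.mem_filter] at h ⊢
    refine ⟨h.1, ?_⟩
    have h1 := (mem_fam _ _ _ _).1 h.1
    have h2 := h.2
    rw [hdU, density, pairCountIn_eq, div_lt_iff₀ (by positivity), ← pairCount_eq,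
      h1.2 _ _ hij] at h2
    refine lt_of_le_of_lt ?_ (h2.trans_eq ?_)
    · exact_mod_cast Finset.card_le_card
        (Finset.inter_subset_inter le_rfl Finset.inter_subset_right)
    · rw [hpdef]; ring
  have hc : (0 : ℝ) < E.card.choose s := by exact_mod_cast Nat.choose_pos hs
  have hb' : (((fam H G s).filter (fun G' =>
      ((eset G' i j ∩ (E ∩ A ×ˢ B)).card : ℝ) < p / 2 * s)).card : ℝ) * E.card.choose s
      ≤ ((E.powersetCard s).filter
        (fun S => ((S ∩ (E ∩ A ×ˢ B)).card : ℝ) < p / 2 * s)).card * (fam H G s).card := by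
    exact_mod_cast hb
  have h1 : (((fam H G s).filter (fun G' => density G' i j A B <
        lam / 2 * density G' i j Finset.univ Finset.univ)).card : ℝ) ≤
        ((fam H G s).filter (fun G' =>
      ((eset G' i j ∩ (E ∩ A ×ˢ B)).card : ℝ) < p / 2 * s)).card := by
    exact_mod_cast Finset.card_le_card hsub
  refine h1.trans ?_
  refine le_of_mul_le_mul_right ?_ hc
  refine hb'.trans ?_
  have h2 : Real.exp (-(0.15 * p * s)) ≤ Real.exp (-(0.15 * (lam * ε ^ 2) * s)) := by gcongr
  have h3 := mul_le_mul_of_nonneg_right (htail.trans (mul_le_mul_of_nonneg_right h2 hc.le))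
    (Nat.cast_nonneg (α := ℝ) (fam H G s).card)
  have h4 : ∀ a b c : ℝ, a * b * c = a * c * b := fun a b c => by ring
  rw [h4 _ ((E.card.choose s : ℕ) : ℝ)] at h3
  convert h3

/-- **Lemma 3.1.** For all `0 < ε < 1/6` and `λ ∈ (0,1]` there exists `C` such that: for
`G ∈ 𝒢(H, n, m, ε, λ)`, if `G' ⊆ G` is formed by taking a uniformly random set of `m' > Cn`
edges from each `G(V_i, V_j)`, then with high probability (as `n → ∞`)
`G' ∈ 𝒢(H, n, m', ε, λ/2)`. Stated in counting form: for every `ρ > 0`, for all large `n`,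
the proportion of such subgraphs `G'` that fail to be `(ε, λ/2)`-lower-regular is at most `ρ`. -/
theorem edge_subgraph (ε lam : ℝ) (hε : 0 < ε) (hε' : ε < 1 / 6)
    (hlam : 0 < lam) (hlam' : lam ≤ 1) :
    ∃ C : ℝ, ∀ (k : ℕ) (H : SimpleGraph (Fin k)), ∀ ρ : ℝ, 0 < ρ →
      ∃ n₀ : ℕ, ∀ n : ℕ, n₀ ≤ n → ∀ m m' : ℕ, C * (n : ℝ) < (m' : ℝ) →
        ∀ G : SimpleGraph (Fin k × Fin n),
          MemFamily H m G → (∀ i j, H.Adj i j → LowerRegularPair ε lam G i j) →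
          (Nat.card {G' : SimpleGraph (Fin k × Fin n) //
              (G' ≤ G ∧ ∀ i j, H.Adj i j → pairCount G' i j = m') ∧
              ¬ (∀ i j, H.Adj i j → LowerRegularPair ε (lam / 2) G' i j)} : ℝ)
            ≤ ρ * (Nat.card {G' : SimpleGraph (Fin k × Fin n) //
                G' ≤ G ∧ ∀ i j, H.Adj i j → pairCount G' i j = m'} : ℝ) := by
  refine ⟨20 / (lam * ε ^ 2), ?_⟩
  intro k H ρ hρ
  have hlim : Filter.Tendsto (fun n : ℕ => ((k : ℝ) * k) * (1 / 2 : ℝ) ^ n) Filter.atTop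
      (nhds 0) := by
    have := (tendsto_pow_atTop_nhds_zero_of_lt_one (r := (1 / 2 : ℝ)) (by norm_num)
      (by norm_num)).const_mul ((k : ℝ) * k)
    simpa using this
  obtain ⟨N, hN⟩ := Filter.eventually_atTop.1 (hlim.eventually (gt_mem_nhds hρ))
  refine ⟨N + 1, ?_⟩
  intro n hn m m' hm' G hG hreg
  classical
  have hn0 : 0 < n := by omega
  rw [Nat.card_eq_fintype_card, Nat.card_eq_fintype_card, Fintype.card_subtype,
    Fintype.card_subtype]
  have hfam : (Finset.univ.filter (fun G' : SimpleGraph (Fin k × Fin n) =>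
      G' ≤ G ∧ ∀ i j, H.Adj i j → pairCount G' i j = m')) = fam H G m' := by
    ext; simp [fam]
  rw [hfam]
  set W : Finset ((Fin k × Fin k) × (Finset (Fin n) × Finset (Fin n))) :=
    Finset.univ.filter (fun w => H.Adj w.1.1 w.1.2 ∧ ε * n ≤ w.2.1.card ∧ ε * n ≤ w.2.2.card)
    with hW
  have hsub : (Finset.univ.filter (fun G' : SimpleGraph (Fin k × Fin n) =>
      (G' ≤ G ∧ ∀ i j, H.Adj i j → pairCount G' i j = m') ∧
      ¬ (∀ i j, H.Adj i j → LowerRegularPair ε (lam / 2) G' i j))) ⊆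
      W.biUnion (fun w => (fam H G m').filter (fun G' => density G' w.1.1 w.1.2 w.2.1 w.2.2 <
        lam / 2 * density G' w.1.1 w.1.2 Finset.univ Finset.univ)) := by
    intro G' h
    rw [Finset.mem_filter] at h
    obtain ⟨_, h1, h2⟩ := h
    unfold LowerRegularPair at h2
    push Not at h2
    obtain ⟨i, j, hij, A, B, hA, hB, hlt⟩ := h2
    rw [Finset.mem_biUnion]
    refine ⟨((i, j), (A, B)), ?_, ?_⟩
    · rw [hW, Finset.mem_filter]; exact ⟨Finset.mem_univ _, hij, hA, hB⟩
    · rw [Finset.mem_filter, mem_fam]; exact ⟨h1, hlt⟩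
  have hcl : 0 < lam * ε ^ 2 := by positivity
  have hexp : Real.exp (-(0.15 * (lam * ε ^ 2) * m')) ≤ (1 / 8 : ℝ) ^ n := by
    have h1 : 20 * (n : ℝ) < lam * ε ^ 2 * m' := by
      rw [div_mul_eq_mul_div, div_lt_iff₀ hcl] at hm'
      linarith
    have h2 : Real.exp (-3) ≤ 1 / 8 := by
      have h3 : (2 : ℝ) ≤ Real.exp 1 := by have := Real.add_one_le_exp (1 : ℝ); linarith
      have h4 : Real.exp 3 = Real.exp 1 ^ 3 := by rw [← Real.exp_nat_mul]; norm_num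
      rw [Real.exp_neg, h4, inv_eq_one_div]
      apply one_div_le_one_div_of_le (by norm_num)
      calc (8 : ℝ) = 2 ^ 3 := by norm_num
        _ ≤ _ := by gcongr
    calc _ ≤ Real.exp (n * (-3)) := by
          apply Real.exp_le_exp.2; linarith
      _ = Real.exp (-3) ^ n := Real.exp_nat_mul _ _
      _ ≤ _ := by gcongr
  have hterm : ∀ w ∈ W, (((fam H G m').filter (fun G' => density G' w.1.1 w.1.2 w.2.1 w.2.2 <
        lam / 2 * density G' w.1.1 w.1.2 Finset.univ Finset.univ)).card : ℝ)
      ≤ (1 / 8 : ℝ) ^ n * (fam H G m').card := by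
    intro w hw
    rw [hW, Finset.mem_filter] at hw
    obtain ⟨_, hij, hA, hB⟩ := hw
    by_cases hs : m' ≤ (eset G w.1.1 w.1.2).card
    · refine (fam_pair ε lam hε hlam hlam' H G hn0 m' hs hij (hreg _ _ hij) _ _ hA hB).trans ?_
      gcongr
    · have : fam H G m' = ∅ := by
        rw [Finset.eq_empty_iff_forall_notMem]
        intro G' hG'
        rw [mem_fam] at hG'
        apply hs
        rw [← hG'.2 _ _ hij, pairCount_eq]
        apply Finset.card_le_card
        intro p hp
        rw [mem_eset] at *
        exact hG'.1 hp
      rw [this]; simp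
  have hWc : (W.card : ℝ) ≤ (k * k) * (4 : ℝ) ^ n := by
    have h1 : W.card ≤ (k * k) * (2 ^ n * 2 ^ n) := by
      refine (Finset.card_le_univ W).trans (le_of_eq ?_)
      simp
    have h2 : (4 : ℝ) ^ n = 2 ^ n * 2 ^ n := by rw [← mul_pow]; norm_num
    rw [h2]; exact_mod_cast h1
  have hk := (hN n (by omega)).le
  calc _ ≤ ((W.biUnion (fun w => (fam H G m').filter (fun G' =>
        density G' w.1.1 w.1.2 w.2.1 w.2.2 <
        lam / 2 * density G' w.1.1 w.1.2 Finset.univ Finset.univ))).card : ℝ) := by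
        exact_mod_cast Finset.card_le_card hsub
    _ ≤ ∑ w ∈ W, (((fam H G m').filter (fun G' => density G' w.1.1 w.1.2 w.2.1 w.2.2 <
        lam / 2 * density G' w.1.1 w.1.2 Finset.univ Finset.univ)).card : ℝ) := by
        exact_mod_cast Finset.card_biUnion_le
    _ ≤ ∑ w ∈ W, (1 / 8 : ℝ) ^ n * (fam H G m').card := Finset.sum_le_sum hterm
    _ = W.card * ((1 / 8 : ℝ) ^ n * (fam H G m').card) := by simp
    _ ≤ ((k * k) * (4 : ℝ) ^ n) * ((1 / 8 : ℝ) ^ n * (fam H G m').card) := by gcongr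
    _ = ((k : ℝ) * k * (1 / 2 : ℝ) ^ n) * (fam H G m').card := by
        have : (1 / 2 : ℝ) ^ n = 4 ^ n * (1 / 8) ^ n := by rw [← mul_pow]; norm_num
        rw [this]; ring
    _ ≤ _ := by gcongr
end

section
/- Let Y be a set with N elements and let S be a family of s-element subsets of Y, for some positive integers s and N. Let k < N/4 be a positive integer and let T > 1. Then, for all but at most T^{−k/s}·C(N,m) of the m-element subsets Y_m ⊆ Y, there exists a subset X ⊆ Y_m of size |X| ≤ k such that Y_m∖X contains at most 2^s·T·|S|·(m/N)^s sets from S. (Here C(N,m) denotes the binomial coefficient.) -/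
open Finset

lemma dg_desc (m N u : ℕ) (h : m ≤ N) :
    m.descFactorial u * N ^ u ≤ N.descFactorial u * m ^ u := by
  induction u with
  | zero => simp
  | succ u ih =>
    rw [Nat.descFactorial_succ, Nat.descFactorial_succ, pow_succ, pow_succ]
    have h1 : (m - u) * N ≤ (N - u) * m := by
      rw [Nat.sub_mul, Nat.sub_mul, Nat.mul_comm m N]
      exact Nat.sub_le_sub_left (Nat.mul_le_mul_left u h) _
    calc (m - u) * m.descFactorial u * (N ^ u * N)
        = ((m - u) * N) * (m.descFactorial u * N ^ u) := by ring
      _ ≤ ((N - u) * m) * (N.descFactorial u * m ^ u) := Nat.mul_le_mul h1 ih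
      _ = _ := by ring

lemma dg_choose (m N u : ℕ) (h : m ≤ N) (hu : u ≤ m) :
    (N - u).choose (m - u) * N ^ u ≤ N.choose m * m ^ u := by
  have h1 := dg_desc m N u h
  rw [Nat.descFactorial_eq_factorial_mul_choose, Nat.descFactorial_eq_factorial_mul_choose,
    mul_assoc, mul_assoc] at h1
  have h2 := Nat.le_of_mul_le_mul_left h1 (Nat.factorial_pos u)
  have h3 := Nat.choose_mul (n := N) hu
  have h4 : 0 < N.choose u := Nat.choose_pos (hu.trans h)
  refine Nat.le_of_mul_le_mul_left ?_ h4
  calc N.choose u * ((N - u).choose (m - u) * N ^ u)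
      = (N.choose u * (N - u).choose (m - u)) * N ^ u := by ring
    _ = N.choose m * (m.choose u * N ^ u) := by rw [← h3]; ring
    _ ≤ N.choose m * (N.choose u * m ^ u) := Nat.mul_le_mul_left _ h2
    _ = _ := by ring

lemma dg_count {Y : Type*} [Fintype Y] [DecidableEq Y] (m : ℕ) (hm : m ≤ Fintype.card Y)
    (P : Finset (Finset Y)) (hP : ∀ W ∈ P, W.card = m) (U : Finset Y) :
    (P.filter (fun W => U ⊆ W)).card * (Fintype.card Y) ^ U.card
      ≤ (Fintype.card Y).choose m * m ^ U.card := by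
  by_cases hu : U.card ≤ m
  · refine le_trans (Nat.mul_le_mul_right _ ?_) (dg_choose m _ U.card hm hu)
    have : (powersetCard (m - U.card) (univ \ U)).card
        = (Fintype.card Y - U.card).choose (m - U.card) := by
      rw [card_powersetCard, card_sdiff_of_subset (subset_univ _), card_univ]
    rw [← this]
    refine card_le_card_of_injOn (fun W => W \ U) ?_ ?_
    · intro W hW
      simp only [coe_filter, Set.mem_ofPred_eq] at hW
      simp only [mem_coe, mem_powersetCard]
      exact ⟨sdiff_subset_sdiff (subset_univ _) le_rfl, by
        rw [card_sdiff_of_subset hW.2, hP W hW.1]⟩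
    · intro W hW V hV hWV
      simp only [coe_filter, Set.mem_ofPred_eq] at hW hV
      simp only at hWV
      rw [← sdiff_union_of_subset hW.2, hWV, sdiff_union_of_subset hV.2]
  · have : P.filter (fun W => U ⊆ W) = ∅ := by
      apply filter_eq_empty_iff.2
      intro W hW hU
      have := card_le_card hU
      rw [hP W hW] at this
      exact hu this
    simp [this]

lemma dg_step {Y : Type*} [Fintype Y] [DecidableEq Y] (s k : ℕ) (B : ℝ) (hB : 0 ≤ B)
    (S P : Finset (Finset Y)) (hS : ∀ A ∈ S, A.card = s)
    (hP : ∀ W ∈ P, ∀ X ⊆ W, X.card ≤ k → B ≤ ((S.filter fun A => A ⊆ W \ X).card : ℝ))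
    (z : ℕ) (hz : (z - 1) * s ≤ k) (C : ℝ) (hC : 0 ≤ C)
    (hb : ∀ U : Finset Y, U.card = z * s → ((P.filter (fun W => U ⊆ W)).card : ℝ) ≤ C)
    (j : ℕ) : ∀ U : Finset Y, U.card + j * s = z * s → j ≤ z →
      ((P.filter (fun W => U ⊆ W)).card : ℝ) * B ^ j ≤ (S.card : ℝ) ^ j * C := by
  induction j with
  | zero => intro U hU _; simpa using hb U (by simpa using hU)
  | succ j ih =>
    intro U hU hj
    have hUk : U.card ≤ k := by
      refine le_trans ?_ hz
      obtain ⟨z', rfl⟩ : ∃ z', z = z' + 1 := ⟨z - 1, by omega⟩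
      simp only [Nat.add_sub_cancel]
      nlinarith [Nat.zero_le (j * s)]
    have key : ((P.filter (fun W => U ⊆ W)).card : ℝ) * B ≤
        ∑ A ∈ S.filter (fun A => Disjoint U A),
          ((P.filter (fun W => (U ∪ A) ⊆ W)).card : ℝ) := by
      have h1 : ((P.filter (fun W => U ⊆ W)).card : ℝ) * B ≤
          ∑ W ∈ P.filter (fun W => U ⊆ W), ((S.filter fun A => A ⊆ W \ U).card : ℝ) := by
        rw [← nsmul_eq_mul]
        apply card_nsmul_le_sum
        intro W hW
        rw [mem_filter] at hW
        exact hP W hW.1 U hW.2 hUk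
      refine h1.trans (le_of_eq ?_)
      have := sum_card_bipartiteAbove_eq_sum_card_bipartiteBelow
        (s := P.filter (fun W => U ⊆ W)) (t := S.filter (fun A => Disjoint U A))
        (fun W A => A ⊆ W)
      have h2 : ∀ W ∈ P.filter (fun W => U ⊆ W), (S.filter fun A => A ⊆ W \ U) =
          bipartiteAbove (fun W A => A ⊆ W) (S.filter (fun A => Disjoint U A)) W := by
        intro W hW
        ext A
        simp only [bipartiteAbove, mem_filter, subset_sdiff, disjoint_comm (a := U)]
        tauto
      have h3 : ∀ A ∈ S.filter (fun A => Disjoint U A), (P.filter (fun W => (U ∪ A) ⊆ W)) =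
          bipartiteBelow (fun W A => A ⊆ W) (P.filter (fun W => U ⊆ W)) A := by
        intro A hA
        ext W
        simp only [bipartiteBelow, mem_filter, union_subset_iff]
        tauto
      have e1 := sum_congr rfl (fun W hW => congrArg card (h2 W hW))
      have e2 := sum_congr rfl (fun A hA => congrArg card (h3 A hA))
      have e3 := (e1.trans this).trans e2.symm
      exact_mod_cast e3
    calc ((P.filter (fun W => U ⊆ W)).card : ℝ) * B ^ (j + 1)
        = ((P.filter (fun W => U ⊆ W)).card : ℝ) * B * B ^ j := by ring
      _ ≤ (∑ A ∈ S.filter (fun A => Disjoint U A),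
          ((P.filter (fun W => (U ∪ A) ⊆ W)).card : ℝ)) * B ^ j :=
          mul_le_mul_of_nonneg_right key (by positivity)
      _ = ∑ A ∈ S.filter (fun A => Disjoint U A),
          ((P.filter (fun W => (U ∪ A) ⊆ W)).card : ℝ) * B ^ j := by rw [sum_mul]
      _ ≤ ∑ A ∈ S.filter (fun A => Disjoint U A), (S.card : ℝ) ^ j * C := by
          apply sum_le_sum
          intro A hA
          rw [mem_filter] at hA
          apply ih
          · rw [card_union_of_disjoint hA.2, hS A hA.1, ← hU]; ring
          · omega
      _ = ((S.filter (fun A => Disjoint U A)).card : ℝ) * ((S.card : ℝ) ^ j * C) := by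
          rw [sum_const, nsmul_eq_mul]
      _ ≤ (S.card : ℝ) * ((S.card : ℝ) ^ j * C) := by
          apply mul_le_mul_of_nonneg_right _ (by positivity)
          exact_mod_cast card_filter_le _ _
      _ = _ := by ring

/-- **Lemma A.1 (general deletion lemma).** Let `Y` be a set with `N` elements and `S` a family
of `s`-element subsets of `Y`. Let `k < N/4` be a positive integer and `T > 1`. Then for all but
at most `T^(-k/s) C(N, m)` of the `m`-element subsets `Y_m ⊆ Y`, there is `X ⊆ Y_m` with
`|X| ≤ k` such that `Y_m \ X` contains at most `2^s T |S| (m/N)^s` sets from `S`. -/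
theorem deletion_general {Y : Type*} [Fintype Y] [DecidableEq Y]
    (N s k m : ℕ) (hY : Fintype.card Y = N) (hs : 0 < s) (hN : 0 < N)
    (hk : 0 < k) (hk4 : (k : ℝ) < (N : ℝ) / 4) (T : ℝ) (hT : 1 < T)
    (S : Finset (Finset Y)) (hS : ∀ A ∈ S, A.card = s) :
    (Nat.card {Ym : Finset Y // Ym.card = m ∧
        ¬ ∃ X : Finset Y, X ⊆ Ym ∧ X.card ≤ k ∧
          ((S.filter fun A => A ⊆ Ym \ X).card : ℝ) ≤
            2 ^ s * T * (S.card : ℝ) * ((m : ℝ) / (N : ℝ)) ^ s} : ℝ)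
      ≤ T ^ (-(k : ℝ) / (s : ℝ)) * (N.choose m : ℝ) := by
  classical
  set B : ℝ := 2 ^ s * T * (S.card : ℝ) * ((m : ℝ) / (N : ℝ)) ^ s with hBdef
  have hT0 : 0 < T := by linarith
  have hB0 : 0 ≤ B := by positivity
  rw [Nat.card_eq_fintype_card, Fintype.card_subtype]
  set P : Finset (Finset Y) := univ.filter (fun Ym : Finset Y => Ym.card = m ∧
        ¬ ∃ X : Finset Y, X ⊆ Ym ∧ X.card ≤ k ∧
          ((S.filter fun A => A ⊆ Ym \ X).card : ℝ) ≤ B) with hPdef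
  have hR : 0 ≤ T ^ (-(k : ℝ) / (s : ℝ)) * (N.choose m : ℝ) := by positivity
  rcases P.eq_empty_or_nonempty with hPe | ⟨W, hW⟩
  · rw [hPe]; simpa using hR
  have hPm : ∀ W ∈ P, W.card = m := fun W hW => (mem_filter.1 hW).2.1
  have hPb : ∀ W ∈ P, ∀ X ⊆ W, X.card ≤ k →
      B < ((S.filter fun A => A ⊆ W \ X).card : ℝ) := by
    intro W hW X hX hXk
    by_contra hcon
    exact (mem_filter.1 hW).2.2 ⟨X, hX, hXk, not_lt.1 hcon⟩
  have hmN : m ≤ N := by rw [← hPm W hW, ← hY]; exact card_le_univ W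
  obtain ⟨A, hA⟩ : (S.filter fun A => A ⊆ W \ ∅).Nonempty := by
    rw [← card_pos]
    exact_mod_cast hB0.trans_lt (hPb W hW ∅ (empty_subset _) (by simp))
  rw [mem_filter, sdiff_empty] at hA
  have hSpos : 0 < S.card := card_pos.2 ⟨A, hA.1⟩
  have hmpos : 0 < m := by
    have := card_le_card hA.2
    rw [hS A hA.1, hPm W hW] at this
    omega
  have hS' : (0 : ℝ) < S.card := by exact_mod_cast hSpos
  have hm' : (0 : ℝ) < m := by exact_mod_cast hmpos
  have hN' : (0 : ℝ) < N := by exact_mod_cast hN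
  have hs' : (0 : ℝ) < s := by exact_mod_cast hs
  set z := k / s + 1 with hz
  have main := dg_step s k B hB0 S P hS (fun W hW X hX hXk => (hPb W hW X hX hXk).le) z
    (by simpa [hz] using Nat.div_mul_le_self k s)
    ((N.choose m : ℝ) * ((m : ℝ) / N) ^ (z * s)) (by positivity)
    (by
      intro U hU
      have := dg_count m (hY ▸ hmN) P hPm U
      rw [hU, hY] at this
      rw [div_pow, ← mul_div_assoc, le_div_iff₀ (by positivity)]
      exact_mod_cast this) z ∅ (by simp) le_rfl
  simp only [empty_subset, filter_true] at main
  have hD : (0 : ℝ) < (S.card : ℝ) ^ z * ((m : ℝ) / N) ^ (z * s) := by positivity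
  have hBz : B ^ z = ((2 ^ s) ^ z * T ^ z) * ((S.card : ℝ) ^ z * ((m : ℝ) / N) ^ (z * s)) := by
    rw [hBdef, mul_comm z s, pow_mul]; ring
  have h1 : (P.card : ℝ) * ((2 ^ s) ^ z * T ^ z) ≤ N.choose m := by
    refine le_of_mul_le_mul_right ?_ hD
    rw [mul_assoc, ← hBz]
    refine main.trans (le_of_eq ?_); ring
  have h2 : (P.card : ℝ) * T ^ z ≤ N.choose m := by
    refine le_trans ?_ h1
    apply mul_le_mul_of_nonneg_left _ (Nat.cast_nonneg _)
    apply le_mul_of_one_le_left (by positivity)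
    exact one_le_pow₀ (one_le_pow₀ (by norm_num))
  have h3 : T ^ ((k : ℝ) / s) ≤ T ^ z := by
    rw [← Real.rpow_natCast]
    apply Real.rpow_le_rpow_of_exponent_le hT.le
    rw [div_le_iff₀ hs']
    have : k < z * s := by
      have := Nat.div_add_mod k s; have := Nat.mod_lt k hs; rw [hz]; nlinarith
    exact_mod_cast this.le
  rw [neg_div, Real.rpow_neg hT0.le, mul_comm, ← div_eq_mul_inv,
    le_div_iff₀ (Real.rpow_pos_of_pos hT0 _)]
  exact (mul_le_mul_of_nonneg_left h3 (Nat.cast_nonneg _)).trans h2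
end
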